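/- Let R be a quotient of a regular commutative coherent ring by a finitely generated ideal. Then the map f_R, sending a wide subcategory C of finitely presented R-modules to the thick subcategory {small X ∈ D(R) : H_n X ∈ C for all n}, is a lattice isomorphism from the lattice of wide subcategories of finitely presented R-modules onto the lattice of thick subcategories of small objects of D(R). In particular, if k is a principal ideal domain and R is a finitely generated commutative k-algebra, then every wide subcategory of the finitely generated R-modules is a Serre class. -/

import Mathlib

open CategoryTheory CategoryTheory.Limits CategoryTheory.Pretriangulated ZeroObject

universe w u

/-- A full subcategory (given as a set of objects) of an abelian category is *wide*
if it is closed under isomorphisms, kernels, cokernels and extensions. -/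
structure IsWideSubcategory {A : Type*} [Category A] [Abelian A] (C : Set A) : Prop where
  mem_of_iso : ∀ {X Y : A}, (X ≅ Y) → X ∈ C → Y ∈ C
  kernel_mem : ∀ {X Y : A} (f : X ⟶ Y), X ∈ C → Y ∈ C → kernel f ∈ C
  cokernel_mem : ∀ {X Y : A} (f : X ⟶ Y), X ∈ C → Y ∈ C → cokernel f ∈ C
  extension_mem : ∀ (S : CategoryTheory.ShortComplex A), S.ShortExact →
    S.X₁ ∈ C → S.X₃ ∈ C → S.X₂ ∈ C

/-- The wide subcategory generated by a set of objects: the intersection of all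
wide subcategories containing it. -/
def wideClosure {A : Type*} [Category A] [Abelian A] (S : Set A) : Set A :=
  ⋂₀ {C : Set A | IsWideSubcategory C ∧ S ⊆ C}

/-- `C₀`, the wide subcategory of `R`-modules generated by the module `R`. -/
def wideSubcatGenByRing (R : Type u) [Ring R] : Set (ModuleCat.{u} R) :=
  wideClosure {ModuleCat.of R R}

/-- A thick subcategory of a (pre)triangulated category: a full triangulated
subcategory closed under retracts (direct summands). -/
structure IsThickSubcategory {T : Type*} [Category T] [HasZeroObject T] [Preadditive T]
    [HasShift T ℤ] [∀ n : ℤ, (shiftFunctor T n).Additive] [Pretriangulated T]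
    (D : Set T) : Prop where
  mem_of_iso : ∀ {X Y : T}, (X ≅ Y) → X ∈ D → Y ∈ D
  zero_mem : (0 : T) ∈ D
  shift_mem : ∀ (X : T) (n : ℤ), X ∈ D → X⟦n⟧ ∈ D
  ext₂ : ∀ (T' : Triangle T), T' ∈ (distTriang T) → T'.obj₁ ∈ D → T'.obj₃ ∈ D → T'.obj₂ ∈ D
  retract_mem : ∀ (X Y : T) (i : X ⟶ Y) (r : Y ⟶ X), i ≫ r = 𝟙 X → Y ∈ D → X ∈ D

/-- An object of the derived category of `R`-modules is *small* if it belongs to every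
thick subcategory containing the complex `S⁰R` (`R` concentrated in degree `0`), i.e. to
the thick subcategory generated by `S⁰R`; equivalently, `Hom(X,-)` commutes with
arbitrary direct sums. -/
def IsSmallObject {R : Type u} [Ring R] [HasDerivedCategory.{w} (ModuleCat.{u} R)]
    (X : DerivedCategory (ModuleCat.{u} R)) : Prop :=
  ∀ D : Set (DerivedCategory (ModuleCat.{u} R)), IsThickSubcategory D →
    (DerivedCategory.singleFunctor (ModuleCat.{u} R) 0).obj (ModuleCat.of R R) ∈ D → X ∈ D

/-- The map `f` : it sends a wide subcategory `C` to the collection of small objects `X`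
of the derived category such that `Hₙ X ∈ C` for all `n`. -/
def fSet {R : Type u} [Ring R] [HasDerivedCategory.{w} (ModuleCat.{u} R)]
    (C : Set (ModuleCat.{u} R)) : Set (DerivedCategory (ModuleCat.{u} R)) :=
  {X | IsSmallObject X ∧
    ∀ n : ℤ, (DerivedCategory.homologyFunctor (ModuleCat.{u} R) n).obj X ∈ C}

/-- The map `g` : it sends a thick subcategory `D` to the wide subcategory generated by
the homology modules `Hₙ X` for `X ∈ D` and `n : ℤ`. -/
def gSet {R : Type u} [Ring R] [HasDerivedCategory.{w} (ModuleCat.{u} R)]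
    (D : Set (DerivedCategory (ModuleCat.{u} R))) : Set (ModuleCat.{u} R) :=
  wideClosure {M | ∃ X ∈ D, ∃ n : ℤ,
    Nonempty ((DerivedCategory.homologyFunctor (ModuleCat.{u} R) n).obj X ≅ M)}

/-- A ring is left coherent if every finitely generated left ideal is finitely
presented as a module. -/
def IsLeftCoherentRing (R : Type u) [Ring R] : Prop :=
  ∀ I : Ideal R, I.FG → Module.FinitePresentation R I

/-- The collection of finitely presented `R`-modules. -/
def finPresModules (R : Type u) [Ring R] : Set (ModuleCat.{u} R) :=
  {M : ModuleCat.{u} R | Module.FinitePresentation R M}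

/-- An `R`-module `M` has finite projective dimension if there is an `i` such that
`Ext^j(M, N) = 0` for all modules `N` and all `j > i`. -/
def HasFiniteProjectiveDimension (R : Type u) [Ring R] (M : ModuleCat.{u} R) : Prop :=
  ∃ i : ℕ, ∀ (N : ModuleCat.{u} R) (j : ℕ), i < j →
    Subsingleton (((_root_.Ext ℤ (ModuleCat.{u} R) j).obj (Opposite.op M)).obj N)

/-- The lattice of (nonempty) wide subcategories of finitely presented `R`-modules. -/
def wideLatticeFP (R : Type u) [Ring R] : Set (Set (ModuleCat.{u} R)) :=
  {C | IsWideSubcategory C ∧ C.Nonempty ∧ C ⊆ finPresModules R}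

/-- The lattice of thick subcategories of small objects of the derived category. -/
def thickLatticeSmall (R : Type u) [Ring R] [HasDerivedCategory.{w} (ModuleCat.{u} R)] :
    Set (Set (DerivedCategory (ModuleCat.{u} R))) :=
  {D | IsThickSubcategory D ∧ ∀ X ∈ D, IsSmallObject X}

/-- `f` is a lattice isomorphism from the lattice of wide subcategories of finitely
presented `R`-modules onto the lattice of thick subcategories of small objects of
`D(R)`: it maps the first lattice into the second, preserves and reflects inclusions,
and is surjective. -/
def fIsLatticeIso (R : Type u) [Ring R] [HasDerivedCategory.{w} (ModuleCat.{u} R)] : Prop :=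
  (∀ C ∈ wideLatticeFP R, fSet C ∈ thickLatticeSmall R) ∧
  (∀ C₁ ∈ wideLatticeFP R, ∀ C₂ ∈ wideLatticeFP R, (fSet C₁ ⊆ fSet C₂ ↔ C₁ ⊆ C₂)) ∧
  (∀ D ∈ thickLatticeSmall R, ∃ C ∈ wideLatticeFP R, fSet C = D)


section WideModules
variable {R : Type u} [Ring R] {C : Set (ModuleCat.{u} R)}

theorem IsWideSubcategory.mem_of_equiv (hC : IsWideSubcategory C) {M N : Type u}
    [AddCommGroup M] [Module R M] [AddCommGroup N] [Module R N] (e : M ≃ₗ[R] N)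
    (h : ModuleCat.of R M ∈ C) : ModuleCat.of R N ∈ C :=
  hC.mem_of_iso e.toModuleIso h

theorem IsWideSubcategory.ker_mem (hC : IsWideSubcategory C) {M N : Type u}
    [AddCommGroup M] [Module R M] [AddCommGroup N] [Module R N] (f : M →ₗ[R] N)
    (hM : ModuleCat.of R M ∈ C) (hN : ModuleCat.of R N ∈ C) :
    ModuleCat.of R (LinearMap.ker f) ∈ C :=
  hC.mem_of_iso (ModuleCat.kernelIsoKer (ModuleCat.ofHom f)) (hC.kernel_mem _ hM hN)

theorem IsWideSubcategory.coker_mem (hC : IsWideSubcategory C) {M N : Type u}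
    [AddCommGroup M] [Module R M] [AddCommGroup N] [Module R N] (f : M →ₗ[R] N)
    (hM : ModuleCat.of R M ∈ C) (hN : ModuleCat.of R N ∈ C) :
    ModuleCat.of R (N ⧸ LinearMap.range f) ∈ C :=
  hC.mem_of_iso (ModuleCat.cokernelIsoRangeQuotient (ModuleCat.ofHom f)) (hC.cokernel_mem _ hM hN)

theorem IsWideSubcategory.ext_mem (hC : IsWideSubcategory C) {M N P : Type u}
    [AddCommGroup M] [Module R M] [AddCommGroup N] [Module R N] [AddCommGroup P] [Module R P]
    (f : M →ₗ[R] N) (g : N →ₗ[R] P) (hf : Function.Injective f) (hg : Function.Surjective g)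
    (hfg : Function.Exact f g) (hM : ModuleCat.of R M ∈ C) (hP : ModuleCat.of R P ∈ C) :
    ModuleCat.of R N ∈ C := by
  have h0 : g.comp f = 0 := hfg.linearMap_comp_eq_zero
  exact hC.extension_mem (ModuleCat.shortComplexOfCompEqZero f g h0)
    (ModuleCat.shortComplex_shortExact _ hfg hf hg) hM hP

theorem IsWideSubcategory.subsingleton_mem (hC : IsWideSubcategory C) (hne : C.Nonempty)
    (N : Type u) [AddCommGroup N] [Module R N] [Subsingleton N] : ModuleCat.of R N ∈ C := by
  obtain ⟨M, hM⟩ := hne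
  have h := hC.ker_mem (LinearMap.id : M →ₗ[R] M) hM hM
  have : Subsingleton (LinearMap.ker (LinearMap.id : M →ₗ[R] M)) := by
    rw [LinearMap.ker_id]; infer_instance
  exact hC.mem_of_equiv (0 : _ ≃ₗ[R] N) h

theorem IsWideSubcategory.prod_mem (hC : IsWideSubcategory C) {M N : Type u}
    [AddCommGroup M] [Module R M] [AddCommGroup N] [Module R N]
    (hM : ModuleCat.of R M ∈ C) (hN : ModuleCat.of R N ∈ C) : ModuleCat.of R (M × N) ∈ C :=
  hC.ext_mem (LinearMap.inl R M N) (LinearMap.snd R M N) LinearMap.inl_injective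
    LinearMap.snd_surjective Function.Exact.inl_snd hM hN

theorem IsWideSubcategory.pi_mem (hC : IsWideSubcategory C) {M : Type u}
    [AddCommGroup M] [Module R M] (hM : ModuleCat.of R M ∈ C) (n : ℕ) :
    ModuleCat.of R (Fin n → M) ∈ C := by
  induction n with
  | zero => exact hC.subsingleton_mem ⟨_, hM⟩ _
  | succ n ih => exact hC.mem_of_equiv (Fin.consLinearEquiv R (fun _ => M)) (hC.prod_mem hM ih)

theorem IsWideSubcategory.retract_mem (hC : IsWideSubcategory C) {M N : Type u}
    [AddCommGroup M] [Module R M] [AddCommGroup N] [Module R N] (i : M →ₗ[R] N) (r : N →ₗ[R] M)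
    (h : r ∘ₗ i = LinearMap.id) (hN : ModuleCat.of R N ∈ C) : ModuleCat.of R M ∈ C := by
  have h' : ∀ x, r (i x) = x := fun x => LinearMap.congr_fun h x
  have hk := hC.ker_mem (LinearMap.id - i ∘ₗ r) hN hN
  refine hC.mem_of_equiv (LinearEquiv.ofBijective
    (r ∘ₗ (LinearMap.ker (LinearMap.id - i ∘ₗ r)).subtype) ⟨?_, ?_⟩) hk
  · rintro ⟨x, hx⟩ ⟨y, hy⟩ hxy
    simp [sub_eq_zero] at hx hy hxy
    ext
    rw [Subtype.coe_mk, Subtype.coe_mk, hx, hy, hxy]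
  · intro m
    exact ⟨⟨i m, by simp [h']⟩, by simp [h']⟩

end WideModules

section PartTwo

theorem exists_linInd_of_domain (D : Type u) [CommRing D] [IsDomain D] (N : Type u)
    [AddCommGroup N] [Module D N] [Module.Finite D N] :
    ∃ (n : ℕ) (v : Fin n → N), LinearIndependent D v ∧
      ∃ d : D, d ≠ 0 ∧ ∀ x : N, d • x ∈ Submodule.span D (Set.range v) := by
  have hr : Module.finrank D N = Module.finrank D N := rfl
  obtain ⟨v, hv⟩ : ∃ v : Fin (Module.finrank D N) → N, LinearIndependent D v := by
    obtain ⟨s, hs, hli⟩ := exists_set_linearIndependent D N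
    rw [← Module.finrank_eq_rank, Cardinal.mk_eq_nat_iff_fintype] at hs
    obtain ⟨hfin, hcard⟩ := hs
    exact ⟨fun i => ((Fintype.equivFinOfCardEq hcard).symm i : s),
      hli.comp _ (Fintype.equivFinOfCardEq hcard).symm.injective⟩
  refine ⟨_, v, hv, ?_⟩
  have h1 := Submodule.finrank_quotient_add_finrank (Submodule.span D (Set.range v))
  rw [finrank_span_eq_card hv, Fintype.card_fin] at h1
  have h2 : Module.finrank D (N ⧸ Submodule.span D (Set.range v)) = 0 := by omega
  have h3 : Module.rank D (N ⧸ Submodule.span D (Set.range v)) = 0 := by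
    rw [← Module.finrank_eq_rank, h2]; simp
  rw [rank_eq_zero_iff] at h3
  obtain ⟨t, ht⟩ := (inferInstance : Module.Finite D N).fg_top
  have h4 : ∀ x : N, ∃ a : D, a ≠ 0 ∧ a • x ∈ Submodule.span D (Set.range v) := by
    intro x
    obtain ⟨a, ha, h⟩ := h3 (Submodule.Quotient.mk x)
    exact ⟨a, ha, by rwa [← Submodule.Quotient.mk_smul, Submodule.Quotient.mk_eq_zero] at h⟩
  choose a ha hax using h4
  refine ⟨∏ x ∈ t, a x, Finset.prod_ne_zero_iff.2 fun x _ => ha x, fun x => ?_⟩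
  have hx : x ∈ Submodule.span D (t : Set N) := by rw [ht]; trivial
  induction hx using Submodule.span_induction with
  | mem x hx =>
    obtain ⟨c, hc⟩ := Finset.dvd_prod_of_mem a hx
    rw [hc, mul_comm, mul_smul]
    exact Submodule.smul_mem _ _ (hax x)
  | zero => simp
  | add x y _ _ hx hy => rw [smul_add]; exact Submodule.add_mem _ hx hy
  | smul c x _ hx => rw [smul_comm]; exact Submodule.smul_mem _ _ hx

variable {B : Type u} [CommRing B] [IsNoetherianRing B] {C : Set (ModuleCat.{u} B)}

theorem wide_devissage (hC : IsWideSubcategory C) (hne : C.Nonempty) (N : Type u) [AddCommGroup N]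
    [Module B N] (hN : Module.Finite B N) 
    (H : ∀ p : Ideal B, p.IsPrime → Module.annihilator B N ≤ p → ModuleCat.of B (B ⧸ p) ∈ C) :
    ModuleCat.of B N ∈ C := by
  induction hN using IsNoetherianRing.induction_on_isQuotientEquivQuotientPrime B with
  | subsingleton N => exact hC.subsingleton_mem hne N
  | quotient N p f =>
    refine hC.mem_of_equiv f.symm (H p.1 p.2 ?_)
    rw [f.annihilator_eq, Ideal.annihilator_quotient]
  | exact N₁ N₂ N₃ f g hf hg hfg h₁ h₃ =>
    exact hC.ext_mem f g hf hg hfg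
      (h₁ fun p hp hle => H p hp ((f.annihilator_le_of_injective hf).trans hle))
      (h₃ fun p hp hle => H p hp ((g.annihilator_le_of_surjective hg).trans hle))

theorem pow_mem_of_smul_le (M : Type u) [AddCommGroup M] [Module B M] [Module.Finite B M]
    (p : Ideal B) (hp : p.IsPrime) (hle : Module.annihilator B M ≤ p) (s : B)
    (hs : ∀ x : M, s • x ∈ p • (⊤ : Submodule B M)) : s ∈ p := by
  obtain ⟨q, hq, -, hc, h0⟩ :=
    LinearMap.exists_monic_and_natDegree_eq_and_coeff_mem_pow_and_aeval_eq_zero B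
    (LinearMap.lsmul B M s) p (by rintro _ ⟨x, rfl⟩; exact hs x)
  have h1 : q.eval s ∈ p := by
    refine hle (Module.mem_annihilator.2 fun m => ?_)
    have h2 : LinearMap.lsmul B M s = algebraMap B (Module.End B M) s := by ext; simp
    rw [h2, Polynomial.aeval_algebraMap_apply] at h0
    have := LinearMap.congr_fun h0 m
    simpa using this
  rw [Polynomial.eval_eq_sum_range, Finset.sum_range_succ] at h1
  have h3 : ∑ k ∈ Finset.range q.natDegree, q.coeff k * s ^ k ∈ p := by
    refine Ideal.sum_mem _ fun k hk => Ideal.mul_mem_right _ _ ?_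
    exact Ideal.pow_le_self (by have := Finset.mem_range.1 hk; omega) (hc k)
  have h4 := (Ideal.add_mem_iff_right _ h3).1 h1
  rw [hq.coeff_natDegree, one_mul] at h4
  exact hp.mem_of_pow_mem _ h4

theorem wide_quot_prime_mem (hC : IsWideSubcategory C) (hfin : ∀ M ∈ C, Module.Finite B M)
    (M : ModuleCat.{u} B) (hM : M ∈ C) (p : Ideal B) (hp : p.IsPrime)
    (hle : Module.annihilator B M ≤ p) : ModuleCat.of B (B ⧸ p) ∈ C := by
  induction p using IsNoetherian.induction with
  | hgt p ih =>
  have := hfin M hM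
  let M' := M ⧸ (p • (⊤ : Submodule B M))
  have hM' : ModuleCat.of B M' ∈ C := by
    obtain ⟨t, ht⟩ := (IsNoetherian.noetherian p : p.FG)
    let e := t.equivFin.symm
    let f : (Fin t.card → M) →ₗ[B] M := LinearMap.lsum B (fun _ => M) B
      (fun i => LinearMap.lsmul B M (e i))
    have hr : LinearMap.range f = p • (⊤ : Submodule B M) := by
      rw [← ht, Submodule.span_smul_eq]
      apply le_antisymm
      · rintro _ ⟨x, rfl⟩
        have hx : f x = ∑ i, (e i : B) • x i := by simp [f]
        rw [hx]
        exact Submodule.sum_mem _ fun i _ =>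
          Submodule.mem_set_smul_of_mem_mem (e i).2 Submodule.mem_top
      · rw [Submodule.set_smul_le_iff]
        intro r m hr _
        refine ⟨Pi.single (e.symm ⟨r, hr⟩) m, ?_⟩
        have hx : ∀ x, f x = ∑ i, (e i : B) • x i := by simp [f]
        rw [hx, Finset.sum_eq_single (e.symm ⟨r, hr⟩)]
        · rw [Equiv.apply_symm_apply, Pi.single_eq_same]
        · intro b _ hb
          rw [Pi.single_eq_of_ne hb, smul_zero]
        · exact fun h => (h (Finset.mem_univ _)).elim
    have := hC.coker_mem f (hC.pi_mem hM _) hM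
    exact hC.mem_of_equiv (Submodule.quotEquivOfEq _ _ hr) this
  have : IsDomain (B ⧸ p) := Ideal.Quotient.isDomain p
  have : Module.Finite (B ⧸ p) M' := Module.Finite.of_restrictScalars_finite B _ _
  obtain ⟨n, v, hv, d, hd, hdv⟩ := exists_linInd_of_domain (B ⧸ p) M'
  obtain ⟨s, rfl⟩ := Ideal.Quotient.mk_surjective d
  have hn : n ≠ 0 := by
    rintro rfl
    apply hd
    rw [Ideal.Quotient.eq_zero_iff_mem]
    refine pow_mem_of_smul_le M p hp hle s fun x => ?_
    have := hdv (Submodule.Quotient.mk x)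
    have h5 : (Submodule.Quotient.mk (s • x) : M') = 0 := by simpa using this
    exact (Submodule.Quotient.mk_eq_zero _).1 h5
  let g : (Fin n → B ⧸ p) →ₗ[B] M' := (Fintype.linearCombination (B ⧸ p) v).restrictScalars B
  have hginj : Function.Injective g :=
    hv.fintypeLinearCombination_injective
  let K := M' ⧸ LinearMap.range g
  have hK : ModuleCat.of B K ∈ C := by
    refine wide_devissage hC ⟨_, hM⟩ K inferInstance fun q hq hqle => ?_
    have hsq : s ∈ q := hqle (by
      rw [Module.mem_annihilator]
      intro x
      obtain ⟨x, rfl⟩ := Submodule.Quotient.mk_surjective _ x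
      rw [← Submodule.Quotient.mk_smul, Submodule.Quotient.mk_eq_zero]
      have h6 := hdv x
      rw [← Fintype.range_linearCombination] at h6
      exact h6)
    have hpq : p ≤ q := fun y hy => hqle (by
      rw [Module.mem_annihilator]
      intro x
      obtain ⟨x, rfl⟩ := Submodule.Quotient.mk_surjective _ x
      obtain ⟨x, rfl⟩ := Submodule.Quotient.mk_surjective _ x
      rw [← Submodule.Quotient.mk_smul, ← Submodule.Quotient.mk_smul,
        (Submodule.Quotient.mk_eq_zero _).2 (Submodule.smul_mem_smul hy Submodule.mem_top)]
      rfl)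
    refine ih q (lt_of_le_of_ne hpq ?_) hq (hle.trans hpq)
    rintro rfl
    exact hd (Ideal.Quotient.eq_zero_iff_mem.2 hsq)
  have h1 := hC.ker_mem (LinearMap.range g).mkQ hM' hK
  have h2 : ModuleCat.of B (Fin n → B ⧸ p) ∈ C := by
    refine hC.mem_of_equiv ?_ h1
    exact (LinearEquiv.ofEq _ _ (Submodule.ker_mkQ _)).trans (LinearEquiv.ofInjective g hginj).symm
  let i0 : Fin n := ⟨0, Nat.pos_of_ne_zero hn⟩
  refine hC.retract_mem (LinearMap.single B (fun _ : Fin n => B ⧸ p) i0) (LinearMap.proj i0) ?_ h2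
  ext
  simp

theorem wide_isSerre (hC : IsWideSubcategory C) (hfin : ∀ M ∈ C, Module.Finite B M)
    (M : ModuleCat.{u} B) (hM : M ∈ C) (N : Submodule B M) : ModuleCat.of B N ∈ C := by
  have := hfin M hM
  refine wide_devissage hC ⟨_, hM⟩ N inferInstance fun p hp hle => ?_
  exact wide_quot_prime_mem hC hfin M hM p hp
    ((N.subtype.annihilator_le_of_injective N.injective_subtype).trans hle)

end PartTwo


section Five
variable {A : Type*} [Category A] [Abelian A]

theorem five_mem (C K : Set A)
    (hk : ∀ {X Y : A} (f : X ⟶ Y), X ∈ C → Y ∈ C → kernel f ∈ C)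
    (hc : ∀ {X Y : A} (f : X ⟶ Y), X ∈ C → Y ∈ C → cokernel f ∈ C)
    (hext : ∀ (S : ShortComplex A), S.ShortExact → S.X₁ ∈ C → S.X₃ ∈ C → S.X₂ ∈ K → S.X₂ ∈ C)
    {A₁ A₂ A₃ A₄ A₅ : A} (f₁ : A₁ ⟶ A₂) (f₂ : A₂ ⟶ A₃) (f₃ : A₃ ⟶ A₄) (f₄ : A₄ ⟶ A₅)
    (z₁ : f₁ ≫ f₂ = 0) (z₂ : f₂ ≫ f₃ = 0) (z₃ : f₃ ≫ f₄ = 0)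
    (e₁ : (ShortComplex.mk _ _ z₁).Exact) (e₂ : (ShortComplex.mk _ _ z₂).Exact)
    (e₃ : (ShortComplex.mk _ _ z₃).Exact)
    (h₁ : A₁ ∈ C) (h₂ : A₂ ∈ C) (h₄ : A₄ ∈ C) (h₅ : A₅ ∈ C) (h₃ : A₃ ∈ K) : A₃ ∈ C := by
  have z : cokernel.desc f₁ f₂ z₁ ≫ kernel.lift f₄ f₃ z₃ = 0 := by
    rw [← cancel_epi (cokernel.π f₁), ← cancel_mono (kernel.ι f₄)]
    simp [z₂]
  let S := ShortComplex.mk _ _ z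
  have hm : Mono (cokernel.desc f₁ f₂ z₁) := e₁.mono_cokernelDesc
  have he : Epi (kernel.lift f₄ f₃ z₃) := e₃.epi_kernelLift
  have z' : cokernel.desc f₁ f₂ z₁ ≫ f₃ = 0 := by
    rw [← cancel_epi (cokernel.π f₁)]; simp [z₂]
  let φ : ShortComplex.mk _ _ z₂ ⟶ ShortComplex.mk _ _ z' :=
    { τ₁ := cokernel.π f₁, τ₂ := 𝟙 _, τ₃ := 𝟙 _ }
  let ψ : S ⟶ ShortComplex.mk _ _ z' :=
    { τ₁ := 𝟙 _, τ₂ := 𝟙 _, τ₃ := kernel.ι f₄ }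
  have x1 : (ShortComplex.mk _ _ z').Exact := by
    have : Epi φ.τ₁ := inferInstanceAs (Epi (cokernel.π f₁))
    have : IsIso φ.τ₂ := inferInstanceAs (IsIso (𝟙 _))
    have : Mono φ.τ₃ := inferInstanceAs (Mono (𝟙 _))
    exact (ShortComplex.exact_iff_of_epi_of_isIso_of_mono φ).1 e₂
  have x2 : S.Exact := by
    have : Epi ψ.τ₁ := inferInstanceAs (Epi (𝟙 _))
    have : IsIso ψ.τ₂ := inferInstanceAs (IsIso (𝟙 _))
    have : Mono ψ.τ₃ := inferInstanceAs (Mono (kernel.ι f₄))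
    exact (ShortComplex.exact_iff_of_epi_of_isIso_of_mono ψ).2 x1
  exact hext S { exact := x2, mono_f := hm, epi_g := he } (hc _ h₁ h₂) (hk _ h₄ h₅) h₃

theorem IsWideSubcategory.five_mem {C : Set A} (hC : IsWideSubcategory C)
    {A₁ A₂ A₃ A₄ A₅ : A} (f₁ : A₁ ⟶ A₂) (f₂ : A₂ ⟶ A₃) (f₃ : A₃ ⟶ A₄) (f₄ : A₄ ⟶ A₅)
    (z₁ : f₁ ≫ f₂ = 0) (z₂ : f₂ ≫ f₃ = 0) (z₃ : f₃ ≫ f₄ = 0)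
    (e₁ : (ShortComplex.mk _ _ z₁).Exact) (e₂ : (ShortComplex.mk _ _ z₂).Exact)
    (e₃ : (ShortComplex.mk _ _ z₃).Exact)
    (h₁ : A₁ ∈ C) (h₂ : A₂ ∈ C) (h₄ : A₄ ∈ C) (h₅ : A₅ ∈ C) : A₃ ∈ C :=
  _root_.five_mem C Set.univ hC.kernel_mem hC.cokernel_mem
    (fun S hS a b _ => hC.extension_mem S hS a b) f₁ f₂ f₃ f₄ z₁ z₂ z₃ e₁ e₂ e₃ h₁ h₂ h₄ h₅
    trivial

end Five

section Thick
variable {T : Type*} [Category T] [HasZeroObject T] [Preadditive T]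
    [HasShift T ℤ] [∀ n : ℤ, (shiftFunctor T n).Additive] [Pretriangulated T] {D : Set T}

theorem IsThickSubcategory.isClosedUnderIso (hD : IsThickSubcategory D) :
    ObjectProperty.IsClosedUnderIsomorphisms (fun X => X ∈ D) := ⟨fun e h => hD.mem_of_iso e h⟩

theorem IsThickSubcategory.isTriangulated (hD : IsThickSubcategory D) :
    ObjectProperty.IsTriangulated (fun X => X ∈ D) := by
  have := hD.isClosedUnderIso
  exact
  { exists_zero := ⟨0, isZero_zero T, hD.zero_mem⟩
    isStableUnderShiftBy := fun a => ⟨fun X hX => hD.shift_mem X a hX⟩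
    ext₂' := (ObjectProperty.IsTriangulatedClosed₂.mk' hD.ext₂).ext₂' }

theorem IsThickSubcategory.ext₃ (hD : IsThickSubcategory D) (T' : Triangle T)
    (hT : T' ∈ distTriang T) (h₁ : T'.obj₁ ∈ D) (h₂ : T'.obj₂ ∈ D) : T'.obj₃ ∈ D :=
  hD.ext₂ _ (rot_of_distTriang _ hT) h₂ (hD.shift_mem _ 1 h₁)

theorem IsThickSubcategory.ext₁ (hD : IsThickSubcategory D) (T' : Triangle T)
    (hT : T' ∈ distTriang T) (h₂ : T'.obj₂ ∈ D) (h₃ : T'.obj₃ ∈ D) : T'.obj₁ ∈ D :=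
  hD.ext₂ _ (inv_rot_of_distTriang _ hT) (hD.shift_mem _ (-1) h₃) h₂

theorem IsThickSubcategory.biprod (hD : IsThickSubcategory D) {X Y : T} [HasBinaryBiproduct X Y]
    (hX : X ∈ D) (hY : Y ∈ D) : (X ⊞ Y) ∈ D :=
  hD.ext₂ _ (binaryBiproductTriangle_distinguished X Y) hX hY

theorem IsThickSubcategory.of_isZero (hD : IsThickSubcategory D) {X : T} (h : IsZero X) : X ∈ D :=
  hD.mem_of_iso (h.iso (isZero_zero T)).symm hD.zero_mem

theorem IsThickSubcategory.of_shift (hD : IsThickSubcategory D) {X : T} (n : ℤ) (h : X⟦n⟧ ∈ D) :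
    X ∈ D :=
  hD.mem_of_iso ((shiftEquiv T n).unitIso.app X).symm (hD.shift_mem _ (-n) h)

/-- if the zero map `X ⟶ Y` has cone in `D`, then `X ∈ D` -/
theorem IsThickSubcategory.of_zero_cone (hD : IsThickSubcategory D) {X Y : T}
    (h : ObjectProperty.trW (fun X => X ∈ D) (0 : X ⟶ Y)) : X ∈ D := by
  obtain ⟨Z, g, δ, hT, hZ⟩ := h
  obtain ⟨s, hs⟩ := Triangle.coyoneda_exact₁ _ hT (𝟙 (X⟦(1:ℤ)⟧))
    ((Category.id_comp _).trans (Functor.map_zero _ _ _))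
  exact hD.of_shift 1 (hD.retract_mem _ Z s δ hs.symm hZ)

theorem isThick_inter (D : Set (Set T)) (h : ∀ d ∈ D, IsThickSubcategory d) :
    IsThickSubcategory (⋂₀ D) where
  mem_of_iso e hX d hd := (h d hd).mem_of_iso e (hX d hd)
  zero_mem d hd := (h d hd).zero_mem
  shift_mem X n hX d hd := (h d hd).shift_mem X n (hX d hd)
  ext₂ T' hT h1 h3 d hd := (h d hd).ext₂ T' hT (h1 d hd) (h3 d hd)
  retract_mem X Y i r hr hY d hd := (h d hd).retract_mem X Y i r hr (hY d hd)

end Thick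

section FThick
variable {R : Type u} [Ring R] [HasDerivedCategory.{w} (ModuleCat.{u} R)]

theorem isThick_small : IsThickSubcategory
    {X : DerivedCategory (ModuleCat.{u} R) | IsSmallObject X} where
  mem_of_iso e hX d hd hR := hd.mem_of_iso e (hX d hd hR)
  zero_mem d hd _ := hd.zero_mem
  shift_mem X n hX d hd hR := hd.shift_mem X n (hX d hd hR)
  ext₂ T' hT h1 h3 d hd hR := hd.ext₂ T' hT (h1 d hd hR) (h3 d hd hR)
  retract_mem X Y i r hr hY d hd hR := hd.retract_mem X Y i r hr (hY d hd hR)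

theorem IsWideSubcategory.retract_mem' {C : Set (ModuleCat.{u} R)} (hC : IsWideSubcategory C)
    {M N : ModuleCat.{u} R} (i : M ⟶ N) (r : N ⟶ M) (h : i ≫ r = 𝟙 M) (hN : N ∈ C) : M ∈ C :=
  hC.retract_mem i.hom r.hom (by rw [← ModuleCat.hom_comp, h]; rfl) hN

open DerivedCategory in
theorem isThick_homology {C : Set (ModuleCat.{u} R)} (hC : IsWideSubcategory C)
    (hne : C.Nonempty) : IsThickSubcategory
    {X : DerivedCategory (ModuleCat.{u} R) |
      ∀ n : ℤ, (DerivedCategory.homologyFunctor (ModuleCat.{u} R) n).obj X ∈ C} where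
  mem_of_iso e hX n := hC.mem_of_iso ((homologyFunctor _ n).mapIso e) (hX n)
  zero_mem n := by
    have h : IsZero ((homologyFunctor (ModuleCat.{u} R) n).obj 0) :=
      Functor.map_isZero _ (isZero_zero _)
    have := hC.subsingleton_mem hne PUnit.{u+1}
    exact hC.mem_of_iso ((ModuleCat.isZero_of_subsingleton (ModuleCat.of R PUnit)).iso h) this
  shift_mem X m hX n :=
    hC.mem_of_iso (((homologyFunctor (ModuleCat.{u} R) 0).shiftIso m n (m + n) rfl).app X).symm
      (hX (m + n))
  ext₂ T' hT h1 h3 n :=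
    hC.five_mem _ _ _ _ _ _ _
      (HomologySequence.exact₁ T' hT (n - 1) n) (HomologySequence.exact₂ T' hT n)
      (HomologySequence.exact₃ T' hT n (n+1)) (h3 _) (h1 _) (h3 _) (h1 _)
  retract_mem X Y i r hr hY n :=
    hC.retract_mem' ((homologyFunctor _ n).map i) ((homologyFunctor _ n).map r)
      (by rw [← Functor.map_comp, hr, CategoryTheory.Functor.map_id]) (hY n)

theorem isThick_fSet {C : Set (ModuleCat.{u} R)} (hC : IsWideSubcategory C)
    (hne : C.Nonempty) : IsThickSubcategory (fSet C) := by
  have h := isThick_inter ({{X : DerivedCategory (ModuleCat.{u} R) | IsSmallObject X},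
    {X : DerivedCategory (ModuleCat.{u} R) |
      ∀ n : ℤ, (DerivedCategory.homologyFunctor (ModuleCat.{u} R) n).obj X ∈ C}}) (by
    rintro d (rfl | rfl)
    · exact isThick_small
    · exact isThick_homology hC hne)
  rw [Set.sInter_insert, Set.sInter_singleton] at h
  exact h

end FThick

section Coherent
variable {R : Type u} [CommRing R]

theorem fp_of_inj {M N : Type u} [AddCommGroup M] [Module R M] [AddCommGroup N] [Module R N]
    (g : M →ₗ[R] N) (hg : Function.Injective g) (K : Submodule R N)
    (hK : ∀ x, x ∈ K ↔ ∃ y, g y = x)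
    (h : Module.FinitePresentation R K) : Module.FinitePresentation R M :=
  have : K = LinearMap.range g := by ext; exact hK _
  Module.FinitePresentation.of_equiv
    ((LinearEquiv.ofInjective g hg).trans (LinearEquiv.ofEq _ _ this.symm)).symm

theorem fp_of_inj' (n m : ℕ) (N : Submodule R (Fin m → R)) (p : N →ₗ[R] R)
    (g : LinearMap.ker p →ₗ[R] (Fin n → R)) (hg : Function.Injective g)
    (h : Module.FinitePresentation R (LinearMap.range g)) :
    Module.FinitePresentation R (LinearMap.ker p) :=
  fp_of_inj (M := LinearMap.ker p) (N := Fin n → R) g hg (LinearMap.range g) (fun _ => Iff.rfl) h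

/-- over a coherent ring, f.g. submodules of finite free modules are f.p. -/
theorem coherent_fg_sub_free (hR : IsLeftCoherentRing R) (n : ℕ) (N : Submodule R (Fin n → R))
    (hN : N.FG) : Module.FinitePresentation R N := by
  induction n with
  | zero =>
    have : Subsingleton N := inferInstance
    exact Module.finitePresentation_of_projective R N
  | succ n ih =>
    -- project to the first coordinate
    let π : (Fin (n+1) → R) →ₗ[R] R := LinearMap.proj 0
    let τ : (Fin (n+1) → R) →ₗ[R] (Fin n → R) := LinearMap.funLeft R R Fin.succ
    let p : N →ₗ[R] R := π ∘ₗ N.subtype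
    have : Module.Finite R N := Module.Finite.iff_fg.2 hN
    have hI : Module.FinitePresentation R (LinearMap.range p) :=
      hR (LinearMap.range p) (Module.Finite.iff_fg.1 (Module.Finite.range p))
    have hk : (LinearMap.ker p).FG := by
      have := Module.FinitePresentation.fg_ker p.rangeRestrict p.surjective_rangeRestrict
      rwa [LinearMap.ker_rangeRestrict] at this
    let g : LinearMap.ker p →ₗ[R] (Fin n → R) := τ ∘ₗ N.subtype ∘ₗ (LinearMap.ker p).subtype
    have hg : Function.Injective g := by
      intro x y h
      have hx : x.1.1 0 = 0 := x.2
      have hy : y.1.1 0 = 0 := y.2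
      ext i
      refine Fin.cases (hx.trans hy.symm) (fun j => ?_) i
      exact congrFun h j
    have : Module.Finite R (LinearMap.ker p) := Module.Finite.iff_fg.2 hk
    have := ih (LinearMap.range g) (Module.Finite.iff_fg.1 (Module.Finite.range g))
    have h3 : Module.FinitePresentation R (LinearMap.ker p) := fp_of_inj' n (n+1) N p g hg this
    have h4 : Module.FinitePresentation R (LinearMap.ker p.rangeRestrict) := by
      rwa [LinearMap.ker_rangeRestrict]
    exact Module.finitePresentation_of_ker p.rangeRestrict p.surjective_rangeRestrict

/-- f.g. submodules of f.p. modules are f.p. -/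
theorem coherent_fg_sub (hR : IsLeftCoherentRing R) (M : Type u) [AddCommGroup M] [Module R M]
    [Module.FinitePresentation R M] (N : Submodule R M)
    (hN : N.FG) : Module.FinitePresentation R N := by
  obtain ⟨n, f, hf⟩ := Module.Finite.exists_fin' R M
  have hk : (LinearMap.ker f).FG := Module.FinitePresentation.fg_ker f hf
  let N' := N.comap f
  have hN' : N'.FG := by
    refine Submodule.fg_of_fg_map_of_fg_inf_ker f ?_ ?_
    · rwa [Submodule.map_comap_eq_of_surjective hf]
    · rwa [inf_eq_right.2]
      exact LinearMap.ker_le_comap f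
  have := coherent_fg_sub_free hR n N' hN'
  let g : N' →ₗ[R] N := f.restrict (fun x hx => hx)
  have hg : Function.Surjective g := by
    rintro ⟨x, hx⟩
    obtain ⟨y, rfl⟩ := hf x
    exact ⟨⟨y, hx⟩, rfl⟩
  refine Module.finitePresentation_of_surjective g hg ?_
  have : LinearMap.ker g = Submodule.comap N'.subtype (LinearMap.ker f) := by
    ext x
    simp [g, LinearMap.restrict_apply, Subtype.ext_iff]
  rw [this]
  refine Submodule.fg_of_fg_map_injective N'.subtype N'.injective_subtype ?_
  rw [Submodule.map_comap_subtype, inf_eq_right.2]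
  · exact hk
  · exact LinearMap.ker_le_comap f

theorem coherent_ker (hR : IsLeftCoherentRing R) {M N : Type u} [AddCommGroup M] [Module R M]
    [AddCommGroup N] [Module R N] [Module.FinitePresentation R M] [Module.FinitePresentation R N]
    (f : M →ₗ[R] N) : Module.FinitePresentation R (LinearMap.ker f) := by
  have h1 : (LinearMap.range f).FG := Module.Finite.iff_fg.1 (Module.Finite.range f)
  have := coherent_fg_sub hR N (LinearMap.range f) h1
  have h2 := Module.FinitePresentation.fg_ker f.rangeRestrict f.surjective_rangeRestrict
  rw [LinearMap.ker_rangeRestrict] at h2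
  exact coherent_fg_sub hR M _ h2

theorem coker_fp {M N : Type u} [AddCommGroup M] [Module R M]
    [AddCommGroup N] [Module R N] [Module.Finite R M] [Module.FinitePresentation R N]
    (f : M →ₗ[R] N) : Module.FinitePresentation R (N ⧸ LinearMap.range f) := by
  refine Module.finitePresentation_of_surjective (LinearMap.range f).mkQ
    (Submodule.mkQ_surjective _) ?_
  rw [Submodule.ker_mkQ]
  exact Module.Finite.iff_fg.1 (Module.Finite.range f)

theorem ext_fp {M N P : Type u} [AddCommGroup M] [Module R M]
    [AddCommGroup N] [Module R N] [AddCommGroup P] [Module R P] [Module.FinitePresentation R M]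
    [Module.FinitePresentation R P]
    (f : M →ₗ[R] N) (g : N →ₗ[R] P) (hf : Function.Injective f) (hg : Function.Surjective g)
    (hfg : Function.Exact f g) : Module.FinitePresentation R N := by
  have e : M ≃ₗ[R] LinearMap.ker g := (LinearEquiv.ofInjective f hf).trans
    (LinearEquiv.ofEq _ _ (LinearMap.exact_iff.1 hfg).symm)
  have : Module.FinitePresentation R (LinearMap.ker g) := Module.FinitePresentation.of_equiv e
  exact Module.finitePresentation_of_ker g hg

theorem isWide_finPres (hR : IsLeftCoherentRing R) : IsWideSubcategory (finPresModules R) where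
  mem_of_iso {X Y} e (hX : Module.FinitePresentation R X) :=
    Module.FinitePresentation.of_equiv e.toLinearEquiv
  kernel_mem {X Y} f (hX : Module.FinitePresentation R X) (hY : Module.FinitePresentation R Y) := by
    have := coherent_ker hR f.hom
    exact Module.FinitePresentation.of_equiv (ModuleCat.kernelIsoKer f).symm.toLinearEquiv
  cokernel_mem {X Y} f (hX : Module.FinitePresentation R X)
      (hY : Module.FinitePresentation R Y) := by
    have := coker_fp f.hom
    exact Module.FinitePresentation.of_equiv
      (ModuleCat.cokernelIsoRangeQuotient f).symm.toLinearEquiv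
  extension_mem S hS (h1 : Module.FinitePresentation R S.X₁)
      (h2 : Module.FinitePresentation R S.X₃) :=
    ext_fp S.f.hom S.g.hom hS.moduleCat_injective_f hS.moduleCat_surjective_g
      ((ShortComplex.ShortExact.moduleCat_exact_iff_function_exact _).1 hS.exact)

theorem quot_fp (a : Ideal R) (ha : a.FG) : Module.FinitePresentation R (R ⧸ a) := by
  refine Module.finitePresentation_of_surjective (Submodule.mkQ a) (Submodule.mkQ_surjective _) ?_
  rwa [Submodule.ker_mkQ]

/-- a module over a quotient which is f.p. over the ring is f.p. over the quotient -/
theorem fp_quot_of_fp (a : Ideal R) (M : Type u) [AddCommGroup M]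
    [Module R M] [Module (R ⧸ a) M] [IsScalarTower R (R ⧸ a) M]
    (h : Module.FinitePresentation R M) : Module.FinitePresentation (R ⧸ a) M := by
  have : Module.Finite (R ⧸ a) M := Module.Finite.of_restrictScalars_finite R _ _
  obtain ⟨n, f, hf⟩ := Module.Finite.exists_fin' (R ⧸ a) M
  refine Module.finitePresentation_of_surjective f hf ?_
  have hk : (LinearMap.ker (f.restrictScalars R)).FG :=
    Module.FinitePresentation.fg_ker (f.restrictScalars R) hf
  rw [LinearMap.ker_restrictScalars] at hk
  exact Submodule.FG.of_restrictScalars R hk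

theorem fp_of_fp_quot (a : Ideal R) (ha : a.FG) (M : Type u) [AddCommGroup M]
    [Module R M] [Module (R ⧸ a) M] [IsScalarTower R (R ⧸ a) M]
    (h : Module.FinitePresentation (R ⧸ a) M) : Module.FinitePresentation R M := by
  have := quot_fp a ha
  exact Module.FinitePresentation.trans R M (R ⧸ a)

theorem coherent_quotient (hR : IsLeftCoherentRing R) (a : Ideal R) (ha : a.FG) :
    IsLeftCoherentRing (R ⧸ a) := by
  intro I hI
  have := quot_fp a ha
  have hI' : Module.Finite (R ⧸ a) I := Module.Finite.iff_fg.2 hI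
  have hI2 : Module.Finite R I := Module.Finite.trans (R ⧸ a) I
  have h1 : (I.restrictScalars R).FG := Module.Finite.iff_fg.1 hI2
  have := coherent_fg_sub hR (R ⧸ a) (I.restrictScalars R) h1
  exact fp_quot_of_fp a I this

end Coherent


/-- strictly perfect (finite free) complexes, described by one square matrix -/
structure SC (A : Type u) [CommRing A] where
  ι : Type
  fin : Fintype ι
  dec : DecidableEq ι
  deg : ι → ℤ
  d : Matrix ι ι A
  d_sq : d * d = 0
  d_deg : ∀ i j, deg i ≠ deg j + 1 → d i j = 0

namespace SC
attribute [instance] SC.fin SC.dec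

section Act
variable {A : Type u} [CommRing A]

/-- homogeneous matrices -/
def IsHom (P Q : SC A) (k : ℤ) (f : Matrix Q.ι P.ι A) : Prop :=
  ∀ j i, Q.deg j ≠ P.deg i + k → f j i = 0

theorem isHom_d (P : SC A) : IsHom P P 1 P.d := P.d_deg

theorem isHom_one (P : SC A) : IsHom P P 0 1 := by
  intro j i h
  rw [Matrix.one_apply_ne]
  rintro rfl
  simp at h

theorem IsHom.mul {P Q S : SC A} {k l m : ℤ} {f : Matrix Q.ι P.ι A} {g : Matrix S.ι Q.ι A}
    (hf : IsHom P Q k f) (hg : IsHom Q S l g) (h : k + l = m) : IsHom P S m (g * f) := by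
  intro j i hij
  rw [Matrix.mul_apply]
  refine Finset.sum_eq_zero fun x _ => ?_
  by_cases h1 : Q.deg x = P.deg i + k
  · rw [hg j x (by omega), zero_mul]
  · rw [hf x i h1, mul_zero]

variable (N : Type u) [AddCommGroup N] [Module A N]

/-- the action of a matrix on graded pieces -/
def act {P Q : SC A} (f : Matrix Q.ι P.ι A) (n m : ℤ) :
    ({i // P.deg i = n} → N) →ₗ[A] ({j // Q.deg j = m} → N) where
  toFun v j := ∑ i, f j.1 i.1 • v i
  map_add' v v' := by
    ext j
    simp [smul_add, Finset.sum_add_distrib]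
  map_smul' r v := by
    ext j
    simp only [Pi.smul_apply, RingHom.id_apply, Finset.smul_sum]
    exact Finset.sum_congr rfl fun x _ => smul_comm _ _ _

theorem act_apply {P Q : SC A} (f : Matrix Q.ι P.ι A) (n m : ℤ) (v : {i // P.deg i = n} → N)
    (j : {j // Q.deg j = m}) : act N f n m v j = ∑ i, f j.1 i.1 • v i := rfl

variable {N} in
theorem act_apply' {P Q : SC A} (f : Matrix Q.ι P.ι A) (n m : ℤ) (v : {i // P.deg i = n} → N)
    (j : {j // Q.deg j = m}) : act N f n m v j =
      ∑ i, f j.1 i • (if h : P.deg i = n then v ⟨i, h⟩ else 0) := by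
  rw [act_apply]
  rw [← Finset.sum_subset (Finset.subset_univ (Finset.univ.filter fun i => P.deg i = n))]
  · rw [Finset.sum_subtype (p := fun i => P.deg i = n) _ (by simp)]
    refine Finset.sum_congr rfl fun x _ => ?_
    rw [dif_pos x.2]
  · intro x _ hx
    rw [dif_neg (by simpa using hx), smul_zero]

theorem act_comp {P Q S : SC A} {k : ℤ} (f : Matrix Q.ι P.ι A) (g : Matrix S.ι Q.ι A)
    (hf : IsHom P Q k f) (n m l : ℤ) (h : n + k = m) :
    act N g m l ∘ₗ act N f n m = act N (g * f) n l := by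
  refine LinearMap.ext fun v => funext fun j => ?_
  rw [LinearMap.comp_apply, act_apply', act_apply]
  simp only [Matrix.mul_apply, Finset.sum_smul]
  rw [Finset.sum_comm]
  refine Finset.sum_congr rfl fun x _ => ?_
  split_ifs with h1
  · rw [act_apply, Finset.smul_sum]
    simp only [smul_smul]
  · rw [smul_zero]
    symm
    refine Finset.sum_eq_zero fun i _ => ?_
    rw [hf x i.1 (by rw [i.2]; omega), mul_zero, zero_smul]

theorem act_zero {P Q : SC A} (n m : ℤ) : act N (0 : Matrix Q.ι P.ι A) n m = 0 := by
  ext v j; simp [act_apply]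

theorem act_add {P Q : SC A} (f g : Matrix Q.ι P.ι A) (n m : ℤ) :
    act N (f + g) n m = act N f n m + act N g n m := by
  ext v j; simp [act_apply, add_smul, Finset.sum_add_distrib]

theorem act_smul {P Q : SC A} (r : A) (f : Matrix Q.ι P.ι A) (n m : ℤ) :
    act N (r • f) n m = r • act N f n m := by
  ext v j; simp [act_apply, Finset.smul_sum, smul_smul]

theorem act_neg {P Q : SC A} (f : Matrix Q.ι P.ι A) (n m : ℤ) :
    act N (-f) n m = - act N f n m := by
  ext v j; simp [act_apply]

theorem act_one {P : SC A} (n : ℤ) : act N (1 : Matrix P.ι P.ι A) n n = LinearMap.id := by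
  refine LinearMap.ext fun v => funext fun j => ?_
  rw [act_apply, LinearMap.id_apply, Finset.sum_eq_single j]
  · simp
  · intro b _ hb
    rw [Matrix.one_apply_ne, zero_smul]
    exact fun h => hb (Subtype.ext h.symm)
  · simp

theorem act_of_ne {P Q : SC A} {k : ℤ} {f : Matrix Q.ι P.ι A} (hf : IsHom P Q k f) (n m : ℤ)
    (h : n + k ≠ m) : act N f n m = 0 := by
  refine LinearMap.ext fun v => funext fun j => ?_
  rw [act_apply]
  refine Finset.sum_eq_zero fun i _ => ?_
  rw [hf, zero_smul]
  rw [i.2, j.2]; exact h.symm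

/-- the complex attached to a matrix, with coefficients in a module -/
def cx (P : SC A) (N : Type u) [AddCommGroup N] [Module A N] :
    CochainComplex (ModuleCat.{u} A) ℤ where
  X n := ModuleCat.of A ({i // P.deg i = n} → N)
  d n m := ModuleCat.ofHom (act N P.d n m)
  shape n m h := by
    rw [act_of_ne N P.isHom_d n m h]; rfl
  d_comp_d' n m l h _ := by
    rw [← ModuleCat.ofHom_comp, act_comp N P.d P.d P.isHom_d n m l h, P.d_sq, act_zero]; rfl

variable {N}

variable (N) in
/-- the action of a matrix as a morphism in the module category -/
def am {P Q : SC A} (f : Matrix Q.ι P.ι A) (n m : ℤ) : (P.cx N).X n ⟶ (Q.cx N).X m :=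
  ModuleCat.ofHom (act N f n m)

theorem cx_d (P : SC A) (n m : ℤ) : (P.cx N).d n m = am N P.d n m := rfl

theorem am_comp {P Q S : SC A} {k : ℤ} {f : Matrix Q.ι P.ι A} {g : Matrix S.ι Q.ι A}
    (hf : IsHom P Q k f) (n m l : ℤ) (h : n + k = m) :
    am N f n m ≫ am N g m l = am N (g * f) n l := by
  unfold am
  rw [← act_comp N f g hf n m l h]; rfl

theorem am_zero {P Q : SC A} (n m : ℤ) : am N (0 : Matrix Q.ι P.ι A) n m = 0 := by
  unfold am; rw [act_zero]; rfl

theorem am_add {P Q : SC A} (f g : Matrix Q.ι P.ι A) (n m : ℤ) :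
    am N (f + g) n m = am N f n m + am N g n m := by
  unfold am; rw [act_add]; rfl

theorem am_neg {P Q : SC A} (f : Matrix Q.ι P.ι A) (n m : ℤ) :
    am N (-f) n m = - am N f n m := by
  unfold am; rw [act_neg]; rfl

theorem am_smul {P Q : SC A} (r : A) (f : Matrix Q.ι P.ι A) (n m : ℤ) :
    am N (r • f) n m = r • am N f n m := by
  unfold am; rw [act_smul]; rfl

theorem am_one {P : SC A} (n : ℤ) : am N (1 : Matrix P.ι P.ι A) n n = 𝟙 _ := by
  unfold am; rw [act_one]; rfl

theorem am_of_ne {P Q : SC A} {k : ℤ} {f : Matrix Q.ι P.ι A} (hf : IsHom P Q k f) (n m : ℤ)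
    (h : n + k ≠ m) : am N f n m = 0 := by
  unfold am; rw [act_of_ne N hf n m h]; rfl

/-- chain maps from matrices -/
def mapcx (N : Type u) [AddCommGroup N] [Module A N] {P Q : SC A} (f : Matrix Q.ι P.ι A)
    (hf : IsHom P Q 0 f) (hc : Q.d * f = f * P.d) : P.cx N ⟶ Q.cx N where
  f n := am N f n n
  comm' n m h := by
    rw [cx_d, cx_d, am_comp hf n n m (add_zero n), am_comp P.isHom_d n m m h, hc]

theorem mapcx_f {P Q : SC A} (f : Matrix Q.ι P.ι A)
    (hf : IsHom P Q 0 f) (hc : Q.d * f = f * P.d) (n : ℤ) :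
    (mapcx N f hf hc).f n = am N f n n := rfl

theorem mapcx_comp {P Q S : SC A} (f : Matrix Q.ι P.ι A)
    (hf : IsHom P Q 0 f) (hc : Q.d * f = f * P.d)  (g : Matrix S.ι Q.ι A)
    (hg : IsHom Q S 0 g) (hc' : S.d * g = g * Q.d) :
    mapcx N f hf hc ≫ mapcx N g hg hc' = mapcx N (g * f) (hf.mul hg (by simp))
      (by rw [← Matrix.mul_assoc, hc', Matrix.mul_assoc, hc, Matrix.mul_assoc]) := by
  ext1 n
  rw [HomologicalComplex.comp_f, mapcx_f, mapcx_f, mapcx_f, am_comp hf n n n (add_zero n)]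

theorem mapcx_one {P : SC A} : mapcx N (1 : Matrix P.ι P.ι A) P.isHom_one (by simp) = 𝟙 _ := by
  ext1 n
  rw [mapcx_f, am_one]; rfl

/-- functoriality in the coefficients -/
def coeff (P : SC A) {N N' : Type u} [AddCommGroup N] [Module A N] [AddCommGroup N'] [Module A N']
    (φ : N →ₗ[A] N') : P.cx N ⟶ P.cx N' where
  f n := ModuleCat.ofHom (φ.compLeft _)
  comm' n m h := by
    change ModuleCat.ofHom (φ.compLeft _) ≫ ModuleCat.ofHom (act N' P.d n m) =
      ModuleCat.ofHom (act N P.d n m) ≫ ModuleCat.ofHom (φ.compLeft _)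
    rw [← ModuleCat.ofHom_comp, ← ModuleCat.ofHom_comp]
    congr 1
    ext v j
    simp only [LinearMap.comp_apply, act_apply, LinearMap.compLeft_apply, Function.comp_apply,
      map_sum, map_smul]

end Act
end SC

namespace SC
section Htpy
variable {A : Type u} [CommRing A]

/-- homogeneous part of a matrix -/
def part (P Q : SC A) (k : ℤ) (f : Matrix Q.ι P.ι A) : Matrix Q.ι P.ι A :=
  fun j i => if Q.deg j = P.deg i + k then f j i else 0

theorem part_isHom (P Q : SC A) (k : ℤ) (f : Matrix Q.ι P.ι A) : IsHom P Q k (part P Q k f) :=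
  fun _ _ h => if_neg h

theorem part_eq {P Q : SC A} {k : ℤ} {f : Matrix Q.ι P.ι A} (hf : IsHom P Q k f) :
    part P Q k f = f := by
  ext j i
  unfold part
  split_ifs with h
  · rfl
  · exact (hf j i h).symm

theorem part_add (P Q : SC A) (k : ℤ) (f g : Matrix Q.ι P.ι A) :
    part P Q k (f + g) = part P Q k f + part P Q k g := by
  ext j i
  simp only [part, Matrix.add_apply]
  split_ifs <;> simp

theorem part_mul_left {P Q S : SC A} {k l m : ℤ} (f : Matrix Q.ι P.ι A) {g : Matrix S.ι Q.ι A}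
    (hg : IsHom Q S l g) (h : k + l = m) : part P S m (g * f) = g * part P Q k f := by
  ext j i
  simp only [part, Matrix.mul_apply]
  split_ifs with h1
  · refine Finset.sum_congr rfl fun x _ => ?_
    split_ifs with h2
    · rfl
    · rw [hg j x (by omega), zero_mul, zero_mul]
  · symm
    refine Finset.sum_eq_zero fun x _ => ?_
    split_ifs with h2
    · rw [hg j x (by omega), zero_mul]
    · simp

theorem part_mul_right {P Q S : SC A} {k l m : ℤ} {f : Matrix Q.ι P.ι A} (g : Matrix S.ι Q.ι A)
    (hf : IsHom P Q k f) (h : k + l = m) : part P S m (g * f) = part Q S l g * f := by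
  ext j i
  simp only [part, Matrix.mul_apply]
  split_ifs with h1
  · refine Finset.sum_congr rfl fun x _ => ?_
    split_ifs with h2
    · rfl
    · rw [hf x i (by omega), mul_zero, mul_zero]
  · symm
    refine Finset.sum_eq_zero fun x _ => ?_
    split_ifs with h2
    · rw [hf x i (by omega), mul_zero]
    · simp

/-- null-homotopic matrices (homogeneity not required) -/
def Null (P Q : SC A) (f : Matrix Q.ι P.ι A) : Prop := ∃ h : Matrix Q.ι P.ι A,
  f = Q.d * h + h * P.d

theorem Null.hom {P Q : SC A} {f : Matrix Q.ι P.ι A} (hn : Null P Q f) (hf : IsHom P Q 0 f) :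
    ∃ h : Matrix Q.ι P.ι A, IsHom P Q (-1) h ∧ f = Q.d * h + h * P.d := by
  obtain ⟨h, hh⟩ := hn
  refine ⟨part P Q (-1) h, part_isHom _ _ _ _, ?_⟩
  rw [← part_mul_left h Q.isHom_d (m := 0) (by simp), ← part_mul_right h P.isHom_d (m := 0)
    (by simp), ← part_add, ← hh, part_eq hf]

/-- null-homotopic matrices give null-homotopic chain maps -/
theorem Null.homotopy {P Q : SC A} {f : Matrix Q.ι P.ι A} (hn : Null P Q f)
    (hf : IsHom P Q 0 f) (hc : Q.d * f = f * P.d) (N : Type u) [AddCommGroup N] [Module A N] :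
    Nonempty (Homotopy (mapcx N f hf hc) 0) := by
  obtain ⟨h, h1, h2⟩ := hn.hom hf
  refine ⟨{ hom := fun i j => am N h i j, zero := ?_, comm := ?_ }⟩
  · intro i j hij
    exact am_of_ne h1 _ _ (fun h => hij (by simp only [ComplexShape.up_Rel]; omega))
  · intro i
    rw [dNext_eq (i' := i + 1) _ (by simp), prevD_eq (j' := i - 1) _ (by simp), mapcx_f, cx_d, cx_d,
      am_comp P.isHom_d i (i+1) i rfl, am_comp h1 i (i-1) i rfl, ← am_add, h2, add_comm (Q.d * h)]
    simp

theorem act_single {P Q : SC A} (f : Matrix Q.ι P.ι A) (n m : ℤ) (i : {i // P.deg i = n})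
    (j : {j // Q.deg j = m}) : act A f n m (Pi.single i 1) j = f j.1 i.1 := by
  rw [act_apply, Finset.sum_eq_single i]
  · simp
  · intro b _ hb
    simp [hb]
  · simp

theorem eq_of_act {P Q : SC A} {k : ℤ} {f g : Matrix Q.ι P.ι A} (hf : IsHom P Q k f)
    (hg : IsHom P Q k g) (h : ∀ n m, n + k = m → act A f n m = act A g n m) : f = g := by
  ext j i
  by_cases hij : Q.deg j = P.deg i + k
  · rw [← act_single f (P.deg i) (Q.deg j) ⟨i, rfl⟩ ⟨j, rfl⟩, h _ _ hij.symm, act_single]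
  · rw [hf j i hij, hg j i hij]

theorem eq_of_am {P Q : SC A} {k : ℤ} {f g : Matrix Q.ι P.ι A} (hf : IsHom P Q k f)
    (hg : IsHom P Q k g) (h : ∀ n m, n + k = m → am A f n m = am A g n m) : f = g :=
  eq_of_act hf hg fun n m hnm => congrArg ModuleCat.Hom.hom (h n m hnm)

theorem exists_mat {P Q : SC A} (k : ℤ) (φ : ∀ n m : ℤ, (P.cx A).X n ⟶ (Q.cx A).X m) :
    ∃ f, IsHom P Q k f ∧ ∀ n m, n + k = m → am A f n m = φ n m := by
  let f : Matrix Q.ι P.ι A := fun j i =>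
    (φ (P.deg i) (Q.deg j)).hom (Pi.single (M := fun _ => A) (⟨i, rfl⟩ : {x // P.deg x = P.deg i}) 1)
      (⟨j, rfl⟩ : {y // Q.deg y = Q.deg j})
  refine ⟨part P Q k f, part_isHom _ _ _ _, fun n m h => ?_⟩
  refine ModuleCat.hom_ext ?_
  change act A _ n m = (φ n m).hom
  refine LinearMap.pi_ext' fun i => LinearMap.ext_ring (funext fun j => ?_)
  refine (act_single _ n m i j).trans ?_
  obtain ⟨i, rfl⟩ := i
  obtain ⟨j, rfl⟩ := j
  exact if_pos h.symm

theorem full {P Q : SC A} (g : P.cx A ⟶ Q.cx A) :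
    ∃ (f : Matrix Q.ι P.ι A) (hf : IsHom P Q 0 f) (hc : Q.d * f = f * P.d),
      mapcx A f hf hc = g := by
  obtain ⟨f, hf, hfg⟩ := exists_mat (P := P) (Q := Q) 0
    (fun n m => if h : n = m then g.f n ≫ eqToHom (by rw [h]) else 0)
  have key : ∀ n, am A f n n = g.f n := fun n => by
    rw [hfg n n (by simp)]; simp
  have hc : Q.d * f = f * P.d := by
    refine eq_of_am (hf.mul Q.isHom_d (m := 1) (by simp)) (P.isHom_d.mul hf (by simp)) ?_
    intro n m h
    rw [← am_comp hf n n m (by simp), ← am_comp P.isHom_d n m m h, key, key, ← cx_d, ← cx_d]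
    exact g.comm n m
  refine ⟨f, hf, hc, ?_⟩
  ext1 n
  exact key n

theorem null_of_homotopy {P Q : SC A} {f : Matrix Q.ι P.ι A} (hf : IsHom P Q 0 f)
    (hc : Q.d * f = f * P.d) (H : Homotopy (mapcx A f hf hc) 0) : Null P Q f := by
  obtain ⟨h, h1, h2⟩ := exists_mat (P := P) (Q := Q) (-1) (fun n m => H.hom n m)
  refine ⟨h, eq_of_am hf ?_ ?_⟩
  · rw [← part_eq (h1.mul Q.isHom_d (m := 0) (by simp)),
      ← part_eq (P.isHom_d.mul h1 (m := 0) (by simp)), ← part_add]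
    exact part_isHom _ _ _ _
  · intro n m hnm
    obtain rfl : n = m := by omega
    have := H.comm n
    rw [dNext_eq (i' := n + 1) _ (by simp), prevD_eq (j' := n - 1) _ (by simp), mapcx_f] at this
    rw [this, am_add, ← am_comp P.isHom_d n (n+1) n rfl, ← am_comp h1 n (n-1) n rfl,
      h2 _ _ (by omega), h2 _ _ (by omega), cx_d, cx_d]
    simp [add_comm]

instance proj_X (P : SC A) (n : ℤ) : Projective ((P.cx A).X n) :=
  ModuleCat.projective_of_free (Pi.basisFun A {i // P.deg i = n})

theorem exists_bound (P : SC A) : ∃ b : ℤ, ∀ i, P.deg i ≤ b := by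
  obtain ⟨b, hb⟩ := (Set.finite_range P.deg).bddAbove
  exact ⟨b, fun i => hb ⟨i, rfl⟩⟩

theorem isZero_X (P : SC A) (N : Type u) [AddCommGroup N] [Module A N] (n : ℤ)
    (h : ∀ i, P.deg i ≠ n) : IsZero ((P.cx N).X n) := by
  have : IsEmpty {i // P.deg i = n} := ⟨fun x => h x.1 x.2⟩
  exact ModuleCat.isZero_of_subsingleton (ModuleCat.of A ({i // P.deg i = n} → N))

instance isKProjective (P : SC A) : (P.cx A).IsKProjective := by
  obtain ⟨b, hb⟩ := P.exists_bound
  have : (P.cx A).IsStrictlyLE b := by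
    rw [CochainComplex.isStrictlyLE_iff]
    intro n hn
    exact P.isZero_X A n fun i hi => by have := hb i; omega
  exact CochainComplex.isKProjective_of_projective (P.cx A) b

variable [HasDerivedCategory.{w} (ModuleCat.{u} A)]

variable (P : SC A) in
/-- the object of the derived category -/
noncomputable abbrev obj : DerivedCategory (ModuleCat.{u} A) := DerivedCategory.Q.obj (P.cx A)

theorem Q_full (P : SC A) (L : CochainComplex (ModuleCat.{u} A) ℤ)
    (φ : P.obj ⟶ DerivedCategory.Q.obj L) : ∃ g : P.cx A ⟶ L, DerivedCategory.Q.map g = φ := by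
  let e := DerivedCategory.quotientCompQhIso (ModuleCat.{u} A)
  obtain ⟨g, hg⟩ := (CochainComplex.IsKProjective.Qh_map_bijective (P.cx A)
    ((HomotopyCategory.quotient _ _).obj L)).2 (e.hom.app _ ≫ φ ≫ e.inv.app _)
  obtain ⟨g, rfl⟩ := (HomotopyCategory.quotient _ _).map_surjective g
  refine ⟨g, ?_⟩
  have := e.hom.naturality g
  rw [Functor.comp_map, hg] at this
  rw [← cancel_epi (e.hom.app _), ← this]
  simp

theorem Q_faithful (P : SC A) (L : CochainComplex (ModuleCat.{u} A) ℤ)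
    (g : P.cx A ⟶ L) (h : DerivedCategory.Q.map g = 0) : Nonempty (Homotopy g 0) := by
  let e := DerivedCategory.quotientCompQhIso (ModuleCat.{u} A)
  have h1 := e.hom.naturality g
  rw [h, comp_zero, ← zero_comp (f := e.hom.app L), cancel_mono] at h1
  have h2 := (CochainComplex.IsKProjective.Qh_map_bijective (P.cx A)
    ((HomotopyCategory.quotient _ _).obj L)).1 (a₁ := (HomotopyCategory.quotient _ _).map g)
    (a₂ := 0) (by rw [Functor.map_zero]; exact h1)
  exact ⟨HomotopyCategory.homotopyOfEq _ _ (h2.trans (Functor.map_zero _ _ _).symm)⟩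

/-- morphism in the derived category given by a matrix -/
noncomputable def objMap {P Q : SC A} (f : Matrix Q.ι P.ι A)
    (hf : IsHom P Q 0 f) (hc : Q.d * f = f * P.d) : P.obj ⟶ Q.obj :=
  DerivedCategory.Q.map (mapcx A f hf hc)

theorem objMap_full {P Q : SC A} (φ : P.obj ⟶ Q.obj) :
    ∃ (f : Matrix Q.ι P.ι A) (hf : IsHom P Q 0 f) (hc : Q.d * f = f * P.d),
      objMap f hf hc = φ := by
  obtain ⟨g, rfl⟩ := Q_full P _ φ
  obtain ⟨f, hf, hc, rfl⟩ := full g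
  exact ⟨f, hf, hc, rfl⟩

theorem objMap_eq_zero_iff {P Q : SC A} (f : Matrix Q.ι P.ι A)
    (hf : IsHom P Q 0 f) (hc : Q.d * f = f * P.d) : objMap f hf hc = 0 ↔ Null P Q f := by
  constructor
  · intro h
    obtain ⟨H⟩ := Q_faithful P _ _ h
    exact null_of_homotopy hf hc H
  · intro h
    obtain ⟨H⟩ := h.homotopy hf hc A
    unfold objMap
    rw [DerivedCategory.Q_map_eq_of_homotopy _ H, Functor.map_zero]

theorem null_smul_one_iff (P : SC A) (s : A) : s • 𝟙 P.obj = 0 ↔ Null P P (s • 1) := by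
  have hf : IsHom P P 0 (s • 1) := fun j i h => by
    rw [Matrix.smul_apply, P.isHom_one j i h, smul_zero]
  have hc : P.d * (s • 1) = (s • 1) * P.d := by simp
  rw [← objMap_eq_zero_iff _ hf hc]
  have : objMap (s • 1) hf hc = s • 𝟙 P.obj := by
    have : mapcx A (s • 1) hf hc = s • 𝟙 (P.cx A) := by
      ext1 n
      rw [mapcx_f, am_smul, am_one]; rfl
    unfold objMap
    rw [this, Functor.map_smul, CategoryTheory.Functor.map_id]
  rw [this]

end Htpy
end SC

namespace SC
section Block
variable {A : Type u} [CommRing A]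

/-- a reindexed and shifted complex -/
theorem shiftIso {B P : SC A} (e : B.ι ≃ P.ι) (k : ℤ) (hdeg : ∀ i, B.deg i + k = P.deg (e i))
    (hd : ∀ i j, B.d i j = ((k.negOnePow : ℤˣ) : ℤ) • P.d (e i) (e j))
    (N : Type u) [AddCommGroup N] [Module A N] : Nonempty (B.cx N ≅ (P.cx N)⟦k⟧) := by
  let E (n : ℤ) : {j // P.deg j = n + k} ≃ {i // B.deg i = n} :=
    (Equiv.subtypeEquiv e (fun i => by rw [← hdeg]; omega)).symm
  have hE : ∀ n j, e (E n j).1 = j.1 := fun n j => e.apply_symm_apply _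
  refine ⟨HomologicalComplex.Hom.isoOfComponents
    (fun n => (LinearEquiv.funCongrLeft A N (E n)).toModuleIso) ?_⟩
  intro n m hnm
  refine ModuleCat.hom_ext ?_
  refine LinearMap.ext fun v => funext fun j => ?_
  have key : ∀ (v : {i // B.deg i = n} → N) (j : {j // P.deg j = m + k}),
      ((k.negOnePow : ℤˣ) : ℤ) • act N P.d (n+k) (m+k) (fun i => v (E n i)) j =
        act N B.d n m v (E m j) := by
    intro v j
    rw [act_apply, act_apply, ← Equiv.sum_comp (E n)]
    simp only [hd, hE]
    rw [Finset.smul_sum]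
    refine Finset.sum_congr rfl fun i _ => ?_
    rw [smul_assoc]
  exact key v j

/-- isomorphisms from matrices -/
theorem isoOfMat {P Q : SC A} (f : Matrix Q.ι P.ι A) (g : Matrix P.ι Q.ι A)
    (hf : IsHom P Q 0 f) (hc : Q.d * f = f * P.d) (hg : IsHom Q P 0 g) (h1 : g * f = 1)
    (h2 : f * g = 1)
    (N : Type u) [AddCommGroup N] [Module A N] : IsIso (mapcx N f hf hc) := by
  have hc' : P.d * g = g * Q.d := by
    calc P.d * g = (g * f) * P.d * g := by rw [h1, Matrix.one_mul]
      _ = g * (Q.d * f) * g := by rw [hc]; simp only [Matrix.mul_assoc]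
      _ = g * Q.d * (f * g) := by simp only [Matrix.mul_assoc]
      _ = _ := by rw [h2, Matrix.mul_one]
  refine ⟨mapcx N g hg hc', ?_, ?_⟩
  · rw [mapcx_comp, ← mapcx_one]; congr 1
  · rw [mapcx_comp, ← mapcx_one]; congr 1

variable (P : SC A) in
/-- shifted complex -/
abbrev shift (k : ℤ) : SC A where
  ι := P.ι
  fin := P.fin
  dec := P.dec
  deg i := P.deg i - k
  d := ((k.negOnePow : ℤˣ) : ℤ) • P.d
  d_sq := by rw [smul_mul_smul_comm, P.d_sq, smul_zero]
  d_deg i j h := by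
    rw [Matrix.smul_apply, P.d_deg i j (by omega), smul_zero]

/-- extension of complexes -/
abbrev block (P Q : SC A) (g : Matrix P.ι Q.ι A) (hg : IsHom Q P 1 g)
    (hc : P.d * g + g * Q.d = 0) : SC A where
  ι := P.ι ⊕ Q.ι
  fin := inferInstance
  dec := inferInstance
  deg := Sum.elim P.deg Q.deg
  d := Matrix.fromBlocks P.d g 0 Q.d
  d_sq := by
    rw [Matrix.fromBlocks_multiply]
    simp [P.d_sq, Q.d_sq, hc]
  d_deg i j h := by
    rcases i with i | i <;> rcases j with j | j
    · exact P.d_deg i j h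
    · exact hg i j h
    · rfl
    · exact Q.d_deg i j h

section
variable {P Q : SC A} {g : Matrix P.ι Q.ι A} (hg : IsHom Q P 1 g)
    (hc : P.d * g + g * Q.d = 0)

/-- first inclusion -/
def i₁ : Matrix (block P Q g hg hc).ι P.ι A :=
  (Matrix.fromRows 1 0 : Matrix (P.ι ⊕ Q.ι) P.ι A)
/-- second inclusion -/
def i₂ : Matrix (block P Q g hg hc).ι Q.ι A :=
  (Matrix.fromRows 0 1 : Matrix (P.ι ⊕ Q.ι) Q.ι A)
/-- first projection -/
def p₁ : Matrix P.ι (block P Q g hg hc).ι A :=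
  (Matrix.fromCols 1 0 : Matrix P.ι (P.ι ⊕ Q.ι) A)
/-- second projection -/
def p₂ : Matrix Q.ι (block P Q g hg hc).ι A :=
  (Matrix.fromCols 0 1 : Matrix Q.ι (P.ι ⊕ Q.ι) A)

theorem isHom_i₁ : IsHom P (block P Q g hg hc) 0 (i₁ hg hc) := by
  rintro (j | j) i h
  · exact P.isHom_one j i h
  · rfl

theorem isHom_i₂ : IsHom Q (block P Q g hg hc) 0 (i₂ hg hc) := by
  rintro (j | j) i h
  · rfl
  · exact Q.isHom_one j i h

theorem isHom_p₁ : IsHom (block P Q g hg hc) P 0 (p₁ hg hc) := by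
  rintro j (i | i) h
  · exact P.isHom_one j i h
  · rfl

theorem isHom_p₂ : IsHom (block P Q g hg hc) Q 0 (p₂ hg hc) := by
  rintro j (i | i) h
  · rfl
  · exact Q.isHom_one j i h

theorem blockIn_comm : (block P Q g hg hc).d * i₁ hg hc = i₁ hg hc * P.d := by
  have : Matrix.fromBlocks P.d g 0 Q.d * (Matrix.fromRows 1 0 : Matrix (P.ι ⊕ Q.ι) P.ι A) =
    (Matrix.fromRows 1 0 : Matrix (P.ι ⊕ Q.ι) P.ι A) * P.d := by
    rw [Matrix.fromBlocks_mul_fromRows, Matrix.fromRows_mul]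
    simp
  exact this

theorem block_i₂ : (block P Q g hg hc).d * i₂ hg hc = i₁ hg hc * g + i₂ hg hc * Q.d := by
  have : Matrix.fromBlocks P.d g 0 Q.d * (Matrix.fromRows 0 1 : Matrix (P.ι ⊕ Q.ι) Q.ι A) =
    (Matrix.fromRows 1 0 : Matrix (P.ι ⊕ Q.ι) P.ι A) * g +
    (Matrix.fromRows 0 1 : Matrix (P.ι ⊕ Q.ι) Q.ι A) * Q.d := by
    rw [Matrix.fromBlocks_mul_fromRows, Matrix.fromRows_mul, Matrix.fromRows_mul]
    ext (i | i) j <;> simp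
  exact this

theorem blockOut_comm : Q.d * p₂ hg hc = p₂ hg hc * (block P Q g hg hc).d := by
  have : Q.d * (Matrix.fromCols 0 1 : Matrix Q.ι (P.ι ⊕ Q.ι) A) =
    (Matrix.fromCols 0 1 : Matrix Q.ι (P.ι ⊕ Q.ι) A) * Matrix.fromBlocks P.d g 0 Q.d := by
    rw [Matrix.fromCols_mul_fromBlocks, Matrix.mul_fromCols]
    simp
  exact this

theorem p₁_i₁ : p₁ hg hc * i₁ hg hc = 1 := by
  have : (Matrix.fromCols 1 0 : Matrix P.ι (P.ι ⊕ Q.ι) A) *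
      (Matrix.fromRows 1 0 : Matrix (P.ι ⊕ Q.ι) P.ι A) = 1 := by
    rw [Matrix.fromCols_mul_fromRows]; simp
  exact this

theorem p₂_i₂ : p₂ hg hc * i₂ hg hc = 1 := by
  have : (Matrix.fromCols 0 1 : Matrix Q.ι (P.ι ⊕ Q.ι) A) *
      (Matrix.fromRows 0 1 : Matrix (P.ι ⊕ Q.ι) Q.ι A) = 1 := by
    rw [Matrix.fromCols_mul_fromRows]; simp
  exact this

theorem p₂_i₁ : p₂ hg hc * i₁ hg hc = 0 := by
  have : (Matrix.fromCols 0 1 : Matrix Q.ι (P.ι ⊕ Q.ι) A) *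
      (Matrix.fromRows 1 0 : Matrix (P.ι ⊕ Q.ι) P.ι A) = 0 := by
    rw [Matrix.fromCols_mul_fromRows]; simp
  exact this

theorem p₁_i₂ : p₁ hg hc * i₂ hg hc = 0 := by
  have : (Matrix.fromCols 1 0 : Matrix P.ι (P.ι ⊕ Q.ι) A) *
      (Matrix.fromRows 0 1 : Matrix (P.ι ⊕ Q.ι) Q.ι A) = 0 := by
    rw [Matrix.fromCols_mul_fromRows]; simp
  exact this

theorem block_id : i₁ hg hc * p₁ hg hc + i₂ hg hc * p₂ hg hc = 1 := by
  have : (Matrix.fromRows 1 0 : Matrix (P.ι ⊕ Q.ι) P.ι A) * (Matrix.fromCols 1 0 : Matrix P.ι (P.ι ⊕ Q.ι) A) +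
      (Matrix.fromRows 0 1 : Matrix (P.ι ⊕ Q.ι) Q.ι A) *
        (Matrix.fromCols 0 1 : Matrix Q.ι (P.ι ⊕ Q.ι) A) = 1 := by
    rw [Matrix.fromRows_mul_fromCols, Matrix.fromRows_mul_fromCols, Matrix.fromBlocks_add]
    simp
  exact this

/-- inclusion into the block -/
def blockIn (N : Type u) [AddCommGroup N] [Module A N] : P.cx N ⟶ (block P Q g hg hc).cx N :=
  mapcx N (i₁ hg hc) (isHom_i₁ hg hc) (blockIn_comm hg hc)

/-- projection from the block -/
def blockOut (N : Type u) [AddCommGroup N] [Module A N] : (block P Q g hg hc).cx N ⟶ Q.cx N :=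
  mapcx N (p₂ hg hc) (isHom_p₂ hg hc) (blockOut_comm hg hc)

/-- the short complex of a block -/
def blockS (N : Type u) [AddCommGroup N] [Module A N] :
    ShortComplex (CochainComplex (ModuleCat.{u} A) ℤ) :=
  ShortComplex.mk (blockIn hg hc N) (blockOut hg hc N) (by
    ext1 n
    rw [HomologicalComplex.comp_f, blockIn, blockOut, mapcx_f, mapcx_f,
      am_comp (isHom_i₁ hg hc) n n n (by simp), p₂_i₁, am_zero]
    rfl)

theorem blockS_shortExact (N : Type u) [AddCommGroup N] [Module A N] :
    (blockS hg hc N).ShortExact := by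
  refine HomologicalComplex.shortExact_of_degreewise_shortExact _ fun n => ?_
  refine ShortComplex.Splitting.shortExact ⟨am N (p₁ hg hc) n n, am N (i₂ hg hc) n n, ?_, ?_, ?_⟩
  · exact (am_comp (isHom_i₁ hg hc) n n n (by simp)).trans (by rw [p₁_i₁, am_one]; rfl)
  · exact (am_comp (isHom_i₂ hg hc) n n n (by simp)).trans (by rw [p₂_i₂, am_one]; rfl)
  · have : am N (p₁ hg hc) n n ≫ am N (i₁ hg hc) n n + am N (p₂ hg hc) n n ≫ am N (i₂ hg hc) n n
        = 𝟙 _ := by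
      rw [am_comp (isHom_p₁ hg hc) n n n (by simp), am_comp (isHom_p₂ hg hc) n n n (by simp),
        ← am_add, block_id, am_one]
    exact this

end

variable [HasDerivedCategory.{w} (ModuleCat.{u} A)]

theorem block_mem {P Q : SC A} {g : Matrix P.ι Q.ι A} (hg : IsHom Q P 1 g)
    (hc : P.d * g + g * Q.d = 0) {D : Set (DerivedCategory (ModuleCat.{u} A))}
    (hD : IsThickSubcategory D) (hP : P.obj ∈ D) (hQ : Q.obj ∈ D) :
    (block P Q g hg hc).obj ∈ D :=
  hD.ext₂ _ (DerivedCategory.triangleOfSES_distinguished (blockS_shortExact hg hc A)) hP hQ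

theorem block_trW {P Q : SC A} {g : Matrix P.ι Q.ι A} (hg : IsHom Q P 1 g)
    (hc : P.d * g + g * Q.d = 0) {D : Set (DerivedCategory (ModuleCat.{u} A))}
    (hQ : Q.obj ∈ D) :
    ObjectProperty.trW (fun X => X ∈ D) (DerivedCategory.Q.map (blockIn hg hc A)) :=
  ObjectProperty.trW.mk _ (DerivedCategory.triangleOfSES_distinguished (blockS_shortExact hg hc A)) hQ

theorem shift_obj {B P : SC A} (e : B.ι ≃ P.ι) (k : ℤ) (hdeg : ∀ i, B.deg i + k = P.deg (e i))
    (hd : ∀ i j, B.d i j = ((k.negOnePow : ℤˣ) : ℤ) • P.d (e i) (e j)) :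
    Nonempty (B.obj ≅ P.obj⟦k⟧) := by
  obtain ⟨i⟩ := shiftIso e k hdeg hd A
  exact ⟨DerivedCategory.Q.mapIso i ≪≫ (DerivedCategory.Q.commShiftIso k).app _⟩

theorem mem_of_fiber {D : Set (DerivedCategory (ModuleCat.{u} A))}
    (hD : IsThickSubcategory D) {B P : SC A} (hP : P.obj ∈ D) (e : B.ι ≃ P.ι) (k : ℤ)
    (hdeg : ∀ i, B.deg i + k = P.deg (e i)) (ε : ℤˣ)
    (hd : ∀ i j, B.d i j = (ε : ℤ) • P.d (e i) (e j)) : B.obj ∈ D := by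
  let ν : ℤˣ := k.negOnePow * ε
  have hν : ∀ x : ℤˣ, x * x = 1 := Int.units_mul_self
  let B' : SC A :=
    { ι := B.ι, fin := B.fin, dec := B.dec, deg := B.deg, d := (ν : ℤ) • B.d
      d_sq := by rw [smul_mul_smul_comm, B.d_sq, smul_zero]
      d_deg := fun i j h => by rw [Matrix.smul_apply, B.d_deg i j h, smul_zero] }
  have h1 : B'.obj ∈ D := by
    obtain ⟨i⟩ := shift_obj (B := B') (P := P) e k hdeg (fun i j => by
      change (ν : ℤ) • B.d i j = _
      rw [hd, smul_smul, ← Units.val_mul, mul_assoc, hν, mul_one])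
    exact hD.mem_of_iso i.symm (hD.shift_mem _ k hP)
  let f : Matrix B.ι B.ι A := Matrix.diagonal (fun i => (((ν ^ (B.deg i) : ℤˣ) : ℤ) : A))
  have hf : IsHom B B' 0 f := fun j i h => by
    refine Matrix.diagonal_apply_ne _ ?_
    rintro rfl
    exact h (add_zero _).symm
  have hff : f * f = 1 := by
    simp only [f, Matrix.diagonal_mul_diagonal, ← Int.cast_mul, ← Units.val_mul, hν]
    simp
  have hcc : B'.d * f = f * B.d := by
    ext i j
    change (((ν : ℤ) • B.d) * f) i j = _
    simp only [f, Matrix.mul_diagonal, Matrix.diagonal_mul]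
    by_cases h : B.deg i = B.deg j + 1
    · rw [h, Matrix.smul_apply, zpow_add, zpow_one, zsmul_eq_mul]
      push_cast
      ring
    · rw [Matrix.smul_apply, B.d_deg i j h]; simp
  have := isoOfMat (P := B) (Q := B') f f hf hcc (fun j i h => hf j i h) hff hff A
  exact hD.mem_of_iso (DerivedCategory.Q.mapIso (asIso (mapcx A (P := B) (Q := B') f hf hcc))).symm h1

end Block
end SC

namespace SC
section Cone
variable {A : Type u} [CommRing A]

theorem cone_hg {P Q : SC A} {f : Matrix Q.ι P.ι A} (hf : IsHom P Q 0 f) :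
    IsHom (P.shift 1) Q 1 f := fun j i h => hf j i (by
      intro h'; apply h; change _ = P.deg i - 1 + 1; omega)

theorem cone_hc {P Q : SC A} {f : Matrix Q.ι P.ι A} (hc : Q.d * f = f * P.d) :
    Q.d * f + f * (P.shift 1).d = 0 := by
  change Q.d * f + f * (((1 : ℤ).negOnePow : ℤˣ) : ℤ) • P.d = 0
  rw [hc]; simp

/-- mapping cone of a matrix -/
abbrev cone {P Q : SC A} (f : Matrix Q.ι P.ι A) (hf : IsHom P Q 0 f) (hc : Q.d * f = f * P.d) :
    SC A := block Q (P.shift 1) f (cone_hg hf) (cone_hc hc)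

section
variable {P Q : SC A} {f : Matrix Q.ι P.ι A} (hf : IsHom P Q 0 f) (hc : Q.d * f = f * P.d)

/-- second inclusion, unshifted -/
def j₂ : Matrix (cone f hf hc).ι P.ι A := i₂ (cone_hg hf) (cone_hc hc)
/-- second projection, unshifted -/
def q₂ : Matrix P.ι (cone f hf hc).ι A := p₂ (cone_hg hf) (cone_hc hc)

theorem isHom_j₂ : IsHom P (cone f hf hc) (-1) (j₂ hf hc) := fun j i h =>
  isHom_i₂ (cone_hg hf) (cone_hc hc) j i (by
    intro h'; apply h; rw [h']; change P.deg i - 1 + 0 = _; omega)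
theorem isHom_q₂ : IsHom (cone f hf hc) P 1 (q₂ hf hc) := fun j i h =>
  isHom_p₂ (cone_hg hf) (cone_hc hc) j i (by
    intro h'; apply h; have h'' : P.deg j - 1 = (cone f hf hc).deg i + 0 := h'
    omega)

theorem cone_j₂ : (cone f hf hc).d * j₂ hf hc = i₁ (cone_hg hf) (cone_hc hc) * f
    - j₂ hf hc * P.d := by
  have h := block_i₂ (cone_hg hf) (cone_hc hc)
  have h2 : i₂ (cone_hg hf) (cone_hc hc) * (P.shift 1).d = - (j₂ hf hc * P.d) := by
    change j₂ hf hc * ((((1 : ℤ).negOnePow : ℤˣ) : ℤ) • P.d) = _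
    simp
  rw [h2] at h
  exact h.trans (sub_eq_add_neg _ _).symm

theorem q₂_j₂ : q₂ hf hc * j₂ hf hc = 1 := p₂_i₂ (cone_hg hf) (cone_hc hc)
theorem q₂_i₁ : q₂ hf hc * i₁ (cone_hg hf) (cone_hc hc) = 0 := p₂_i₁ (cone_hg hf) (cone_hc hc)
theorem p₁_j₂ : p₁ (cone_hg hf) (cone_hc hc) * j₂ hf hc = 0 := p₁_i₂ (cone_hg hf) (cone_hc hc)
theorem cone_id : i₁ (cone_hg hf) (cone_hc hc) * p₁ (cone_hg hf) (cone_hc hc) +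
    j₂ hf hc * q₂ hf hc = 1 := block_id (cone_hg hf) (cone_hc hc)

open CochainComplex HomComplex in
theorem cone_iso : Nonempty (mappingCone (mapcx A f hf hc) ≅ (cone f hf hc).cx A) := by
  let α : Cochain (P.cx A) ((cone f hf hc).cx A) (-1) :=
    Cochain.mk (fun p q _ => am A (j₂ hf hc) p q)
  have hα : ∀ p q h, α.v p q h = am A (j₂ hf hc) p q := fun p q h => rfl
  let β := blockIn (cone_hg hf) (cone_hc hc) A
  have hβ : ∀ n, β.f n = am A (i₁ (cone_hg hf) (cone_hc hc)) n n := fun n => rfl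
  have eq : δ (-1) 0 α = Cochain.ofHom (mapcx A f hf hc ≫ β) := by
    ext p
    rw [δ_v (-1) 0 (by simp) α p p (by simp) (p - 1) (p + 1) rfl rfl, hα, hα,
      Cochain.ofHom_v, HomologicalComplex.comp_f, mapcx_f, hβ,
      am_comp hf p p p (by simp), cx_d, cx_d, am_comp (isHom_j₂ hf hc) p (p-1) p rfl,
      am_comp P.isHom_d p (p+1) p rfl, cone_j₂, Int.negOnePow_zero, one_smul, ← am_add,
      sub_add_cancel]
  let F := mappingCone.desc (mapcx A f hf hc) α β eq
  have : ∀ n, IsIso (F.f n) := by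
    intro n
    refine ⟨am A (q₂ hf hc) n (n+1) ≫ (mappingCone.inl (mapcx A f hf hc)).v (n+1) n (by omega) +
      am A (p₁ (cone_hg hf) (cone_hc hc)) n n ≫ (mappingCone.inr (mapcx A f hf hc)).f n, ?_, ?_⟩
    · refine mappingCone.ext_from (mapcx A f hf hc) (n+1) n rfl ?_ ?_
      · rw [← Category.assoc, mappingCone.inl_v_desc_f, hα, Preadditive.comp_add,
          ← Category.assoc, ← Category.assoc, am_comp (isHom_j₂ hf hc) (n+1) n (n+1) (by omega),
          am_comp (isHom_j₂ hf hc) (n+1) n n (by omega), q₂_j₂, p₁_j₂, am_one, am_zero]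
        simp
      · rw [← Category.assoc, mappingCone.inr_f_desc_f, hβ, Preadditive.comp_add,
          ← Category.assoc, ← Category.assoc, am_comp (isHom_i₁ (cone_hg hf) (cone_hc hc)) n n (n+1) (by omega),
          am_comp (isHom_i₁ (cone_hg hf) (cone_hc hc)) n n n (by omega), q₂_i₁, p₁_i₁, am_one, am_zero]
        simp
    · rw [Preadditive.add_comp, Category.assoc, Category.assoc, mappingCone.inl_v_desc_f,
        mappingCone.inr_f_desc_f, hα, hβ, am_comp (isHom_q₂ hf hc) n (n+1) n rfl,
        am_comp (isHom_p₁ (cone_hg hf) (cone_hc hc)) n n n (by omega), ← am_add, add_comm, cone_id,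
        am_one]
  have : IsIso F := HomologicalComplex.Hom.isIso_of_components F
  exact ⟨asIso F⟩

variable [HasDerivedCategory.{w} (ModuleCat.{u} A)]

theorem cone_triangle : ∃ (α : Q.obj ⟶ (cone f hf hc).obj) (β : (cone f hf hc).obj ⟶ P.obj⟦(1:ℤ)⟧),
    Triangle.mk (objMap f hf hc) α β ∈ distTriang (DerivedCategory (ModuleCat.{u} A)) := by
  obtain ⟨e⟩ := cone_iso hf hc
  have h := DerivedCategory.mappingCone_triangle_distinguished (mapcx A f hf hc)
  let e' := DerivedCategory.Q.mapIso e
  let T := DerivedCategory.Q.mapTriangle.obj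
    (CochainComplex.mappingCone.triangle (mapcx A f hf hc))
  refine ⟨T.mor₂ ≫ e'.hom, e'.inv ≫ T.mor₃, isomorphic_distinguished _ h _ (Iso.symm
    (Triangle.isoMk T (Triangle.mk (objMap f hf hc) (T.mor₂ ≫ e'.hom) (e'.inv ≫ T.mor₃))
      (Iso.refl _) (Iso.refl _) e' ?_ ?_ ?_))⟩
  · exact (Category.comp_id _).trans (Category.id_comp _).symm
  · exact (Category.id_comp _).symm
  · have h1 : T.mor₃ ≫ (shiftFunctor (DerivedCategory (ModuleCat.{u} A)) (1:ℤ)).map (𝟙 T.obj₁) =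
      T.mor₃ := by rw [CategoryTheory.Functor.map_id, Category.comp_id]
    exact h1.trans (e'.hom_inv_id_assoc T.mor₃).symm
end

variable [HasDerivedCategory.{w} (ModuleCat.{u} A)]

/-- objects isomorphic to strictly perfect complexes -/
def isSC : ObjectProperty (DerivedCategory (ModuleCat.{u} A)) := fun X => ∃ P : SC A, Nonempty (P.obj ≅ X)

theorem isSC_shift (X : DerivedCategory (ModuleCat.{u} A)) (k : ℤ) (h : isSC X) : isSC (X⟦k⟧) := by
  obtain ⟨P, ⟨i⟩⟩ := h
  obtain ⟨e⟩ := shift_obj (B := P.shift k) (P := P) (Equiv.refl _) k (fun i => by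
    change P.deg i - k + k = P.deg i; omega) (fun i j => rfl)
  exact ⟨P.shift k, ⟨e ≪≫ (shiftFunctor _ k).mapIso i⟩⟩

theorem isSC_cone (T : Triangle (DerivedCategory (ModuleCat.{u} A))) (hT : T ∈ distTriang _)
    (h1 : isSC T.obj₁) (h2 : isSC T.obj₂) : isSC T.obj₃ := by
  obtain ⟨P, ⟨i⟩⟩ := h1
  obtain ⟨Q, ⟨j⟩⟩ := h2
  obtain ⟨f, hf, hc, h⟩ := objMap_full (i.hom ≫ T.mor₁ ≫ j.inv)
  obtain ⟨α, β, hab⟩ := cone_triangle hf hc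
  obtain ⟨e, -, -⟩ := exists_iso_of_arrow_iso _ T hab hT (Arrow.isoMk i j (by
    change i.hom ≫ T.mor₁ = objMap f hf hc ≫ j.hom
    rw [h]; simp))
  exact ⟨cone f hf hc, ⟨Triangle.π₃.mapIso e⟩⟩

theorem isSC_ext (T : Triangle (DerivedCategory (ModuleCat.{u} A))) (hT : T ∈ distTriang _)
    (h1 : isSC T.obj₁) (h3 : isSC T.obj₃) : isSC T.obj₂ :=
  isSC_cone _ (inv_rot_of_distTriang _ hT) (isSC_shift _ _ h3) h1

variable (A) in
/-- the unit complex -/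
abbrev unit : SC A where
  ι := Unit
  fin := inferInstance
  dec := inferInstance
  deg _ := 0
  d := 0
  d_sq := by simp
  d_deg _ _ _ := rfl

variable (A) in
theorem unit_obj : Nonempty ((unit A).obj ≅
    (DerivedCategory.singleFunctor (ModuleCat.{u} A) 0).obj (ModuleCat.of A A)) := by
  refine ⟨DerivedCategory.Q.mapIso ?_ ≪≫ ((DerivedCategory.singleFunctorIsoCompQ _ 0).app _).symm⟩
  have hz : ∀ n : ℤ, n ≠ 0 → IsZero (((unit A).cx A).X n) := fun n hn =>
    isZero_X _ _ _ (fun i h => hn h.symm)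
  let e0 : ((unit A).cx A).X 0 ≅ ModuleCat.of A A :=
    ({ toFun := fun v => v ⟨(), rfl⟩
       invFun := fun a _ => a
       map_add' := fun _ _ => rfl
       map_smul' := fun _ _ => rfl
       left_inv := fun v => by funext ⟨⟨⟩, _⟩; rfl
       right_inv := fun a => rfl } : ({i // (unit A).deg i = 0} → A) ≃ₗ[A] A).toModuleIso
  refine HomologicalComplex.Hom.isoOfComponents (fun n => if h : n = 0 then ?_ else ?_) ?_
  · subst h
    exact e0 ≪≫ (HomologicalComplex.singleObjXSelf (ComplexShape.up ℤ) 0 (ModuleCat.of A A)).symm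
  · exact (hz n h).iso (HomologicalComplex.isZero_single_obj_X _ _ _ _ h)
  · intro i j hij
    by_cases hi : i = 0
    · refine (HomologicalComplex.isZero_single_obj_X _ _ _ j ?_).eq_of_tgt _ _
      rintro rfl
      simp at hij; omega
    · exact (hz i hi).eq_of_src _ _

theorem isSC_zero : isSC (0 : DerivedCategory (ModuleCat.{u} A)) := by
  let Z : SC A := { ι := Empty, fin := inferInstance, dec := inferInstance, deg := Empty.elim,
                    d := 0, d_sq := by simp, d_deg := fun _ _ _ => rfl }
  have : IsZero (Z.cx A) := by
    rw [IsZero.iff_id_eq_zero]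
    ext1 n
    exact (Z.isZero_X A n (fun i => i.elim)).eq_of_src _ _
  exact ⟨Z, ⟨(DerivedCategory.Q.map_isZero this).iso (isZero_zero _)⟩⟩

theorem thick_retract : IsThickSubcategory
    {X : DerivedCategory (ModuleCat.{u} A) | isSC.retractClosure X} where
  mem_of_iso e hX := ObjectProperty.prop_of_iso (isSC (A := A)).retractClosure e hX
  zero_mem := ObjectProperty.le_retractClosure _ _ isSC_zero
  shift_mem X n hX := by
    obtain ⟨Y, hY, ⟨r⟩⟩ := hX
    exact ⟨_, isSC_shift Y n hY, ⟨r.map (shiftFunctor _ n)⟩⟩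
  ext₂ T hT h1 h3 := by
    have := ObjectProperty.extensionProduct_retractClosure_retractClosure_le (isSC (A := A)) isSC T.obj₂
      ⟨_, _, _, _, _, hT, h1, h3⟩
    obtain ⟨Y, ⟨X₁, X₃, f, g, h, hT', h1', h3'⟩, r⟩ := this
    exact ⟨Y, isSC_ext _ hT' h1' h3', r⟩
  retract_mem X Y i r h hY := by
    obtain ⟨Z, hZ, ⟨r'⟩⟩ := hY
    exact ⟨Z, hZ, ⟨(Retract.mk i r h).trans r'⟩⟩

theorem obj_cone_mem {X : DerivedCategory (ModuleCat.{u} A)} {P : SC A} (i : X ⟶ P.obj)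
    (r : P.obj ⟶ X) (hir : i ≫ r = 𝟙 X) : ∃ (Z : SC A) (i' : X ⟶ Z.obj) (r' : Z.obj ⟶ X),
      i' ≫ r' = 𝟙 X ∧ ∀ D : Set (DerivedCategory (ModuleCat.{u} A)), IsThickSubcategory D →
        X ∈ D → Z.obj ∈ D := by
  obtain ⟨Y, y, δ, hT⟩ := distinguished_cocone_triangle i
  have hδ : δ = 0 := by
    have h : δ ≫ i⟦(1:ℤ)⟧' = 0 := comp_distTriang_mor_zero₃₁ _ hT
    have h' := congrArg (· ≫ r⟦(1:ℤ)⟧') h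
    simpa [← Functor.map_comp, hir] using h'
  have hy : Epi y := Triangle.epi₂ _ hT hδ
  have hiy : i ≫ y = 0 := comp_distTriang_mor_zero₁₂ _ hT
  have h0 : i ≫ (𝟙 _ - r ≫ i) = 0 := by
    rw [Preadditive.comp_sub, ← Category.assoc, hir]; simp
  obtain ⟨q, hq⟩ : ∃ q, 𝟙 _ - r ≫ i = y ≫ q := Triangle.yoneda_exact₂ _ hT (𝟙 _ - r ≫ i) h0
  have hqy : q ≫ y = 𝟙 _ := by
    rw [← cancel_epi y, ← Category.assoc, ← hq, Preadditive.sub_comp, Category.assoc, hiy]; simp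
  have hqr : q ≫ r = 0 := by
    rw [← cancel_epi y, ← Category.assoc, ← hq, Preadditive.sub_comp, Category.assoc, hir]; simp
  obtain ⟨W, u, δ', hT'⟩ := distinguished_cocone_triangle q
  have hδ' : δ' = 0 := by
    have h : δ' ≫ q⟦(1:ℤ)⟧' = 0 := comp_distTriang_mor_zero₃₁ _ hT'
    have h' := congrArg (· ≫ y⟦(1:ℤ)⟧') h
    simpa [← Functor.map_comp, hqy] using h'
  have hu : Epi u := Triangle.epi₂ _ hT' hδ'
  have hqu : q ≫ u = 0 := comp_distTriang_mor_zero₁₂ _ hT'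
  obtain ⟨r'', hr''⟩ : ∃ r'', r = u ≫ r'' := Triangle.yoneda_exact₂ _ hT' r hqr
  have hW : W ≅ X := ⟨r'', i ≫ u, by
    rw [← cancel_epi u, ← Category.assoc, ← hr'', ← Category.assoc]
    have : r ≫ i = 𝟙 _ - y ≫ q := by rw [← hq]; abel
    rw [this, Preadditive.sub_comp, Category.assoc, hqu]; simp, by
    rw [Category.assoc, ← hr'', hir]⟩
  obtain ⟨f, hf, hc, h⟩ := objMap_full (y ≫ q)
  obtain ⟨α, β, hab⟩ := cone_triangle hf hc
  obtain ⟨r', hr'⟩ : ∃ r', r = α ≫ r' := Triangle.yoneda_exact₂ _ hab r (by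
    change objMap f hf hc ≫ r = 0
    rw [h, Category.assoc, hqr, comp_zero])
  refine ⟨cone f hf hc, i ≫ α, r', by rw [Category.assoc, ← hr', hir], fun D hD hX => ?_⟩
  have := hD.isTriangulated
  have := hD.isClosedUnderIso
  have t1 : ObjectProperty.trW (fun X => X ∈ D) y := ObjectProperty.trW.mk' _ hT hX
  have t2 : ObjectProperty.trW (fun X => X ∈ D) q :=
    ObjectProperty.trW.mk _ hT' (hD.mem_of_iso hW.symm hX)
  have t3 := MorphismProperty.comp_mem _ _ _ t1 t2
  rw [← h] at t3
  exact (ObjectProperty.trW_iff_of_distinguished (fun X => X ∈ D) _ hab).1 t3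

/-- small objects are retracts of strictly perfect complexes in the same thick subcategory -/
theorem exists_SC {X : DerivedCategory (ModuleCat.{u} A)} (hX : IsSmallObject X) :
    ∃ (Z : SC A) (i : X ⟶ Z.obj) (r : Z.obj ⟶ X),
      i ≫ r = 𝟙 X ∧ ∀ D : Set (DerivedCategory (ModuleCat.{u} A)), IsThickSubcategory D →
        X ∈ D → Z.obj ∈ D := by
  obtain ⟨Y, ⟨P, ⟨e⟩⟩, ⟨r⟩⟩ := hX _ thick_retract
    (ObjectProperty.le_retractClosure _ _ ⟨unit A, unit_obj A⟩)
  exact obj_cone_mem (r.i ≫ e.inv) (e.hom ≫ r.r) (by simp)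

end Cone
end SC

namespace SC
section Filt
variable {A : Type u} [CommRing A]

/-- restriction of a complex to a subset of basis elements -/
abbrev restrict (B : SC A) (p : B.ι → Prop) [DecidablePred p]
    (H : ∀ i j k, p i → p j → ¬ p k → B.d i k * B.d k j = 0) : SC A where
  ι := {i // p i}
  fin := inferInstance
  dec := inferInstance
  deg i := B.deg i.1
  d := B.d.submatrix Subtype.val Subtype.val
  d_sq := by
    ext i j
    have h := congrFun (congrFun B.d_sq i.1) j.1
    rw [Matrix.mul_apply] at h ⊢
    simp only [Matrix.submatrix_apply]
    rw [← Finset.sum_subset (Finset.subset_univ (Finset.univ.filter fun i => p i))] at h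
    · rw [Finset.sum_subtype (p := fun i => p i) _ (by simp)] at h
      exact h
    · intro x _ hx
      exact H _ _ _ i.2 j.2 (by simpa using hx)
  d_deg i j h := B.d_deg _ _ h

variable [HasDerivedCategory.{w} (ModuleCat.{u} A)]

theorem mem_of_isEmpty {D : Set (DerivedCategory (ModuleCat.{u} A))}
    (hD : IsThickSubcategory D) (B : SC A) (h : IsEmpty B.ι) : B.obj ∈ D := by
  have : IsZero (B.cx A) := by
    rw [IsZero.iff_id_eq_zero]
    ext1 n
    exact (B.isZero_X A n (fun i => (h.false i).elim)).eq_of_src _ _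
  exact hD.of_isZero (DerivedCategory.Q.map_isZero this)

theorem filtration {D : Set (DerivedCategory (ModuleCat.{u} A))}
    (hD : IsThickSubcategory D) {κ : Type} [DecidableEq κ] (v : κ → ℤ) (s : Finset κ) :
    ∀ (B : SC A) (π : B.ι → κ), (∀ i, π i ∈ s) →
      (∀ i j, B.d i j ≠ 0 → π i = π j ∨ v (π j) < v (π i)) →
      (∀ t, ∀ B' : SC A, ∀ e : B'.ι → B.ι, Function.Injective e → (∀ i, π (e i) = t) →
        (∀ j, π j = t → ∃ i, e i = j) → (∀ i, B'.deg i = B.deg (e i)) →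
        (∀ i j, B'.d i j = B.d (e i) (e j)) → B'.obj ∈ D) → B.obj ∈ D := by
  induction s using Finset.strongInduction with
  | H s ih =>
  intro B π hs hd hf
  rcases s.eq_empty_or_nonempty with rfl | hne
  · exact mem_of_isEmpty hD B ⟨fun i => by simpa using hs i⟩
  obtain ⟨t, hts, ht⟩ := s.exists_max_image v hne
  have h1 : ∀ i j, π j = t → π i ≠ t → B.d i j = 0 := by
    intro i j hj hi
    by_contra h
    rcases hd i j h with h | h
    · exact hi (h.trans hj)
    · rw [hj] at h
      exact absurd (ht _ (hs i)) (not_le.2 h)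
  let P := B.restrict (fun i => π i = t) (fun i j k _ hj hk => by rw [h1 k j hj hk, mul_zero])
  let Q := B.restrict (fun i => ¬ π i = t) (fun i j k hi _ hk => by
    rw [h1 i k (not_not.1 hk) hi, zero_mul])
  let g : Matrix P.ι Q.ι A := fun i j => B.d i.1 j.1
  have hg : IsHom Q P 1 g := fun i j h => B.d_deg _ _ h
  have hc : P.d * g + g * Q.d = 0 := by
    ext i j
    have h := congrFun (congrFun B.d_sq i.1) j.1
    rw [Matrix.mul_apply, ← Equiv.sum_comp (Equiv.sumCompl (fun i => π i = t)),
      Fintype.sum_sum_type] at h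
    rw [Matrix.add_apply, Matrix.mul_apply, Matrix.mul_apply]
    exact h
  have hP : P.obj ∈ D := hf t P Subtype.val Subtype.val_injective (fun i => i.2)
    (fun j hj => ⟨⟨j, hj⟩, rfl⟩) (fun _ => rfl) (fun _ _ => rfl)
  have hQ : Q.obj ∈ D := by
    refine ih (s.erase t) (Finset.erase_ssubset hts) Q (fun i => π i.1) ?_ ?_ ?_
    · exact fun i => Finset.mem_erase.2 ⟨i.2, hs _⟩
    · exact fun i j h => hd _ _ h
    · intro t' B' e he h2 h3 h4 h5
      by_cases htt : t' = t
      · exact mem_of_isEmpty hD B' ⟨fun i => (e i).2 ((h2 i).trans htt)⟩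
      refine hf t' B' (fun i => (e i).1) (Subtype.val_injective.comp he) h2 ?_ h4 h5
      intro j hj
      obtain ⟨i, hi⟩ := h3 ⟨j, fun h => htt (hj.symm.trans h)⟩ hj
      exact ⟨i, congrArg Subtype.val hi⟩
  have key : ∀ i, (block P Q g hg hc).deg i = B.deg (Equiv.sumCompl (fun i => π i = t) i) := by
    rintro (i | i) <;> rfl
  have key2 : ∀ i j, (block P Q g hg hc).d i j = B.d (Equiv.sumCompl (fun i => π i = t) i)
      (Equiv.sumCompl (fun i => π i = t) j) := by
    rintro (i | i) (j | j)
    · rfl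
    · rfl
    · exact (h1 i.1 j.1 j.2 i.2).symm
    · rfl
  refine mem_of_fiber hD (block_mem hg hc hD hP hQ) (Equiv.sumCompl (fun i => π i = t)).symm 0
    (fun i => ?_) 1 (fun i j => ?_)
  · rw [key]; simp
  · rw [key2]; simp

end Filt
end SC

namespace SC
section LA

theorem matrix_contraction {K ι : Type*} [Field K] [Fintype ι] [DecidableEq ι] (d : Matrix ι ι K)
    (hd : d * d = 0) (hex : ∀ v, d.mulVec v = 0 → ∃ w, d.mulVec w = v) :
    ∃ h : Matrix ι ι K, d * h + h * d = 1 := by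
  obtain ⟨h0, hh0⟩ : ∃ h0 : Matrix ι ι K, d * h0 * d = d := by
    let f := Matrix.toLin' d
    obtain ⟨σ, hσ⟩ := f.rangeRestrict.exists_rightInverse_of_surjective
      (LinearMap.range_rangeRestrict f)
    obtain ⟨τ, hτ⟩ := LinearMap.exists_extend σ
    refine ⟨LinearMap.toMatrix' τ, ?_⟩
    apply Matrix.toLin'.injective
    rw [Matrix.toLin'_mul, Matrix.toLin'_mul, Matrix.toLin'_toMatrix']
    ext1 x
    refine LinearMap.ext fun y => ?_
    simp only [LinearMap.comp_apply]
    have h1 : τ (f (LinearMap.single K (fun _ => K) x y)) =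
        σ ⟨f (LinearMap.single K (fun _ => K) x y), LinearMap.mem_range_self _ _⟩ := by
      rw [← hτ]; rfl
    have h2 := LinearMap.congr_fun hσ
      ⟨f (LinearMap.single K (fun _ => K) x y), LinearMap.mem_range_self _ _⟩
    have h3 := congrArg Subtype.val h2
    change f (τ (f _)) = f _
    rw [h1]
    exact h3
  let u := d * h0 + h0 * d
  have hu : (u - 1) * (u - 1) = 0 := by
    have h1 : (u - 1) * d = 0 := by
      simp only [u, sub_mul, add_mul, one_mul, hh0, mul_assoc h0, hd, mul_zero]
      simp
    have h2 : d * (u - 1) = 0 := by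
      simp only [u, mul_sub, mul_add, mul_one, ← mul_assoc, hh0, hd, zero_mul]
      simp
    apply Matrix.toLin'.injective
    rw [map_zero, Matrix.toLin'_mul]
    refine LinearMap.ext fun x => ?_
    rw [LinearMap.comp_apply, Matrix.toLin'_apply, Matrix.toLin'_apply]
    obtain ⟨w, hw⟩ := hex ((u - 1).mulVec x) (by rw [Matrix.mulVec_mulVec, h2, Matrix.zero_mulVec])
    rw [← hw, Matrix.mulVec_mulVec, h1, Matrix.zero_mulVec]; rfl
  have hcomm : d * u = u * d := by
    simp only [u, mul_add, add_mul, ← mul_assoc, hh0, hd, zero_mul]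
    simp only [mul_assoc, hd, mul_zero, add_zero, zero_add]
  refine ⟨(2 - u) * h0, ?_⟩
  have e : d * ((2 - u) * h0) = (2 - u) * (d * h0) := by
    rw [← mul_assoc, ← mul_assoc]
    congr 1
    rw [mul_sub, sub_mul, hcomm, mul_two, two_mul]
  rw [e, mul_assoc, ← mul_add]
  change (2 - u) * u = 1
  have : (u - 1) * (u - 1) = 1 - (2 - u) * u := by noncomm_ring
  rw [hu] at this
  exact (sub_eq_zero.1 this.symm).symm

variable {A : Type u} [CommRing A]

theorem clear_denom (p : Ideal A) [p.IsPrime] {ι : Type*} [Finite ι]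
    (φ : A →+* FractionRing (A ⧸ p))
    (hφ : φ = (algebraMap (A ⧸ p) (FractionRing (A ⧸ p))).comp (Ideal.Quotient.mk p))
    (x : ι → FractionRing (A ⧸ p)) :
    ∃ s ∉ p, ∃ a : ι → A, ∀ i, φ (a i) = φ s * x i := by
  obtain ⟨b, hb⟩ := IsLocalization.exist_integer_multiples_of_finite (nonZeroDivisors (A ⧸ p)) x
  choose c hc using hb
  choose a ha using fun i => Ideal.Quotient.mk_surjective (c i)
  obtain ⟨s, hs⟩ := Ideal.Quotient.mk_surjective (b : A ⧸ p)
  refine ⟨s, ?_, a, fun i => ?_⟩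
  · intro h
    have := nonZeroDivisors.ne_zero b.2
    rw [← hs] at this
    exact this (Ideal.Quotient.eq_zero_iff_mem.2 h)
  · rw [hφ, RingHom.comp_apply, RingHom.comp_apply, ha, hs]
    exact (hc i).trans (Algebra.smul_def _ _)

theorem la_lemma (p : Ideal A) [hp : p.IsPrime] (Y : SC A) (hY : ∀ s ∉ p, ¬ Null Y Y (s • 1)) :
    ∃ v l : Y.ι → A, (∀ i, (Y.d.mulVec v) i ∈ p) ∧ (∀ i, (Matrix.vecMul l Y.d) i ∈ p) ∧
      l ⬝ᵥ v ∉ p := by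
  obtain ⟨φ, hφ⟩ : ∃ φ : A →+* FractionRing (A ⧸ p),
    φ = (algebraMap (A ⧸ p) (FractionRing (A ⧸ p))).comp (Ideal.Quotient.mk p) := ⟨_, rfl⟩
  have hk : ∀ x, φ x = 0 ↔ x ∈ p := fun x => by
    rw [hφ, RingHom.comp_apply, FaithfulSMul.algebraMap_eq_zero_iff, Ideal.Quotient.eq_zero_iff_mem]
  by_contra hcon
  push Not at hcon
  let d' := Y.d.map φ
  have hd' : d' * d' = 0 := by
    rw [← Matrix.map_mul, Y.d_sq]; simp
  obtain ⟨h, hh⟩ := matrix_contraction d' hd' (by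
    intro v hv
    by_contra hw
    have hnot : v ∉ LinearMap.range (Matrix.toLin' d') := by
      rintro ⟨w, hw'⟩
      exact hw ⟨w, hw'⟩
    obtain ⟨g, hg2, hg1⟩ := Submodule.exists_le_ker_of_notMem hnot
    obtain ⟨s, hs, a, ha⟩ := clear_denom p φ hφ v
    obtain ⟨t, ht, l, hl⟩ := clear_denom p φ hφ (fun i => g (Pi.single i 1))
    have hgv : ∀ w, g w = ∑ i, g (Pi.single i 1) * w i := by
      intro w
      conv_lhs => rw [pi_eq_sum_univ' w]
      rw [map_sum]
      exact Finset.sum_congr rfl fun i _ => by rw [map_smul, smul_eq_mul, mul_comm]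
    have hlv : φ (l ⬝ᵥ a) = φ t * φ s * g v := by
      rw [hgv, dotProduct, map_sum, Finset.mul_sum]
      refine Finset.sum_congr rfl fun i _ => ?_
      rw [map_mul, hl, ha]; ring
    have h1 : l ⬝ᵥ a ∈ p := by
      refine hcon a l ?_ ?_
      · intro i
        rw [← hk]
        have := congrFun hv i
        rw [Matrix.mulVec, dotProduct] at this ⊢
        rw [map_sum]
        simp only [map_mul, ha]
        have h2 : ∑ x, φ (Y.d i x) * (φ s * v x) = φ s * ∑ x, d' i x * v x := by
          rw [Finset.mul_sum]
          refine Finset.sum_congr rfl fun x _ => ?_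
          simp only [d', Matrix.map_apply]; ring
        rw [h2, this]; simp
      · intro i
        rw [← hk, Matrix.vecMul, dotProduct, map_sum]
        simp only [map_mul, hl]
        have h2 := hg1 (LinearMap.mem_range_self (Matrix.toLin' d') (Pi.single i 1))
        rw [LinearMap.mem_ker, hgv] at h2
        have h3 : ∑ x, φ t * g (Pi.single x 1) * φ (Y.d x i) =
            φ t * ∑ x, g (Pi.single x 1) * (Matrix.toLin' d') (Pi.single i 1) x := by
          rw [Finset.mul_sum]
          refine Finset.sum_congr rfl fun x _ => ?_
          rw [Matrix.toLin'_apply, Matrix.mulVec_single_one]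
          simp only [d', Matrix.col_apply, Matrix.map_apply]; ring
        rw [h3, h2, mul_zero]
    rw [← hk, hlv] at h1
    refine mul_ne_zero (mul_ne_zero ?_ ?_) hg2 h1
    · rwa [Ne, hk]
    · rwa [Ne, hk])
  obtain ⟨s, hs, H, hH⟩ := clear_denom p φ hφ (fun x : Y.ι × Y.ι => h x.1 x.2)
  let H' : Matrix Y.ι Y.ι A := Matrix.of fun i j => H (i, j)
  have hH' : H'.map φ = φ s • h := by
    ext i j
    simp only [H', Matrix.map_apply, Matrix.of_apply, hH, Matrix.smul_apply, smul_eq_mul]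
  let M := Y.d * H' + H' * Y.d
  have hM : M.map φ = φ s • 1 := by
    have : M.map φ = d' * H'.map φ + H'.map φ * d' := by
      simp only [M, d', ← Matrix.map_mul]
      exact Matrix.map_add _ (map_add φ) _ _
    rw [this, hH', ← hh, Matrix.mul_smul, Matrix.smul_mul, smul_add]
  have hMd : Commute M Y.d := by
    change M * Y.d = Y.d * M
    simp only [M, add_mul, mul_add, ← mul_assoc, Y.d_sq, zero_mul]
    simp only [mul_assoc, Y.d_sq, mul_zero, add_zero, zero_add]
  let q := M.charpoly.divX
  let c := M.charpoly.coeff 0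
  have hq : Polynomial.aeval M q * M + algebraMap A _ c = 0 := by
    have h1 := M.aeval_self_charpoly
    rw [← Polynomial.divX_mul_X_add M.charpoly] at h1
    simpa using h1
  have hc : c ∉ p := by
    intro hc
    have h1 : M.det ∈ p := by
      rw [Matrix.det_eq_sign_charpoly_coeff]
      exact p.mul_mem_left _ hc
    rw [← hk, RingHom.map_det] at h1
    have h2 : φ.mapMatrix M = φ s • 1 := hM
    rw [h2, Matrix.det_smul, Matrix.det_one, mul_one] at h1
    exact hs ((hk s).1 (eq_zero_of_pow_eq_zero h1))
  have hqd : Commute (Polynomial.aeval M q) Y.d :=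
    (Algebra.commute_of_mem_adjoin_singleton_of_commute
      (Polynomial.aeval_mem_adjoin_singleton A M) hMd.symm).symm
  have hqM : Commute (Polynomial.aeval M q) M :=
    (Algebra.commute_of_mem_adjoin_self
      (Polynomial.aeval_mem_adjoin_singleton A M)).symm
  refine hY c hc ⟨-(H' * Polynomial.aeval M q), ?_⟩
  have h1 : c • (1 : Matrix Y.ι Y.ι A) = - (M * Polynomial.aeval M q) := by
    rw [← hqM.eq, ← Algebra.algebraMap_eq_smul_one]
    exact eq_neg_of_add_eq_zero_right hq
  rw [h1]
  simp only [M, add_mul, mul_neg, neg_mul, mul_assoc, hqd.eq]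
  abel

end LA
end SC

namespace SC
section GF
variable {A : Type u} [CommRing A] [HasDerivedCategory.{w} (ModuleCat.{u} A)]

theorem objMap_comp {P Q S : SC A} {f : Matrix Q.ι P.ι A} {g : Matrix S.ι Q.ι A}
    (hf : IsHom P Q 0 f) (hcf : Q.d * f = f * P.d) (hg : IsHom Q S 0 g) (hcg : S.d * g = g * Q.d)
    (h1 : IsHom P S 0 (g * f)) (h2 : S.d * (g * f) = (g * f) * P.d) :
    objMap f hf hcf ≫ objMap g hg hcg = objMap (g * f) h1 h2 := by
  rw [objMap, objMap, objMap, ← Functor.map_comp]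
  congr 1
  ext1 n
  rw [HomologicalComplex.comp_f, mapcx_f, mapcx_f, mapcx_f, am_comp hf n n n (by simp)]

/-- functors on strict complexes together with a natural transformation from the identity with
cone in `D` -/
structure GoodFun (D : Set (DerivedCategory (ModuleCat.{u} A))) where
  F : SC A → SC A
  map : ∀ {P Q : SC A}, Matrix Q.ι P.ι A → Matrix (F Q).ι (F P).ι A
  tw : ∀ {P Q : SC A}, Matrix Q.ι P.ι A → Matrix (F Q).ι (F P).ι A
  map_sub : ∀ {P Q : SC A} (f g : Matrix Q.ι P.ι A), map (f - g) = map f - map g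
  map_one_smul : ∀ (P : SC A) (s : A), map (s • (1 : Matrix P.ι P.ι A)) = s • 1
  map_chain : ∀ {P Q : SC A} (f : Matrix Q.ι P.ι A), Q.d * f = f * P.d →
    (F Q).d * map f = map f * (F P).d
  map_mem : ∀ {P Q : SC A} (f : Matrix Q.ι P.ι A) (I : Ideal A), (∀ i j, f i j ∈ I) →
    ∀ i j, map f i j ∈ I
  tw_eq : ∀ {P Q : SC A} (h : Matrix Q.ι P.ι A),
    (F Q).d * tw h + tw h * (F P).d = map (Q.d * h + h * P.d)
  η : ∀ P : SC A, Matrix (F P).ι P.ι A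
  η_hom : ∀ P, IsHom P (F P) 0 (η P)
  η_chain : ∀ P, (F P).d * η P = η P * P.d
  η_nat : ∀ {P Q : SC A} (f : Matrix Q.ι P.ι A), map f * η P = η Q * f
  η_trW : ∀ P, ObjectProperty.trW (fun X => X ∈ D) (objMap (η P) (η_hom P) (η_chain P))

/-- the identity -/
def GoodFun.id {D : Set (DerivedCategory (ModuleCat.{u} A))} (hD : IsThickSubcategory D) :
    GoodFun D where
  F P := P
  map f := f
  tw f := f
  map_sub _ _ := rfl
  map_one_smul _ _ := rfl
  map_chain _ h := h
  map_mem _ _ h := h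
  tw_eq _ := rfl
  η P := 1
  η_hom P := isHom_one P
  η_chain P := by rw [mul_one, one_mul]
  η_nat f := by rw [Matrix.mul_one, Matrix.one_mul]
  η_trW P := by
    have := hD.isTriangulated
    have := hD.isClosedUnderIso
    have : IsIso (mapcx A (1 : Matrix P.ι P.ι A) (isHom_one P) (by rw [mul_one, one_mul])) :=
      isoOfMat _ 1 _ _ (isHom_one P) (one_mul 1) (one_mul 1) A
    rw [objMap]
    exact ObjectProperty.trW_of_isIso _ _

/-- composition -/
def GoodFun.comp {D : Set (DerivedCategory (ModuleCat.{u} A))} (hD : IsThickSubcategory D)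
    (G₁ G₂ : GoodFun D) : GoodFun D where
  F P := G₁.F (G₂.F P)
  map f := G₁.map (G₂.map f)
  tw f := G₁.tw (G₂.tw f)
  map_sub _ _ := by rw [G₂.map_sub, G₁.map_sub]
  map_one_smul _ _ := by rw [G₂.map_one_smul, G₁.map_one_smul]
  map_chain _ h := G₁.map_chain _ (G₂.map_chain _ h)
  map_mem _ _ h := G₁.map_mem _ _ (G₂.map_mem _ _ h)
  tw_eq _ := by rw [G₁.tw_eq, G₂.tw_eq]
  η P := G₁.η (G₂.F P) * G₂.η P
  η_hom P := (G₂.η_hom P).mul (G₁.η_hom _) rfl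
  η_chain P := by
    rw [← Matrix.mul_assoc, G₁.η_chain, Matrix.mul_assoc, G₂.η_chain, Matrix.mul_assoc]
  η_nat f := by
    rw [← Matrix.mul_assoc, G₁.η_nat, Matrix.mul_assoc, G₂.η_nat, Matrix.mul_assoc]
  η_trW P := by
    have := hD.isTriangulated
    have := hD.isClosedUnderIso
    rw [← objMap_comp (G₂.η_hom P) (G₂.η_chain P) (G₁.η_hom _) (G₁.η_chain _)]
    exact MorphismProperty.comp_mem _ _ _ (G₂.η_trW P) (G₁.η_trW _)

variable {D : Set (DerivedCategory (ModuleCat.{u} A))} (hD : IsThickSubcategory D)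

/-- `η` is null-homotopic modulo `I` -/
def Smod (D : Set (DerivedCategory (ModuleCat.{u} A))) (X : SC A) (I : Ideal A) : Prop :=
  ∃ (G : GoodFun D) (h : Matrix (G.F X).ι X.ι A),
    ∀ i j, (G.η X - ((G.F X).d * h + h * X.d)) i j ∈ I

theorem Smod.mono {X : SC A} {I J : Ideal A} (h : Smod D X I) (hIJ : I ≤ J) : Smod D X J := by
  obtain ⟨G, h, hh⟩ := h
  exact ⟨G, h, fun i j => hIJ (hh i j)⟩

end GF
end SC

namespace SC
section Zorn
variable {A : Type u} [CommRing A]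

theorem prod_alg {X W Z : Type*} [Fintype X] [Fintype W] [Fintype Z]
    {dX : Matrix X X A} {dW : Matrix W W A} {dZ : Matrix Z Z A}
    {m M t : Matrix Z W A} {e h : Matrix W X A} (hM : dZ * M = M * dW) (hc : dW * e = e * dX)
    (hm : m - M = dZ * t + t * dW) :
    m * e - (dZ * (t * e + M * h) + (t * e + M * h) * dX) = M * (e - (dW * h + h * dX)) := by
  have h1 : m = M + (dZ * t + t * dW) := by rw [← hm]; abel
  subst h1
  simp only [Matrix.mul_add, Matrix.add_mul, Matrix.mul_sub, Matrix.mul_assoc, hc]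
  rw [← Matrix.mul_assoc dZ M h, hM, Matrix.mul_assoc]
  abel

theorem prime_alg {X W Z : Type*} [Fintype X] [Fintype W] [Fintype Z]
    {dX : Matrix X X A} {dW : Matrix W W A} {dZ : Matrix Z Z A}
    {m k : Matrix Z W A} {e h g E' : Matrix W X A} {s : A} (hM : dZ * m = m * dW)
    (hE : e - (dW * h + h * dX) = s • g + E') :
    m * e - (dZ * (m * h + k * g) + (m * h + k * g) * dX) =
      (s • m - (dZ * k + k * dW)) * g + m * E' + k * (dW * g - g * dX) := by
  have h1 : e = s • g + E' + (dW * h + h * dX) := by rw [← hE]; abel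
  subst h1
  simp only [Matrix.mul_add, Matrix.add_mul, Matrix.mul_sub, Matrix.sub_mul, Matrix.mul_assoc,
    Matrix.smul_mul, Matrix.mul_smul]
  rw [← Matrix.mul_assoc dZ m h, hM, Matrix.mul_assoc]
  abel

theorem mul_mem_ideal {X W Z : Type*} [Fintype W] (f : Matrix Z W A) (g : Matrix W X A)
    (I J : Ideal A) (hf : ∀ i j, f i j ∈ I) (hg : ∀ i j, g i j ∈ J) (i : Z) (j : X) :
    (f * g) i j ∈ I * J := by
  rw [Matrix.mul_apply]
  exact Ideal.sum_mem _ fun x _ => Ideal.mul_mem_mul (hf _ _) (hg _ _)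

theorem mul_mem_left' {X W Z : Type*} [Fintype W] (f : Matrix Z W A) (g : Matrix W X A)
    (J : Ideal A) (hg : ∀ i j, g i j ∈ J) (i : Z) (j : X) :
    (f * g) i j ∈ J := by
  rw [Matrix.mul_apply]
  exact Ideal.sum_mem _ fun x _ => J.mul_mem_left _ (hg _ _)

theorem mul_mem_right' {X W Z : Type*} [Fintype W] (f : Matrix Z W A) (g : Matrix W X A)
    (J : Ideal A) (hf : ∀ i j, f i j ∈ J) (i : Z) (j : X) :
    (f * g) i j ∈ J := by
  rw [Matrix.mul_apply]
  exact Ideal.sum_mem _ fun x _ => J.mul_mem_right _ (hf _ _)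

variable [HasDerivedCategory.{w} (ModuleCat.{u} A)]
variable {D : Set (DerivedCategory (ModuleCat.{u} A))}

theorem Smod.mul (hD : IsThickSubcategory D) {X : SC A} {I J : Ideal A} (hI : Smod D X I)
    (hJ : Smod D X J) : Smod D X (J * I) := by
  obtain ⟨G₁, h₁, hh₁⟩ := hI
  obtain ⟨G₂, h₂, hh₂⟩ := hJ
  have hch : (G₂.F X).d * (G₂.η X - ((G₂.F X).d * h₂ + h₂ * X.d)) =
      (G₂.η X - ((G₂.F X).d * h₂ + h₂ * X.d)) * X.d := by
    simp only [Matrix.mul_sub, Matrix.sub_mul, Matrix.mul_add, Matrix.add_mul, Matrix.mul_assoc,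
      G₂.η_chain, X.d_sq]
    simp only [← Matrix.mul_assoc, (G₂.F X).d_sq, Matrix.zero_mul, Matrix.mul_zero, zero_add,
      add_zero]
  refine ⟨GoodFun.comp hD G₁ G₂, G₁.tw h₂ * G₁.η X +
    G₁.map (G₂.η X - ((G₂.F X).d * h₂ + h₂ * X.d)) * h₁, ?_⟩
  have key := prod_alg (h := h₁) (G₁.map_chain _ hch) (G₁.η_chain X) (m := G₁.map (G₂.η X))
    (t := G₁.tw h₂) (by
      rw [G₁.map_sub, G₁.tw_eq, sub_sub_cancel])
  rw [G₁.η_nat] at key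
  intro i j
  refine (congrFun (congrFun key i) j) ▸ ?_
  exact mul_mem_ideal _ _ _ _ (G₁.map_mem _ _ hh₂) hh₁ i j

theorem Smod.top (hD : IsThickSubcategory D) (X : SC A) : Smod D X ⊤ :=
  ⟨GoodFun.id hD, 0, fun _ _ => trivial⟩

theorem Smod.bot (hD : IsThickSubcategory D) (X : SC A) (h : Smod D X ⊥) : X.obj ∈ D := by
  obtain ⟨G, h, hh⟩ := h
  have h1 : G.η X = (G.F X).d * h + h * X.d := by
    ext i j
    have := hh i j
    rw [Ideal.mem_bot, Matrix.sub_apply, sub_eq_zero] at this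
    exact this
  have h2 := G.η_trW X
  rw [(objMap_eq_zero_iff _ (G.η_hom X) (G.η_chain X)).2 ⟨h, h1⟩] at h2
  exact hD.of_zero_cone h2

theorem Smod.prime_step (hD : IsThickSubcategory D) (X : SC A) (p : Ideal A) [hp : p.IsPrime]
    (s : A) (hs : s ∉ p) (h : Smod D X (Ideal.span {s} ⊔ p))
    (hk : ∀ G : GoodFun D, ∃ (G' : GoodFun D) (k : Matrix (G'.F (G.F X)).ι (G.F X).ι A),
      ∀ i j, (s • G'.η (G.F X) - ((G'.F (G.F X)).d * k + k * (G.F X).d)) i j ∈ p) :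
    Smod D X p := by
  obtain ⟨G, h, hh⟩ := h
  obtain ⟨G', k, hk⟩ := hk G
  simp only [Ideal.mem_span_singleton_sup] at hh
  choose g e he hge using hh
  have hE : G.η X - ((G.F X).d * h + h * X.d) = s • Matrix.of g + Matrix.of e := by
    ext i j
    rw [← hge i j, Matrix.add_apply, Matrix.smul_apply, Matrix.of_apply, Matrix.of_apply,
      smul_eq_mul, mul_comm]
  have hch : (G.F X).d * (G.η X - ((G.F X).d * h + h * X.d)) =
      (G.η X - ((G.F X).d * h + h * X.d)) * X.d := by
    simp only [Matrix.mul_sub, Matrix.sub_mul, Matrix.mul_add, Matrix.add_mul, Matrix.mul_assoc,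
      G.η_chain, X.d_sq]
    simp only [← Matrix.mul_assoc, (G.F X).d_sq, Matrix.zero_mul, Matrix.mul_zero, zero_add,
      add_zero]
  rw [hE] at hch
  have hg : ∀ i j, ((G.F X).d * Matrix.of g - Matrix.of g * X.d) i j ∈ p := by
    intro i j
    have h1 : s • ((G.F X).d * Matrix.of g - Matrix.of g * X.d) =
        Matrix.of e * X.d - (G.F X).d * Matrix.of e := by
      rw [Matrix.mul_add, Matrix.add_mul, Matrix.mul_smul, Matrix.smul_mul] at hch
      rw [smul_sub, sub_eq_sub_iff_add_eq_add, hch, add_comm]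
    have h2 := congrFun (congrFun h1 i) j
    rw [Matrix.smul_apply, smul_eq_mul] at h2
    refine (hp.mem_or_mem (x := s) ?_).resolve_left hs
    rw [h2, Matrix.sub_apply]
    exact p.sub_mem (mul_mem_right' _ _ _ he i j) (mul_mem_left' _ _ _ he i j)
  refine ⟨GoodFun.comp hD G' G, G'.η (G.F X) * h + k * Matrix.of g, fun i j => ?_⟩
  have key := prime_alg (k := k) (G'.η_chain (G.F X)) hE
  refine (congrFun (congrFun key i) j) ▸ ?_
  exact p.add_mem (p.add_mem (mul_mem_right' _ _ _ hk i j) (mul_mem_left' _ _ _ he i j))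
    (mul_mem_left' _ _ _ hg i j)

theorem Smod.exists_prime (hD : IsThickSubcategory D) (X : SC A) (h : ¬ Smod D X ⊥) :
    ∃ p : Ideal A, p.IsPrime ∧ ¬ Smod D X p ∧ ∀ s ∉ p, Smod D X (Ideal.span {s} ⊔ p) := by
  obtain ⟨p, -, hp⟩ := zorn_le_nonempty₀ {I : Ideal A | ¬ Smod D X I} (by
    intro c hc hch y hy
    refine ⟨sSup c, ?_, fun z hz => le_sSup hz⟩
    rintro ⟨G, h, hh⟩
    let J : Ideal A := Ideal.span (Set.range fun x : (G.F X).ι × X.ι =>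
      (G.η X - ((G.F X).d * h + h * X.d)) x.1 x.2)
    have hJ : J.FG := Submodule.fg_span (Set.finite_range _)
    obtain ⟨I, hI, hJI⟩ := (CompleteLattice.isCompactElement_iff_le_of_directed_sSup_le (Ideal A) J).1
      ((Submodule.fg_iff_compact J).1 hJ) c ⟨y, hy⟩ hch.directedOn (by
        rw [Ideal.span_le]
        rintro _ ⟨x, rfl⟩
        exact hh _ _)
    exact hc hI ⟨G, h, fun i j => hJI (Ideal.subset_span ⟨(i, j), rfl⟩)⟩) ⊥ h
  have hmax : ∀ s ∉ p, Smod D X (Ideal.span {s} ⊔ p) := by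
    intro s hs
    by_contra hcon
    exact hs (hp.2 hcon le_sup_right (Ideal.mem_sup_left (Ideal.mem_span_singleton_self s)))
  refine ⟨p, ⟨?_, ?_⟩, hp.1, hmax⟩
  · rintro rfl
    exact hp.1 (Smod.top hD X)
  · intro x y hxy
    by_contra! hcon
    refine hp.1 ((Smod.mul hD (hmax x hcon.1) (hmax y hcon.2)).mono ?_)
    rw [Ideal.mul_le]
    intro r hr t ht
    obtain ⟨a, b, hb, rfl⟩ := Ideal.mem_span_singleton_sup.1 hr
    obtain ⟨a', b', hb', rfl⟩ := Ideal.mem_span_singleton_sup.1 ht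
    have : (a * y + b) * (a' * x + b') = a * a' * (x * y) + (a' * x + b') * b + (a * y) * b' := by ring
    rw [this]
    exact p.add_mem (p.add_mem (p.mul_mem_left _ hxy) (p.mul_mem_left _ hb)) (p.mul_mem_left _ hb')

end Zorn
end SC

namespace SC
section Tens
open scoped Kronecker
variable {A : Type u} [CommRing A]

/-- row tensor -/
def rr {E W W' : Type*} (γ : E → A) (m : Matrix W' W A) : Matrix W' (E × W) A :=
  Matrix.of fun w x => γ x.1 * m w x.2

/-- column tensor -/
def kr {E W W' : Type*} (b : E → A) (m : Matrix W W' A) : Matrix (E × W) W' A :=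
  Matrix.of fun x w => b x.1 * m x.2 w

section rrkr
variable {E E' W W' W'' : Type*} [Fintype E] [Fintype W] [Fintype W']

theorem rr_mul (γ : E → A) (m : Matrix W' W A) (M : Matrix E E' A) (N : Matrix W W'' A) :
    rr γ m * (M ⊗ₖ N) = rr (Matrix.vecMul γ M) (m * N) := by
  ext w x
  simp only [rr, Matrix.mul_apply, Matrix.of_apply, Matrix.kroneckerMap_apply, Matrix.vecMul,
    dotProduct, Fintype.sum_prod_type, Finset.sum_mul_sum]
  exact Finset.sum_congr rfl fun _ _ => Finset.sum_congr rfl fun _ _ => by ring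

theorem mul_rr (γ : E' → A) (m : Matrix W' W A) (n : Matrix W'' W' A) :
    n * rr γ m = rr γ (n * m) := by
  ext w x
  simp only [rr, Matrix.mul_apply, Matrix.of_apply, Finset.mul_sum]
  exact Finset.sum_congr rfl fun _ _ => by ring

theorem mul_kr (b : E → A) (m : Matrix W W'' A) (M : Matrix E' E A) (N : Matrix W' W A) :
    (M ⊗ₖ N) * kr b m = kr (M.mulVec b) (N * m) := by
  ext x w
  simp only [kr, Matrix.mul_apply, Matrix.of_apply, Matrix.kroneckerMap_apply, Matrix.mulVec,
    dotProduct, Fintype.sum_prod_type, Finset.sum_mul_sum]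
  exact Finset.sum_congr rfl fun _ _ => Finset.sum_congr rfl fun _ _ => by ring

theorem kr_mul (b : E' → A) (m : Matrix W W' A) (n : Matrix W' W'' A) :
    kr b m * n = kr b (m * n) := by
  ext w x
  simp only [kr, Matrix.mul_apply, Matrix.of_apply, Finset.mul_sum]
  exact Finset.sum_congr rfl fun _ _ => by ring

theorem rr_kr (γ b : E → A) (m : Matrix W' W A) (n : Matrix W W'' A) :
    rr γ m * kr b n = (γ ⬝ᵥ b) • (m * n) := by
  ext w x
  simp only [kr, rr, Matrix.mul_apply, Matrix.of_apply, Matrix.smul_apply, smul_eq_mul,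
    dotProduct, Fintype.sum_prod_type, Finset.sum_mul_sum]
  exact Finset.sum_congr rfl fun _ _ => Finset.sum_congr rfl fun _ _ => by ring

theorem rr_add (γ γ' : E' → A) (m : Matrix W W' A) : rr (γ + γ') m = rr γ m + rr γ' m := by
  ext; simp [rr, add_mul]
theorem rr_neg (γ : E' → A) (m : Matrix W W' A) : rr (-γ) m = - rr γ m := by
  ext; simp [rr]
theorem rr_zero (m : Matrix W W' A) : rr (0 : E' → A) m = 0 := by
  ext; simp [rr]
theorem kr_neg (γ : E' → A) (m : Matrix W W' A) : kr (-γ) m = - kr γ m := by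
  ext; simp [kr]

end rrkr

/-- sign matrix -/
def sgn (E : SC A) : Matrix E.ι E.ι A := Matrix.diagonal fun i => (((E.deg i).negOnePow : ℤ) : A)

theorem sgn_sq (E : SC A) : sgn E * sgn E = 1 := by
  rw [sgn, Matrix.diagonal_mul_diagonal]
  simp only [← Int.cast_mul, ← Units.val_mul, Int.units_mul_self]
  simp

theorem sgn_d (E : SC A) : sgn E * E.d = - (E.d * sgn E) := by
  ext i j
  rw [sgn, Matrix.neg_apply, Matrix.mul_diagonal, Matrix.diagonal_mul]
  by_cases h : E.deg i = E.deg j + 1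
  · rw [h, Int.negOnePow_succ]; push_cast; ring
  · rw [E.d_deg i j h]; simp

/-- tensor product -/
abbrev tens (E W : SC A) : SC A where
  ι := E.ι × W.ι
  fin := inferInstance
  dec := inferInstance
  deg x := E.deg x.1 + W.deg x.2
  d := E.d ⊗ₖ 1 + sgn E ⊗ₖ W.d
  d_sq := by
    rw [Matrix.mul_add, Matrix.add_mul, Matrix.add_mul]
    simp only [← Matrix.mul_kronecker_mul, Matrix.one_mul, Matrix.mul_one, E.d_sq, W.d_sq, sgn_d]
    ext; simp
  d_deg x y h := by
    rw [Matrix.add_apply, Matrix.kroneckerMap_apply, Matrix.kroneckerMap_apply]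
    have h1 : E.d x.1 y.1 * (1 : Matrix W.ι W.ι A) x.2 y.2 = 0 := by
      by_cases h2 : x.2 = y.2
      · rw [E.d_deg, zero_mul]
        intro h3
        rw [h2, h3] at h
        exact h (by ring)
      · rw [Matrix.one_apply_ne h2, mul_zero]
    have h2 : sgn E x.1 y.1 * W.d x.2 y.2 = 0 := by
      by_cases h2 : x.1 = y.1
      · rw [W.d_deg, mul_zero]
        intro h3
        rw [h2, h3] at h
        exact h (by ring)
      · rw [sgn, Matrix.diagonal_apply_ne _ h2, zero_mul]
    rw [h1, h2, add_zero]

variable (E : SC A) (γ : E.ι → A) (hγ : ∀ e, E.deg e ≠ -1 → γ e = 0)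
  (hγd : Matrix.vecMul γ E.d = 0)

theorem vecMul_sgn {E : SC A} {γ : E.ι → A} (hγ : ∀ e, E.deg e ≠ -1 → γ e = 0) :
    Matrix.vecMul γ (sgn E) = -γ := by
  ext e
  rw [sgn, Matrix.vecMul_diagonal]
  by_cases h : E.deg e = -1
  · rw [h]; simp
  · simp [hγ e h]

theorem mulVec_sgn {E : SC A} {γ : E.ι → A} (hγ : ∀ e, E.deg e ≠ -1 → γ e = 0) :
    Matrix.mulVec (sgn E) γ = -γ := by
  ext e
  rw [sgn, Matrix.mulVec_diagonal]
  by_cases h : E.deg e = -1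
  · rw [h]; simp
  · simp [hγ e h]

theorem tens_hg {E : SC A} {γ : E.ι → A} (hγ : ∀ e, E.deg e ≠ -1 → γ e = 0) (W : SC A) :
    IsHom (tens E W) W 1 (rr γ (1 : Matrix W.ι W.ι A)) := by
  intro w x h
  change γ x.1 * (1 : Matrix W.ι W.ι A) w x.2 = 0
  by_cases h1 : w = x.2
  · rw [hγ, zero_mul]
    intro h2
    apply h
    change W.deg w = E.deg x.1 + W.deg x.2 + 1
    rw [h1, h2]; ring
  · rw [Matrix.one_apply_ne h1, mul_zero]

theorem tens_hc {E : SC A} {γ : E.ι → A} (hγ : ∀ e, E.deg e ≠ -1 → γ e = 0)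
    (hγd : Matrix.vecMul γ E.d = 0) (W : SC A) :
    W.d * rr γ (1 : Matrix W.ι W.ι A) + rr γ (1 : Matrix W.ι W.ι A) * (tens E W).d = 0 := by
  change W.d * rr γ (1 : Matrix W.ι W.ι A) + rr γ (1 : Matrix W.ι W.ι A) *
    (E.d ⊗ₖ 1 + sgn E ⊗ₖ W.d) = 0
  rw [Matrix.mul_add, rr_mul, rr_mul, mul_rr, vecMul_sgn hγ, hγd, rr_neg, rr_zero]
  simp

variable [HasDerivedCategory.{w} (ModuleCat.{u} A)]

theorem kron_sub {E W W' : Type*} [DecidableEq E] (f g : Matrix W W' A) :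
    (1 : Matrix E E A) ⊗ₖ (f - g) = 1 ⊗ₖ f - 1 ⊗ₖ g := by
  ext; simp [mul_sub]

/-- the endofunctor built from `E` -/
noncomputable def tensFun {D : Set (DerivedCategory (ModuleCat.{u} A))}
    (hE : ∀ W, (tens E W).obj ∈ D) : GoodFun D where
  F W := block W (tens E W) (rr γ 1) (tens_hg hγ W) (tens_hc hγ hγd W)
  map {P Q} f := Matrix.fromBlocks f 0 0 ((1 : Matrix E.ι E.ι A) ⊗ₖ f)
  tw {P Q} h := Matrix.fromBlocks h 0 0 (sgn E ⊗ₖ h)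
  map_sub {P Q} f g := by
    change Matrix.fromBlocks (f - g) 0 0 ((1 : Matrix E.ι E.ι A) ⊗ₖ (f - g)) =
      Matrix.fromBlocks f 0 0 ((1 : Matrix E.ι E.ι A) ⊗ₖ f) -
      Matrix.fromBlocks g 0 0 ((1 : Matrix E.ι E.ι A) ⊗ₖ g)
    rw [kron_sub]
    ext (i | i) (j | j) <;> simp
  map_one_smul P s := by
    change Matrix.fromBlocks (s • 1) 0 0 ((1 : Matrix E.ι E.ι A) ⊗ₖ (s • (1 : Matrix P.ι P.ι A))) =
      s • (1 : Matrix (P.ι ⊕ E.ι × P.ι) (P.ι ⊕ E.ι × P.ι) A)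
    rw [Matrix.kronecker_smul, Matrix.one_kronecker_one, ← Matrix.fromBlocks_one,
      Matrix.fromBlocks_smul, smul_zero, smul_zero]
  map_chain {P Q} f h := by
    change Matrix.fromBlocks Q.d (rr γ 1) 0 (E.d ⊗ₖ 1 + sgn E ⊗ₖ Q.d) *
      Matrix.fromBlocks f 0 0 ((1 : Matrix E.ι E.ι A) ⊗ₖ f) =
      Matrix.fromBlocks f 0 0 ((1 : Matrix E.ι E.ι A) ⊗ₖ f) *
      Matrix.fromBlocks P.d (rr γ 1) 0 (E.d ⊗ₖ 1 + sgn E ⊗ₖ P.d)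
    rw [Matrix.fromBlocks_multiply, Matrix.fromBlocks_multiply]
    simp only [rr_mul, mul_rr, Matrix.mul_add, Matrix.add_mul, ← Matrix.mul_kronecker_mul, h,
      Matrix.mul_zero, Matrix.zero_mul, Matrix.mul_one, Matrix.one_mul, Matrix.vecMul_one,
      zero_add, add_zero]
  map_mem {P Q} f I h := by
    rintro (i | i) (j | j)
    · exact h i j
    · exact I.zero_mem
    · exact I.zero_mem
    · exact I.mul_mem_left _ (h _ _)
  tw_eq {P Q} h := by
    change Matrix.fromBlocks Q.d (rr γ 1) 0 (E.d ⊗ₖ 1 + sgn E ⊗ₖ Q.d) *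
      Matrix.fromBlocks h 0 0 (sgn E ⊗ₖ h) +
      Matrix.fromBlocks h 0 0 (sgn E ⊗ₖ h) *
      Matrix.fromBlocks P.d (rr γ 1) 0 (E.d ⊗ₖ 1 + sgn E ⊗ₖ P.d) =
      Matrix.fromBlocks (Q.d * h + h * P.d) 0 0 ((1 : Matrix E.ι E.ι A) ⊗ₖ (Q.d * h + h * P.d))
    rw [Matrix.fromBlocks_multiply, Matrix.fromBlocks_multiply, Matrix.fromBlocks_add]
    simp only [rr_mul, mul_rr, Matrix.mul_add, Matrix.add_mul, ← Matrix.mul_kronecker_mul,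
      vecMul_sgn hγ, rr_neg, sgn_sq, sgn_d,
      Matrix.mul_zero, Matrix.zero_mul, Matrix.mul_one, Matrix.one_mul, Matrix.vecMul_one,
      zero_add, add_zero, neg_add_cancel, Matrix.kronecker_add]
    congr 1
    have : (-(E.d * sgn E)) ⊗ₖ h = - ((E.d * sgn E) ⊗ₖ h) := by ext; simp
    rw [this]
    abel
  η P := i₁ (tens_hg hγ P) (tens_hc hγ hγd P)
  η_hom P := isHom_i₁ _ _
  η_chain P := blockIn_comm _ _
  η_nat {P Q} f := by
    change Matrix.fromBlocks f 0 0 ((1 : Matrix E.ι E.ι A) ⊗ₖ f) *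
      (Matrix.fromRows 1 0 : Matrix (P.ι ⊕ E.ι × P.ι) P.ι A) =
      (Matrix.fromRows 1 0 : Matrix (Q.ι ⊕ E.ι × Q.ι) Q.ι A) * f
    rw [Matrix.fromBlocks_mul_fromRows, Matrix.fromRows_mul]
    simp
  η_trW P := block_trW _ _ (hE P)

theorem tensFun_k {D : Set (DerivedCategory (ModuleCat.{u} A))}
    (hE : ∀ W, (tens E W).obj ∈ D) (p : Ideal A) (s : A) (b : E.ι → A)
    (hb : ∀ e, E.deg e ≠ -1 → b e = 0) (hbd : ∀ e, (E.d.mulVec b) e ∈ p)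
    (hs : s - γ ⬝ᵥ b ∈ p) (W : SC A) :
    ∃ k : Matrix ((tensFun E γ hγ hγd hE).F W).ι W.ι A,
      ∀ i j, (s • (tensFun E γ hγ hγd hE).η W -
        (((tensFun E γ hγ hγd hE).F W).d * k + k * W.d)) i j ∈ p := by
  refine ⟨(Matrix.fromRows 0 (kr b 1) : Matrix (W.ι ⊕ E.ι × W.ι) W.ι A), ?_⟩
  have key : s • (Matrix.fromRows 1 0 : Matrix (W.ι ⊕ E.ι × W.ι) W.ι A) -
    (Matrix.fromBlocks W.d (rr γ 1) 0 (E.d ⊗ₖ 1 + sgn E ⊗ₖ W.d) *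
      (Matrix.fromRows 0 (kr b 1) : Matrix (W.ι ⊕ E.ι × W.ι) W.ι A) +
      (Matrix.fromRows 0 (kr b 1) : Matrix (W.ι ⊕ E.ι × W.ι) W.ι A) * W.d) =
    Matrix.fromRows ((s - γ ⬝ᵥ b) • 1) (- kr (E.d.mulVec b) 1) := by
    rw [Matrix.fromBlocks_mul_fromRows, Matrix.fromRows_mul, rr_kr, kr_mul, Matrix.add_mul, mul_kr,
      mul_kr, mulVec_sgn hb]
    simp only [Matrix.mul_one, Matrix.one_mul, Matrix.zero_mul, Matrix.mul_zero, kr_neg, zero_add,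
      sub_smul]
    ext (i | i) j <;> simp
  intro i j
  have h2 := congrFun (congrFun key i) j
  refine h2 ▸ ?_
  rcases i with i | i
  · exact p.mul_mem_right _ hs
  · exact p.neg_mem (p.mul_mem_right _ (hbd _))

end Tens
end SC

namespace SC
section Thomason
open scoped Kronecker
set_option linter.unusedSectionVars false
variable {A : Type u} [CommRing A]

theorem sgn_dT (E : SC A) : E.d.transpose * sgn E = - (sgn E * E.d.transpose) := by
  have h := congrArg Matrix.transpose (sgn_d E)
  rw [Matrix.transpose_mul, Matrix.transpose_neg, Matrix.transpose_mul, sgn,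
    Matrix.diagonal_transpose] at h
  exact h

/-- the (shifted) endomorphism complex -/
abbrev endo (Y : SC A) : SC A where
  ι := Y.ι × Y.ι
  fin := inferInstance
  dec := inferInstance
  deg x := - Y.deg x.1 + Y.deg x.2 - 1
  d := (sgn Y * Y.d.transpose) ⊗ₖ 1 + sgn Y ⊗ₖ Y.d
  d_sq := by
    have h1 : sgn Y * Y.d.transpose * (sgn Y * Y.d.transpose) = 0 := by
      rw [Matrix.mul_assoc, ← Matrix.mul_assoc Y.d.transpose, sgn_dT, Matrix.neg_mul,
        Matrix.mul_assoc, ← Matrix.transpose_mul, Y.d_sq]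
      simp
    have h2 : sgn Y * Y.d.transpose * sgn Y = - (sgn Y * (sgn Y * Y.d.transpose)) := by
      rw [Matrix.mul_assoc, sgn_dT, Matrix.mul_neg]
    rw [Matrix.mul_add, Matrix.add_mul, Matrix.add_mul]
    simp only [← Matrix.mul_kronecker_mul, Matrix.one_mul, Matrix.mul_one, h1, Y.d_sq, h2]
    ext; simp
  d_deg x y h := by
    rw [Matrix.add_apply, Matrix.kroneckerMap_apply, Matrix.kroneckerMap_apply]
    have h1 : (sgn Y * Y.d.transpose) x.1 y.1 * (1 : Matrix Y.ι Y.ι A) x.2 y.2 = 0 := by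
      by_cases h2 : x.2 = y.2
      · rw [sgn, Matrix.diagonal_mul, Matrix.transpose_apply, Y.d_deg, mul_zero, zero_mul]
        intro h3
        rw [h2, h3] at h
        exact h (by ring)
      · rw [Matrix.one_apply_ne h2, mul_zero]
    have h2 : sgn Y x.1 y.1 * Y.d x.2 y.2 = 0 := by
      by_cases h2 : x.1 = y.1
      · rw [Y.d_deg, mul_zero]
        intro h3
        rw [h2, h3] at h
        exact h (by ring)
      · rw [sgn, Matrix.diagonal_apply_ne _ h2, zero_mul]
    rw [h1, h2, add_zero]

/-- the trace row -/
def tr (Y : SC A) : (endo Y).ι → A := fun x => (1 : Matrix Y.ι Y.ι A) x.1 x.2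

theorem tr_deg (Y : SC A) (e : (endo Y).ι) (h : (endo Y).deg e ≠ -1) : tr Y e = 0 := by
  refine Matrix.one_apply_ne ?_
  intro h1
  apply h
  change - Y.deg e.1 + Y.deg e.2 - 1 = -1
  rw [h1]; ring

theorem tr_kron {ι : Type*} [Fintype ι] [DecidableEq ι] (M N : Matrix ι ι A) :
    Matrix.vecMul (fun x : ι × ι => (1 : Matrix ι ι A) x.1 x.2) (M ⊗ₖ N) =
      fun x => (M.transpose * N) x.1 x.2 := by
  ext x
  simp only [Matrix.vecMul, dotProduct, Fintype.sum_prod_type, Matrix.kroneckerMap_apply,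
    Matrix.mul_apply, Matrix.transpose_apply, Matrix.one_apply]
  simp

theorem tr_d (Y : SC A) : Matrix.vecMul (tr Y) (endo Y).d = 0 := by
  have : Matrix.vecMul (fun x : Y.ι × Y.ι => (1 : Matrix Y.ι Y.ι A) x.1 x.2)
    ((sgn Y * Y.d.transpose) ⊗ₖ 1 + sgn Y ⊗ₖ Y.d) = 0 := by
    rw [Matrix.vecMul_add, tr_kron, tr_kron]
    ext x
    rw [Pi.add_apply, Matrix.transpose_mul, Matrix.transpose_transpose, Matrix.mul_one]
    have h2 : (sgn Y).transpose = sgn Y := by rw [sgn, Matrix.diagonal_transpose]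
    rw [h2, sgn_d]
    simp
  exact this

theorem endo_b (Y : SC A) (p : Ideal A) (v l : Y.ι → A) (hv : ∀ i, (Y.d.mulVec v) i ∈ p)
    (hl : ∀ i, (Matrix.vecMul l Y.d) i ∈ p) :
    ∃ b : (endo Y).ι → A, (∀ e, (endo Y).deg e ≠ -1 → b e = 0) ∧
      (∀ e, ((endo Y).d.mulVec b) e ∈ p) ∧ tr Y ⬝ᵥ b = l ⬝ᵥ v := by
  let b₀ : (endo Y).ι → A := fun x => l x.1 * v x.2
  have h0 : ∀ e, ((endo Y).d.mulVec b₀) e ∈ p := by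
    intro e
    have h1 : ((endo Y).d.mulVec b₀) e = ((sgn Y * Y.d.transpose).mulVec l) e.1 * v e.2 +
        ((sgn Y).mulVec l) e.1 * (Y.d.mulVec v) e.2 := by
      have h2 : ∀ M N : Matrix Y.ι Y.ι A, (M ⊗ₖ N).mulVec b₀ e = M.mulVec l e.1 * N.mulVec v e.2 := by
        intro M N
        simp only [Matrix.mulVec, dotProduct, Fintype.sum_prod_type, Matrix.kroneckerMap_apply, b₀,
          Finset.sum_mul_sum]
        exact Finset.sum_congr rfl fun _ _ => Finset.sum_congr rfl fun _ _ => by ring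
      have h3 : ((sgn Y * Y.d.transpose) ⊗ₖ 1 + sgn Y ⊗ₖ Y.d).mulVec b₀ e =
        ((sgn Y * Y.d.transpose).mulVec l) e.1 * v e.2 +
        ((sgn Y).mulVec l) e.1 * (Y.d.mulVec v) e.2 := by
        rw [Matrix.add_mulVec, Pi.add_apply, h2, h2, Matrix.one_mulVec]
      exact h3
    rw [h1, ← Matrix.mulVec_mulVec, Matrix.mulVec_transpose, sgn, Matrix.mulVec_diagonal]
    exact p.add_mem (p.mul_mem_right _ (p.mul_mem_left _ (hl _))) (p.mul_mem_left _ (hv _))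
  refine ⟨fun e => if (endo Y).deg e = -1 then b₀ e else 0, fun e he => if_neg he, ?_, ?_⟩
  · intro e
    by_cases he : (endo Y).deg e = 0
    · have : (endo Y).d.mulVec (fun e => if (endo Y).deg e = -1 then b₀ e else 0) e =
          (endo Y).d.mulVec b₀ e := by
        rw [Matrix.mulVec, Matrix.mulVec, dotProduct, dotProduct]
        refine Finset.sum_congr rfl fun x _ => ?_
        by_cases hx : (endo Y).deg x = -1
        · rw [if_pos hx]
        · rw [(endo Y).d_deg e x (by omega), zero_mul, zero_mul]
      rw [this]
      exact h0 e
    · rw [Matrix.mulVec, dotProduct]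
      refine Ideal.sum_mem _ fun x _ => ?_
      by_cases hx : (endo Y).deg x = -1
      · rw [(endo Y).d_deg e x (by omega), zero_mul]; exact p.zero_mem
      · rw [if_neg hx, mul_zero]; exact p.zero_mem
  · have h1 : tr Y ⬝ᵥ (fun e => if (endo Y).deg e = -1 then b₀ e else 0) = tr Y ⬝ᵥ b₀ := by
      rw [dotProduct, dotProduct]
      refine Finset.sum_congr rfl fun x _ => ?_
      by_cases hx : (endo Y).deg x = -1
      · rw [if_pos hx]
      · rw [tr_deg Y x hx, zero_mul, zero_mul]
    rw [h1]
    have h2 : (fun x : Y.ι × Y.ι => (1 : Matrix Y.ι Y.ι A) x.1 x.2) ⬝ᵥ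
        (fun x : Y.ι × Y.ι => l x.1 * v x.2) = l ⬝ᵥ v := by
      simp only [dotProduct, Fintype.sum_prod_type, Matrix.one_apply]
      simp
    exact h2

variable [HasDerivedCategory.{w} (ModuleCat.{u} A)]
variable {D : Set (DerivedCategory (ModuleCat.{u} A))}

theorem tens_endo_d (Y W : SC A) (x y : (tens (endo Y) W).ι) : (tens (endo Y) W).d x y =
    ((((Y.deg x.1.1).negOnePow : ℤ) : A) * Y.d y.1.1 x.1.1 * (1 : Matrix Y.ι Y.ι A) x.1.2 y.1.2 +
      sgn Y x.1.1 y.1.1 * Y.d x.1.2 y.1.2) * (1 : Matrix W.ι W.ι A) x.2 y.2 +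
    sgn (endo Y) x.1 y.1 * W.d x.2 y.2 := by
  change (((sgn Y * Y.d.transpose) ⊗ₖ 1 + sgn Y ⊗ₖ Y.d) ⊗ₖ 1 + sgn (endo Y) ⊗ₖ W.d :
    Matrix ((Y.ι × Y.ι) × W.ι) ((Y.ι × Y.ι) × W.ι) A) x y = _
  rw [Matrix.add_apply, Matrix.kroneckerMap_apply, Matrix.kroneckerMap_apply, Matrix.add_apply,
    Matrix.kroneckerMap_apply, Matrix.kroneckerMap_apply, sgn, Matrix.diagonal_mul,
    Matrix.transpose_apply]

theorem tens_endo_mem (hD : IsThickSubcategory D) (Y W : SC A) (hY : Y.obj ∈ D) :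
    (tens (endo Y) W).obj ∈ D := by
  refine filtration hD (κ := Y.ι × W.ι) (fun x => - Y.deg x.1 + W.deg x.2) Finset.univ _
    (fun x => (x.1.1, x.2)) (fun _ => Finset.mem_univ _) ?_ ?_
  · rintro ⟨⟨a, b⟩, w⟩ ⟨⟨a', b'⟩, w'⟩ h
    rw [tens_endo_d] at h
    by_contra! hcon
    apply h
    obtain ⟨h1, h2⟩ := hcon
    simp only [Ne, Prod.mk.injEq, not_and] at h1 h2 ⊢
    have e1 : (((Y.deg a).negOnePow : ℤ) : A) * Y.d a' a * (1 : Matrix Y.ι Y.ι A) b b' *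
        (1 : Matrix W.ι W.ι A) w w' = 0 := by
      by_cases hw : w = w'
      · subst hw
        rw [Y.d_deg a' a (by omega)]; simp
      · rw [Matrix.one_apply_ne hw, mul_zero]
    have e2 : sgn Y a a' * Y.d b b' * (1 : Matrix W.ι W.ι A) w w' = 0 := by
      by_cases ha : a = a'
      · rw [Matrix.one_apply_ne (h1 ha), mul_zero]
      · rw [sgn, Matrix.diagonal_apply_ne _ ha]; simp
    have e3 : sgn (endo Y) (a, b) (a', b') * W.d w w' = 0 := by
      by_cases ha : (a, b) = (a', b')
      · obtain ⟨rfl, rfl⟩ := Prod.mk.inj ha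
        rw [W.d_deg w w' (by omega), mul_zero]
      · rw [sgn, Matrix.diagonal_apply_ne _ ha, zero_mul]
    rw [add_mul, e1, e2, e3]; simp
  · rintro ⟨a, w⟩ B e he h1 h2 h3 h4
    have h1' : ∀ i, (e i).1.1 = a ∧ (e i).2 = w := fun i => Prod.mk.inj (h1 i)
    let φ : B.ι ≃ Y.ι := Equiv.ofBijective (fun i => (e i).1.2) ⟨fun i j hij => he (by
        refine Prod.ext (Prod.ext ?_ hij) ?_
        · rw [(h1' i).1, (h1' j).1]
        · rw [(h1' i).2, (h1' j).2]), fun y => by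
        obtain ⟨i, hi⟩ := h2 ((a, y), w) rfl
        exact ⟨i, congrArg (fun z => z.1.2) hi⟩⟩
    refine mem_of_fiber hD hY φ (Y.deg a + 1 - W.deg w) (fun i => ?_) (Y.deg a).negOnePow
      (fun i j => ?_)
    · rw [h3]
      change - Y.deg (e i).1.1 + Y.deg (e i).1.2 - 1 + W.deg (e i).2 + _ = Y.deg (e i).1.2
      rw [(h1' i).1, (h1' i).2]; ring
    · rw [h4, tens_endo_d, (h1' i).1, (h1' i).2, (h1' j).1, (h1' j).2, Y.d_deg a a (by omega),
        W.d_deg w w (by omega), Matrix.one_apply_eq, sgn, Matrix.diagonal_apply_eq]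
      simp only [mul_zero, zero_mul, zero_add, add_zero, mul_one, zsmul_eq_mul]
      rfl

/-- Thomason's theorem, ring case -/
theorem thomason (hD : IsThickSubcategory D) (X : SC A)
    (hX : ∀ p : Ideal A, p.IsPrime → (∀ s ∉ p, ¬ Null X X (s • 1)) →
      ∃ Y : SC A, Y.obj ∈ D ∧ ∀ s ∉ p, ¬ Null Y Y (s • 1)) : X.obj ∈ D := by
  refine Smod.bot hD X ?_
  by_contra hcon
  obtain ⟨p, hp, hnp, hmax⟩ := Smod.exists_prime hD X hcon
  apply hnp
  by_cases hA : ∀ s ∉ p, ¬ Null X X (s • 1)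
  · obtain ⟨Y, hY, hYp⟩ := hX p hp hA
    obtain ⟨v, l, hv, hl, hs⟩ := la_lemma p Y hYp
    obtain ⟨b, hb1, hb2, hb3⟩ := endo_b Y p v l hv hl
    refine Smod.prime_step hD X p (l ⬝ᵥ v) hs (hmax _ hs) fun G => ?_
    refine ⟨tensFun (endo Y) (tr Y) (tr_deg Y) (tr_d Y) (fun W => tens_endo_mem hD Y W hY), ?_⟩
    exact tensFun_k (endo Y) (tr Y) (tr_deg Y) (tr_d Y) _ p _ b hb1 hb2 (by
      rw [hb3, sub_self]; exact p.zero_mem) _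
  · push Not at hA
    obtain ⟨s, hs, k, hk⟩ := hA
    refine Smod.prime_step hD X p s hs (hmax _ hs) fun G => ⟨GoodFun.id hD, G.tw k, ?_⟩
    have h1 : s • (1 : Matrix (G.F X).ι (G.F X).ι A) -
        ((G.F X).d * G.tw k + G.tw k * (G.F X).d) = 0 := by
      rw [G.tw_eq, ← hk, G.map_one_smul, sub_self]
    intro i j
    have h2 := congrFun (congrFun h1 i) j
    exact h2 ▸ p.zero_mem

end Thomason
end SC

namespace SC
section Surj
set_option linter.unusedSectionVars false
variable {A : Type u} [CommRing A]

theorem homologyMap_smul_id (K : CochainComplex (ModuleCat.{u} A) ℤ) (s : A) (n : ℤ) :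
    HomologicalComplex.homologyMap (s • 𝟙 K) n = s • 𝟙 (K.homology n) := by
  have h : ShortComplex.homologyMap (s • 𝟙 (K.sc n)) = s • 𝟙 (K.homology n) := by
    rw [ShortComplex.homologyMap_smul, ShortComplex.homologyMap_id]
    rfl
  exact h

theorem short_kill (S : ShortComplex (ModuleCat.{u} A)) (s : A)
    (hs : ∀ x : S.homology, s • x = 0) (z : S.X₂) (hz : S.g z = 0) : ∃ y, S.f y = s • z := by
  let e : S.homology ≅ ModuleCat.of A (LinearMap.ker S.g.hom ⧸ LinearMap.range S.moduleCatToCycles) :=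
    S.moduleCatHomologyIso
  have h1 : ∀ x : (LinearMap.ker S.g.hom ⧸ LinearMap.range S.moduleCatToCycles), s • x = 0 := by
    intro x
    have := congrArg e.toLinearEquiv (hs (e.toLinearEquiv.symm x))
    rw [map_smul, LinearEquiv.apply_symm_apply, map_zero] at this
    exact this
  have h2 := h1 (Submodule.Quotient.mk ⟨z, hz⟩)
  rw [← Submodule.Quotient.mk_smul, Submodule.Quotient.mk_eq_zero] at h2
  obtain ⟨y, hy⟩ := h2
  exact ⟨y, congrArg Subtype.val hy⟩

theorem cx_kill (P : SC A) (s : A) (n : ℤ) (hs : ∀ x : (P.cx A).homology n, s • x = 0)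
    (f : P.ι → A) (hf : ∀ i, P.deg i ≠ n → f i = 0) (hd : P.d.mulVec f = 0) :
    ∃ h : P.ι → A, P.d.mulVec h = s • f := by
  let e := HomologicalComplex.isoSc' (P.cx A) (n - 1) n (n + 1) (by simp) (by simp)
  have hs' : ∀ x : ((P.cx A).sc' (n-1) n (n+1)).homology, s • x = 0 := by
    intro x
    let ε := (ShortComplex.homologyMapIso e).toLinearEquiv
    have hs0 : ∀ x : ((P.cx A).sc n).homology, s • x = 0 := hs
    have := congrArg ε (hs0 (ε.symm x))
    rw [map_smul, LinearEquiv.apply_symm_apply, map_zero] at this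
    exact this
  let z : {i // P.deg i = n} → A := fun i => f i.1
  have hz : act A P.d n (n+1) z = 0 := by
    funext j
    rw [act_apply']
    have := congrFun hd j.1
    rw [Matrix.mulVec, dotProduct] at this
    refine Eq.trans (Finset.sum_congr rfl fun i _ => ?_) this
    split_ifs with h
    · rfl
    · rw [hf i h]; simp
  obtain ⟨y, hy⟩ := short_kill _ s hs' z (by
    have : ((P.cx A).d n (n+1)) z = 0 := by
      rw [cx_d]
      exact hz
    exact this)
  let y' : {i // P.deg i = n - 1} → A := y
  have hy' : act A P.d (n-1) n y' = s • z := by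
    have : ((P.cx A).d (n-1) n) y = s • z := hy
    rw [cx_d] at this
    exact this
  refine ⟨fun i => if h : P.deg i = n - 1 then y' ⟨i, h⟩ else 0, ?_⟩
  ext j
  by_cases hj : P.deg j = n
  · have := congrFun hy' ⟨j, hj⟩
    rw [act_apply'] at this
    exact this
  · rw [Pi.smul_apply, hf j hj, smul_zero, Matrix.mulVec, dotProduct]
    refine Finset.sum_eq_zero fun i _ => ?_
    split_ifs with h
    · rw [P.d_deg _ _ (by omega), zero_mul]
    · rw [mul_zero]

variable [HasDerivedCategory.{w} (ModuleCat.{u} A)]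

theorem smul_homology_zero (X : DerivedCategory (ModuleCat.{u} A)) (s : A) (h : s • 𝟙 X = 0) (n : ℤ)
    (x : (DerivedCategory.homologyFunctor (ModuleCat.{u} A) n).obj X) : s • x = 0 := by
  let K := DerivedCategory.Q.objPreimage X
  let e : DerivedCategory.Q.obj K ≅ X := DerivedCategory.Q.objObjPreimageIso X
  have h1 : DerivedCategory.Q.map (s • 𝟙 K) = 0 := by
    rw [Functor.map_smul, CategoryTheory.Functor.map_id, ← e.hom_inv_id]
    have : s • (e.hom ≫ e.inv) = e.hom ≫ (s • 𝟙 X) ≫ e.inv := by simp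
    rw [this, h]; simp
  have h2 : s • 𝟙 (K.homology n) = 0 := by
    rw [← homologyMap_smul_id]
    have nat := (DerivedCategory.homologyFunctorFactors (ModuleCat.{u} A) n).hom.naturality (s • 𝟙 K)
    rw [Functor.comp_map, h1, Functor.map_zero, zero_comp] at nat
    exact (cancel_epi ((DerivedCategory.homologyFunctorFactors (ModuleCat.{u} A) n).hom.app K)).1
      (nat.symm.trans comp_zero.symm)
  let ε : (DerivedCategory.homologyFunctor (ModuleCat.{u} A) n).obj X ≅ K.homology n :=
    (DerivedCategory.homologyFunctor (ModuleCat.{u} A) n).mapIso e.symm ≪≫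
      (DerivedCategory.homologyFunctorFactors (ModuleCat.{u} A) n).app K
  apply ε.toLinearEquiv.injective
  rw [map_smul, map_zero]
  exact congrArg (fun g : K.homology n ⟶ K.homology n => g (ε.toLinearEquiv x)) h2

/-- objects all of whose maps to shifts of `V` are killed by a power of `s` -/
theorem thick_kill (V : DerivedCategory (ModuleCat.{u} A)) (s : A) : IsThickSubcategory
    {X : DerivedCategory (ModuleCat.{u} A) | ∀ k : ℤ, ∃ N : ℕ, ∀ ψ : X ⟶ V⟦k⟧, s ^ N • ψ = 0} where
  mem_of_iso {X Y} e hX k := by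
    obtain ⟨N, hN⟩ := hX k
    refine ⟨N, fun ψ => ?_⟩
    have := hN (e.hom ≫ ψ)
    rw [← Linear.comp_smul] at this
    exact (cancel_epi e.hom).1 (this.trans comp_zero.symm)
  zero_mem k := ⟨0, fun ψ => (isZero_zero _).eq_of_src _ _⟩
  shift_mem X n hX k := by
    obtain ⟨N, hN⟩ := hX (k + -n)
    refine ⟨N, fun ψ => ?_⟩
    apply (shiftFunctor _ (-n)).map_injective
    rw [Functor.map_zero, Functor.map_smul]
    let α : X ⟶ (X⟦n⟧)⟦-n⟧ := (shiftFunctorCompIsoId _ n (-n) (by simp)).inv.app X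
    let β : (V⟦k⟧)⟦-n⟧ ⟶ V⟦k + -n⟧ := (shiftFunctorAdd _ k (-n)).inv.app V
    haveI : IsIso α := by dsimp only [α]; infer_instance
    haveI : IsIso β := by dsimp only [β]; infer_instance
    have := hN (α ≫ ψ⟦-n⟧' ≫ β)
    rw [← Linear.comp_smul, ← Linear.smul_comp] at this
    have h2 := (cancel_epi α).1 (this.trans comp_zero.symm)
    exact (cancel_mono β).1 (h2.trans zero_comp.symm)
  ext₂ T hT h1 h3 k := by
    obtain ⟨N, hN⟩ := h1 k
    obtain ⟨M, hM⟩ := h3 k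
    refine ⟨M + N, fun ψ => ?_⟩
    obtain ⟨φ, hφ⟩ := Triangle.yoneda_exact₂ _ hT (s ^ N • ψ) (by
      rw [Linear.comp_smul]; exact hN _)
    rw [pow_add, mul_smul, hφ, ← Linear.comp_smul, hM, comp_zero]
  retract_mem X Y i r hir hY k := by
    obtain ⟨N, hN⟩ := hY k
    refine ⟨N, fun ψ => ?_⟩
    have := hN (r ≫ ψ)
    rw [← Category.id_comp ψ, ← hir, Category.assoc, ← Linear.comp_smul, this, comp_zero]

theorem kill_unit (P : SC A) (s : A) (hs : ∀ (n : ℤ) (x : (P.cx A).homology n), s • x = 0) (k : ℤ)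
    (ψ : (unit A).obj ⟶ P.obj⟦k⟧) : s • ψ = 0 := by
  obtain ⟨e⟩ := shift_obj (B := P.shift k) (P := P) (Equiv.refl _) k (fun i => by
    change P.deg i - k + k = _; simp) (fun i j => rfl)
  obtain ⟨f, hf, hc, h⟩ := objMap_full (ψ ≫ e.inv)
  have hf' : IsHom (unit A) (P.shift k) 0 (s • f) := fun j i h => by
    rw [Matrix.smul_apply, hf j i h, smul_zero]
  have hc' : (P.shift k).d * (s • f) = (s • f) * (unit A).d := by
    rw [Matrix.mul_smul, hc, Matrix.smul_mul]
  have h1 : objMap (s • f) hf' hc' = s • objMap f hf hc := by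
    have : mapcx A (s • f) hf' hc' = s • mapcx A f hf hc := by
      ext1 n
      rw [mapcx_f, am_smul]; rfl
    unfold objMap
    rw [this, Functor.map_smul]
  have hnull : Null (unit A) (P.shift k) (s • f) := by
    have hd : P.d.mulVec (fun i => f i ()) = 0 := by
      have h3 : ((k.negOnePow : ℤˣ) : ℤ) • (P.d * f) = 0 := by
        rw [← Matrix.smul_mul]
        exact hc.trans (Matrix.mul_zero f)
      have h4 : P.d * f = 0 := by
        have := congrArg (fun m => ((k.negOnePow : ℤˣ) : ℤ) • m) h3
        simp only [smul_smul, ← Units.val_mul, Int.units_mul_self, smul_zero, Units.val_one,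
          one_smul] at this
        exact this
      funext i
      exact congrFun (congrFun h4 i) ()
    obtain ⟨g, hg⟩ := cx_kill P s k (hs k) (fun i => f i ()) (fun i hi => hf i () (by
      change P.deg i - k ≠ 0 + 0
      omega)) hd
    refine ⟨((k.negOnePow : ℤˣ) : ℤ) • Matrix.of fun i _ => g i, ?_⟩
    have h5 : (((k.negOnePow : ℤˣ) : ℤ) • P.d) * (((k.negOnePow : ℤˣ) : ℤ) •
        (Matrix.of fun i _ => g i : Matrix P.ι Unit A)) = s • f := by
      rw [Matrix.smul_mul, Matrix.mul_smul, smul_smul, ← Units.val_mul, Int.units_mul_self, Units.val_one, one_smul]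
      ext i ⟨⟩
      exact congrFun hg i
    have h6 : (((k.negOnePow : ℤˣ) : ℤ) • (Matrix.of fun i _ => g i : Matrix P.ι Unit A)) *
      (unit A).d = 0 := Matrix.mul_zero _
    exact (h5.symm.trans (add_zero _).symm).trans (congrArg _ h6.symm)
  rw [(objMap_eq_zero_iff _ hf' hc').2 hnull, h, ← Linear.smul_comp] at h1
  exact (cancel_mono e.inv).1 (h1.symm.trans zero_comp.symm)

theorem exists_pow_null (P : SC A) (hP : IsSmallObject P.obj) (s : A)
    (hs : ∀ (n : ℤ) (x : (P.cx A).homology n), s • x = 0) : ∃ N : ℕ, Null P P (s ^ N • 1) := by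
  obtain ⟨N, hN⟩ := hP _ (thick_kill P.obj s) ((thick_kill P.obj s).mem_of_iso (unit_obj A).some
    (fun k => ⟨1, fun ψ => by rw [pow_one]; exact kill_unit P s hs k ψ⟩)) 0
  refine ⟨N, (null_smul_one_iff P _).1 ?_⟩
  have h1 := hN ((shiftFunctorZero _ ℤ).inv.app P.obj)
  have : s ^ N • 𝟙 P.obj = (s ^ N • (shiftFunctorZero _ ℤ).inv.app P.obj) ≫
      (shiftFunctorZero _ ℤ).hom.app P.obj := by
    rw [Linear.smul_comp]; simp
  rw [this, h1, zero_comp]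

end Surj
end SC


section Surj2
set_option linter.unusedSectionVars false

theorem short_homology_mem {B : Type u} [Ring B] {C : Set (ModuleCat.{u} B)} (hC : IsWideSubcategory C)
    (S : ShortComplex (ModuleCat.{u} B)) (h₁ : S.X₁ ∈ C) (h₂ : S.X₂ ∈ C) (h₃ : S.X₃ ∈ C) :
    S.homology ∈ C := by
  have hc : S.cycles ∈ C := hC.mem_of_iso
    ((limit.isLimit (parallelPair S.g 0)).conePointUniqueUpToIso S.cyclesIsKernel)
    (hC.kernel_mem S.g h₂ h₃)
  exact hC.mem_of_iso
    ((colimit.isColimit (parallelPair S.toCycles 0)).coconePointUniqueUpToIso S.homologyIsCokernel)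
    (hC.cokernel_mem S.toCycles h₁ hc)

variable {A : Type u} [CommRing A]

theorem annihilator_le_of_iso {M N : ModuleCat.{u} A} (e : M ≅ N) :
    Module.annihilator A M ≤ Module.annihilator A N :=
  e.toLinearEquiv.annihilator_eq.le

theorem isWide_support (hR : IsLeftCoherentRing A) (Z : Set (Ideal A)) : IsWideSubcategory
    {M : ModuleCat.{u} A | M ∈ finPresModules A ∧
      ∀ p : Ideal A, p.IsPrime → Module.annihilator A M ≤ p → p ∈ Z} where
  mem_of_iso {X Y} e hX := ⟨(isWide_finPres hR).mem_of_iso e hX.1, fun p hp h =>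
    hX.2 p hp ((annihilator_le_of_iso e).trans h)⟩
  kernel_mem {X Y} f hX hY := ⟨(isWide_finPres hR).kernel_mem f hX.1 hY.1, fun p hp h =>
    hX.2 p hp ((LinearMap.annihilator_le_of_injective (kernel.ι f).hom
      ((ModuleCat.mono_iff_injective _).1 inferInstance)).trans h)⟩
  cokernel_mem {X Y} f hX hY := ⟨(isWide_finPres hR).cokernel_mem f hX.1 hY.1, fun p hp h =>
    hY.2 p hp ((LinearMap.annihilator_le_of_surjective (cokernel.π f).hom
      ((ModuleCat.epi_iff_surjective _).1 inferInstance)).trans h)⟩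
  extension_mem S hS h1 h3 := ⟨(isWide_finPres hR).extension_mem S hS h1.1 h3.1, fun p hp h => by
    have hle : Module.annihilator A S.X₁ * Module.annihilator A S.X₃ ≤ p := by
      refine le_trans (Ideal.mul_le.2 fun r hr s hs => ?_) h
      rw [Module.mem_annihilator] at hr hs ⊢
      intro x
      have hx : S.g (s • x) = 0 := by rw [map_smul]; exact hs _
      obtain ⟨y, hy⟩ := (ShortComplex.ShortExact.moduleCat_exact_iff_function_exact S).1 hS.exact
        (s • x) |>.1 hx
      rw [mul_smul, ← hy]
      change r • S.f y = 0
      rw [← map_smul, hr, map_zero]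
    rcases hp.mul_le.1 hle with h' | h'
    · exact h1.2 p hp h'
    · exact h3.2 p hp h'⟩

variable [HasDerivedCategory.{w} (ModuleCat.{u} A)]

namespace SC

/-- homology of `P.obj` -/
noncomputable def homIso (P : SC A) (n : ℤ) :
    (DerivedCategory.homologyFunctor (ModuleCat.{u} A) n).obj P.obj ≅ (P.cx A).homology n :=
  (DerivedCategory.homologyFunctorFactors (ModuleCat.{u} A) n).app (P.cx A)

theorem cx_X_fp (P : SC A) (N : Type u) [AddCommGroup N] [Module A N]
    [Module.FinitePresentation A N] (n : ℤ) : (P.cx N).X n ∈ finPresModules A := by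
  have h : Module.FinitePresentation A ({i // P.deg i = n} → N) := by
    have : Finite {i // P.deg i = n} := inferInstance
    infer_instance
  exact h

theorem homology_fp (hR : IsLeftCoherentRing A) (P : SC A) (N : Type u) [AddCommGroup N] [Module A N]
    [Module.FinitePresentation A N] (n : ℤ) : (P.cx N).homology n ∈ finPresModules A :=
  short_homology_mem (isWide_finPres hR) _ (P.cx_X_fp N _) (P.cx_X_fp N _) (P.cx_X_fp N _)

theorem small_homology_fp (hR : IsLeftCoherentRing A) {X : DerivedCategory (ModuleCat.{u} A)}
    (hX : IsSmallObject X) (n : ℤ) :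
    (DerivedCategory.homologyFunctor (ModuleCat.{u} A) n).obj X ∈ finPresModules A := by
  have hw := isWide_finPres hR
  have ht := isThick_homology hw ⟨ModuleCat.of A A, Module.finitePresentation_of_projective A A⟩
  have : Module.FinitePresentation A A := Module.finitePresentation_of_projective A A
  exact hX _ ht (ht.mem_of_iso (unit_obj A).some
    fun m => hw.mem_of_iso ((unit A).homIso m).symm (homology_fp hR (unit A) A m)) n

theorem exists_kill (P : SC A) (p : Ideal A) [p.IsPrime]
    (h : ∀ n, ∃ s ∉ p, ∀ x : (P.cx A).homology n, s • x = 0) :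
    ∃ s ∉ p, ∀ n, ∀ x : (P.cx A).homology n, s • x = 0 := by
  choose s hs hk using h
  refine ⟨∏ i, s (P.deg i), ?_, fun n x => ?_⟩
  · rw [‹p.IsPrime›.prod_mem_iff]
    push Not
    exact fun i _ => hs _
  · by_cases hn : ∃ i, P.deg i = n
    · obtain ⟨i, rfl⟩ := hn
      rw [← Finset.prod_erase_mul _ _ (Finset.mem_univ i), mul_smul, hk, smul_zero]
    · push Not at hn
      have hz : IsZero ((P.cx A).homology n) :=
        ShortComplex.isZero_homology_of_isZero_X₂ _ (P.isZero_X A n hn)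
      have := ModuleCat.subsingleton_of_isZero hz
      exact Subsingleton.elim _ _

theorem surj (hR : IsLeftCoherentRing A) (D : Set (DerivedCategory (ModuleCat.{u} A)))
    (hD : D ∈ thickLatticeSmall A) : ∃ C ∈ wideLatticeFP A, fSet C = D := by
  obtain ⟨hD, hsm⟩ := hD
  let Z : Set (Ideal A) := {p | ∃ Y : SC A, Y.obj ∈ D ∧ ∀ s ∉ p, ¬ Null Y Y (s • 1)}
  have hw := isWide_support hR Z
  have hne : {M : ModuleCat.{u} A | M ∈ finPresModules A ∧
      ∀ p : Ideal A, p.IsPrime → Module.annihilator A M ≤ p → p ∈ Z}.Nonempty := by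
    refine ⟨ModuleCat.of A PUnit.{u+1}, ?_, fun p hp h => ?_⟩
    · have : Module.FinitePresentation A PUnit.{u+1} := Module.finitePresentation_of_projective A _
      exact this
    · exact absurd (top_le_iff.1 ((Module.annihilator_eq_top_iff.2
        (inferInstanceAs (Subsingleton PUnit.{u+1}))).ge.trans h)) hp.ne_top
  refine ⟨_, ⟨hw, hne, fun M hM => hM.1⟩, Set.Subset.antisymm (fun X hX => ?_) fun X hX => ?_⟩
  · obtain ⟨P, i, r, hir, hP⟩ := exists_SC hX.1
    have hPf := hP _ (isThick_fSet hw hne) hX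
    refine hD.retract_mem _ _ i r hir (thomason hD P fun p hp hnull => ?_)
    by_cases hex : ∃ n, Module.annihilator A
        ((DerivedCategory.homologyFunctor (ModuleCat.{u} A) n).obj P.obj) ≤ p
    · obtain ⟨n, hn⟩ := hex
      exact (hPf.2 n).2 p hp hn
    · exfalso
      push Not at hex
      obtain ⟨s, hs, hk⟩ := exists_kill P p (fun n => by
        obtain ⟨s, hs, hsp⟩ := Set.not_subset.1 (hex n)
        refine ⟨s, hsp, fun x => ?_⟩
        have := annihilator_le_of_iso (P.homIso n) hs
        rw [Module.mem_annihilator] at this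
        exact this x)
      obtain ⟨N, hN⟩ := exists_pow_null P hPf.1 s hk
      exact hnull (s ^ N) (fun h => hs (hp.mem_of_pow_mem _ h)) hN
  · refine ⟨hsm X hX, fun n => ⟨small_homology_fp hR (hsm X hX) n, fun p hp hle => ?_⟩⟩
    obtain ⟨P, i, r, hir, hP⟩ := exists_SC (hsm X hX)
    refine ⟨P, hP D hD hX, fun s hs hn => hs (hle ?_)⟩
    rw [Module.mem_annihilator]
    refine smul_homology_zero X s ?_ n
    have h1 := (null_smul_one_iff P s).2 hn
    have h2 : s • 𝟙 X = i ≫ (s • 𝟙 P.obj) ≫ r := by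
      rw [Linear.smul_comp, Linear.comp_smul, Category.id_comp, hir]
    rw [h2, h1, zero_comp, comp_zero]

end SC
end Surj2


namespace SC
section Cone2
set_option linter.unusedSectionVars false
variable {A : Type u} [CommRing A] [HasDerivedCategory.{w} (ModuleCat.{u} A)]

theorem obj_small (P : SC A) : IsSmallObject P.obj := by
  refine thomason isThick_small P fun p hp _ => ⟨unit A, ?_, fun s hs hn => hs ?_⟩
  · exact isThick_small.mem_of_iso (unit_obj A).some.symm (fun D _ h => h)
  · obtain ⟨h, hh⟩ := hn
    have h1 := congrFun (congrFun hh ()) ()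
    have h2 : (unit A).d * h + h * (unit A).d = 0 := by
      have : (unit A).d = 0 := rfl
      rw [this, Matrix.zero_mul, Matrix.mul_zero, add_zero]
    rw [h2] at h1
    have h3 : s = 0 := by
      rw [Matrix.smul_apply, Matrix.one_apply_eq, smul_eq_mul, mul_one] at h1
      exact h1
    rw [h3]; exact p.zero_mem

theorem exists_SC' {X : DerivedCategory (ModuleCat.{u} A)} (hX : IsSmallObject X) :
    ∃ (Z : SC A) (i : X ⟶ Z.obj) (r : Z.obj ⟶ X) (j : X⟦(1:ℤ)⟧ ⟶ Z.obj) (t : Z.obj ⟶ X⟦(1:ℤ)⟧),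
      i ≫ r = 𝟙 X ∧ j ≫ t = 𝟙 _ ∧ i ≫ t = 0 ∧ j ≫ r = 0 ∧ r ≫ i + t ≫ j = 𝟙 _ := by
  obtain ⟨P, i, r, hir, -⟩ := exists_SC hX
  obtain ⟨f, hf, hc, h⟩ := objMap_full (𝟙 P.obj - r ≫ i)
  obtain ⟨α, β, hab⟩ := cone_triangle hf hc
  have hφr : objMap f hf hc ≫ r = 0 := by rw [h]; simp [hir]
  have hiφ : i ≫ objMap f hf hc = 0 := by rw [h]; simp [← Category.assoc, hir]
  have z1 : objMap f hf hc ≫ α = 0 := comp_distTriang_mor_zero₁₂ _ hab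
  have z2 : α ≫ β = 0 := comp_distTriang_mor_zero₂₃ _ hab
  have z3 : β ≫ (objMap f hf hc)⟦(1:ℤ)⟧' = 0 := comp_distTriang_mor_zero₃₁ _ hab
  have hα : r ≫ i ≫ α = α := by
    have : α - r ≫ i ≫ α = 0 := by
      rw [← z1, h]; simp
    exact (sub_eq_zero.1 this).symm
  have hβ : β ≫ r⟦(1:ℤ)⟧' ≫ i⟦(1:ℤ)⟧' = β := by
    have : β - β ≫ r⟦(1:ℤ)⟧' ≫ i⟦(1:ℤ)⟧' = 0 := by
      rw [← z3, h]; simp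
    exact (sub_eq_zero.1 this).symm
  obtain ⟨r', hr'⟩ : ∃ r', r = α ≫ r' := Triangle.yoneda_exact₂ _ hab r hφr
  obtain ⟨s, hs⟩ : ∃ s, i⟦(1:ℤ)⟧' = s ≫ β := Triangle.coyoneda_exact₁ _ hab (i⟦(1:ℤ)⟧') (by
    change i⟦(1:ℤ)⟧' ≫ (objMap f hf hc)⟦(1:ℤ)⟧' = 0
    rw [← Functor.map_comp, hiφ, Functor.map_zero])
  obtain ⟨g, hg⟩ : ∃ g, 𝟙 _ - r' ≫ i ≫ α = β ≫ g := Triangle.yoneda_exact₃ _ hab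
    (𝟙 _ - r' ≫ i ≫ α) (by
      change α ≫ (𝟙 _ - r' ≫ i ≫ α) = 0
      rw [Preadditive.comp_sub, ← Category.assoc α r', ← hr', hα]; simp)
  have e1 : (i ≫ α) ≫ r' = 𝟙 X := by rw [Category.assoc, ← hr', hir]
  have e2 : s ≫ β ≫ r⟦(1:ℤ)⟧' = 𝟙 _ := by
    rw [← Category.assoc, ← hs, ← Functor.map_comp, hir, CategoryTheory.Functor.map_id]
  have e3 : (i ≫ α) ≫ β ≫ r⟦(1:ℤ)⟧' = 0 := by
    rw [Category.assoc, ← Category.assoc α, z2]; simp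
  have e5 : r' ≫ (i ≫ α) + (β ≫ r⟦(1:ℤ)⟧') ≫ (i⟦(1:ℤ)⟧' ≫ g) = 𝟙 _ := by
    have : (β ≫ r⟦(1:ℤ)⟧') ≫ (i⟦(1:ℤ)⟧' ≫ g) = β ≫ g := by
      rw [Category.assoc, ← Category.assoc (r⟦(1:ℤ)⟧'), ← Category.assoc β, hβ]
    rw [this, ← hg]; abel
  have e6 : (i⟦(1:ℤ)⟧' ≫ g) ≫ β ≫ r⟦(1:ℤ)⟧' = 𝟙 _ := by
    have := congrArg (fun x => s ≫ x ≫ (β ≫ r⟦(1:ℤ)⟧')) e5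
    simp only [Preadditive.add_comp, Category.assoc, Preadditive.comp_add, Category.id_comp] at this e2 e3 ⊢
    rw [e3, comp_zero, comp_zero, zero_add, e2] at this
    rw [← Category.assoc β, ← Category.assoc s, e2, Category.id_comp] at this
    exact this
  have e7 : (i⟦(1:ℤ)⟧' ≫ g) ≫ r' = 0 := by
    have := congrArg (fun x => s ≫ x ≫ r') e5
    simp only [Preadditive.add_comp, Category.assoc, Preadditive.comp_add, Category.id_comp] at this e1 e2 ⊢
    rw [e1, Category.comp_id, add_eq_left] at this
    rw [← Category.assoc β, ← Category.assoc s, e2, Category.id_comp] at this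
    exact this
  exact ⟨cone f hf hc, i ≫ α, r', i⟦(1:ℤ)⟧' ≫ g, β ≫ r⟦(1:ℤ)⟧', e1, e6, e3, e7, e5⟩

end Cone2
end SC


section Reg
set_option linter.unusedSectionVars false
variable {A : Type u} [CommRing A]

theorem finite_pd_of_ext {M : ModuleCat.{u} A} (hM : HasFiniteProjectiveDimension A M) :
    ∃ n : ℕ, HasProjectiveDimensionLT M n := by
  obtain ⟨i, hi⟩ := hM
  let P := projectiveResolution M
  have key : ∀ k : ℕ, k ≤ i + 1 → ∀ (Q : ModuleCat.{u} A) (q : P.complex.X (i + 1 - k) ⟶ Q)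
      (_ : Epi q) (w : P.complex.d (i + 1 - k + 1) (i + 1 - k) ≫ q = 0),
      (ShortComplex.mk _ _ w).Exact → ∃ n : ℕ, HasProjectiveDimensionLT Q n := by
    intro k
    induction k with
    | zero =>
      intro _ Q q hq w hex
      refine ⟨1, ?_⟩
      have hz : ((P.complex.linearYonedaObj ℤ Q).sc' i (i + 1) (i + 2)).Exact := by
        rw [← HomologicalComplex.exactAt_iff' _ i (i+1) (i+2) (by simp) (by simp),
          HomologicalComplex.exactAt_iff_isZero_homology]
        have := hi Q (i + 1) (by omega)
        exact (ModuleCat.isZero_of_subsingleton _).of_iso (P.isoExt (R := ℤ) (i + 1) Q).symm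
      obtain ⟨h, hh⟩ := (ShortComplex.moduleCat_exact_iff _).1 hz q w
      let h' : P.complex.X i ⟶ Q := h
      have hh' : P.complex.d (i + 1) i ≫ h' = q := hh
      let ι : Q ⟶ P.complex.X i := hex.desc (P.complex.d (i + 1) i) (P.complex.d_comp_d _ _ _)
      have hι : q ≫ ι = P.complex.d (i + 1) i := hex.g_desc _ _
      have hr : ι ≫ h' = 𝟙 Q := by
        rw [← cancel_epi q, ← Category.assoc, hι, hh', Category.comp_id]
      have : Projective (P.complex.X i) := P.projective i
      exact (Retract.mk ι h' hr).hasProjectiveDimensionLT 1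
    | succ k ih =>
      intro hk Q q hq w hex
      obtain ⟨m, hm⟩ : ∃ m, i + 1 - (k + 1) = m := ⟨_, rfl⟩
      have hm' : i + 1 - k = m + 1 := by omega
      rw [hm'] at ih
      clear hi
      revert q
      rw [hm]
      intro q hq w hex
      let p : P.complex.X (m + 1) ⟶ kernel q := kernel.lift q _ w
      have hp : Epi p := hex.epi_kernelLift
      have w' : P.complex.d (m + 2) (m + 1) ≫ p = 0 := by
        rw [← cancel_mono (kernel.ι q)]
        simp [p]
      have hex' : (ShortComplex.mk _ _ w').Exact := by
        have h1 := P.exact_succ m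
        have e : (ShortComplex.mk _ _ w').Exact ↔ (ShortComplex.mk _ _
          (P.complex.d_comp_d (m + 2) (m + 1) m)).Exact :=
          ShortComplex.exact_iff_of_epi_of_isIso_of_mono
            { τ₁ := 𝟙 _, τ₂ := 𝟙 _, τ₃ := kernel.ι q, comm₁₂ := by simp,
              comm₂₃ := by simp [p] }
        exact e.2 h1
      obtain ⟨n, hn⟩ := ih (by omega) (kernel q) p hp w' hex'
      have hses : (ShortComplex.mk (kernel.ι q) q (kernel.condition q)).ShortExact :=
        { exact := ShortComplex.exact_of_f_is_kernel _ (kernelIsKernel q) }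
      refine ⟨n + 1, hses.hasProjectiveDimensionLT_X₃ n hn ?_⟩
      have : Projective (P.complex.X m) := P.projective m
      exact hasProjectiveDimensionLT_of_ge _ 1 _ (by omega)
  have h0 := key (i + 1) le_rfl
  rw [Nat.sub_self] at h0
  exact h0 M (P.π.f 0) (epi_of_isColimit_cofork P.isColimitCokernelCofork) P.complex_d_comp_π_f_zero P.exact₀

/-- resolving induction for f.p. modules over a regular coherent ring -/
theorem reg_induction (hcoh : IsLeftCoherentRing A) (Nc : Set (ModuleCat.{u} A))
    (hretr : ∀ (M N : ModuleCat.{u} A) (i : M ⟶ N) (r : N ⟶ M), i ≫ r = 𝟙 M → N ∈ Nc → M ∈ Nc)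
    (hext : ∀ S : ShortComplex (ModuleCat.{u} A), S.ShortExact → S.X₁ ∈ Nc → S.X₃ ∈ Nc → S.X₂ ∈ Nc)
    (hquot : ∀ S : ShortComplex (ModuleCat.{u} A), S.ShortExact → S.X₁ ∈ Nc → S.X₂ ∈ Nc → S.X₃ ∈ Nc)
    (hA : ModuleCat.of A A ∈ Nc) (M : ModuleCat.{u} A) (hM : M ∈ finPresModules A)
    (hpd : HasFiniteProjectiveDimension A M) : M ∈ Nc := by
  have hzero : ∀ M : ModuleCat.{u} A, IsZero M → M ∈ Nc := fun M hM =>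
    hretr M _ 0 0 (hM.eq_of_src _ _) hA
  have hfree : ∀ n : ℕ, ModuleCat.of A (Fin n → A) ∈ Nc := by
    intro n
    induction n with
    | zero => exact hzero _ (ModuleCat.isZero_of_subsingleton (ModuleCat.of A (Fin 0 → A)))
    | succ n ih =>
      have h1 : ModuleCat.of A (A × (Fin n → A)) ∈ Nc :=
        hext (ModuleCat.shortComplexOfCompEqZero (LinearMap.inl A A (Fin n → A))
          (LinearMap.snd A A (Fin n → A)) (LinearMap.snd_comp_inl _ _ _))
          (ModuleCat.shortComplex_shortExact _ Function.Exact.inl_snd LinearMap.inl_injective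
          LinearMap.snd_surjective) hA ih
      let e : ModuleCat.of A (A × (Fin n → A)) ≅ ModuleCat.of A (Fin (n + 1) → A) :=
        (Fin.consLinearEquiv A (fun _ => A)).toModuleIso
      exact hretr _ _ e.inv e.hom (by simp) h1
  obtain ⟨n, hn⟩ := finite_pd_of_ext hpd
  clear hpd
  induction n using Nat.strong_induction_on generalizing M with
  | _ n ih =>
  have hM' : Module.FinitePresentation A M := hM
  obtain ⟨k, f, hf⟩ := Module.Finite.exists_fin' A M
  have hfp : Module.FinitePresentation A (Fin k → A) := Module.finitePresentation_of_projective A _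
  have hk := coherent_ker hcoh f
  match n, ih, hn with
  | 0, _, hn => exact hzero _ ((hasProjectiveDimensionLT_zero_iff_isZero M).1 hn)
  | 1, _, hn =>
    have hp : Projective M := projective_iff_hasProjectiveDimensionLT_one.2 hn
    have : Epi (ModuleCat.ofHom f) := (ModuleCat.epi_iff_surjective _).2 hf
    exact hretr M (ModuleCat.of A (Fin k → A)) (Projective.factorThru (𝟙 M) (ModuleCat.ofHom f))
      (ModuleCat.ofHom f) (Projective.factorThru_comp _ _) (hfree k)
  | n + 2, ih, hn =>
    have hS : (ModuleCat.shortComplexOfCompEqZero (LinearMap.ker f).subtype f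
      (by ext x; exact x.2)).ShortExact :=
      ModuleCat.shortComplex_shortExact _ (LinearMap.exact_subtype_ker_map f)
        (Submodule.subtype_injective _) hf
    refine hquot _ hS (ih (n + 1) (by omega) _ hk ?_) (hfree k)
    have : Projective (ModuleCat.of A (Fin k → A)) :=
      (IsProjective.iff_projective _).1 inferInstance
    exact hS.hasProjectiveDimensionLT_X₁ (n + 1)
      (hasProjectiveDimensionLT_of_ge (ModuleCat.of A (Fin k → A)) 1 _ (by omega)) hn

end Reg


section Tilde
set_option linter.unusedSectionVars false
variable {A : Type u} [CommRing A] (a : Ideal A)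

/-- restriction of scalars along `A → A ⧸ a` -/
noncomputable abbrev rest : ModuleCat.{u} (A ⧸ a) ⥤ ModuleCat.{u} A :=
  ModuleCat.restrictScalars (Ideal.Quotient.mk a)

theorem rest_full {M N : ModuleCat.{u} (A ⧸ a)} (g : (rest a).obj M ⟶ (rest a).obj N) :
    ∃ f : M ⟶ N, (rest a).map f = g := by
  let g' : M → N := fun x => g.hom x
  have hsm : ∀ (r : A ⧸ a) (x : M), g' (r • x) = r • g' x := by
    intro r x
    obtain ⟨t, rfl⟩ := Ideal.Quotient.mk_surjective r
    exact g.hom.map_smul t x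
  let f : M →ₗ[A ⧸ a] N :=
    { toFun := g'
      map_add' := fun x y => g.hom.map_add x y
      map_smul' := hsm }
  exact ⟨ModuleCat.ofHom f, rfl⟩

/-- modules coming from `C` -/
def tilde (C : Set (ModuleCat.{u} (A ⧸ a))) : Set (ModuleCat.{u} A) :=
  {N | ∃ M ∈ C, Nonempty ((rest a).obj M ≅ N)}

/-- modules killed by `a` -/
def killed : Set (ModuleCat.{u} A) := {N | ∀ x ∈ a, ∀ n : N, x • n = 0}

variable {a} {C : Set (ModuleCat.{u} (A ⧸ a))}

theorem tilde_iso {M N : ModuleCat.{u} A} (e : M ≅ N) (h : M ∈ tilde a C) : N ∈ tilde a C := by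
  obtain ⟨M', hM', ⟨e'⟩⟩ := h
  exact ⟨M', hM', ⟨e' ≪≫ e⟩⟩

theorem tilde_kernel (hC : IsWideSubcategory C) {M N : ModuleCat.{u} A} (f : M ⟶ N)
    (hM : M ∈ tilde a C) (hN : N ∈ tilde a C) : kernel f ∈ tilde a C := by
  obtain ⟨M', hM', ⟨e⟩⟩ := hM
  obtain ⟨N', hN', ⟨e'⟩⟩ := hN
  obtain ⟨g, hg⟩ := rest_full a (e.hom ≫ f ≫ e'.inv)
  exact ⟨kernel g, hC.kernel_mem g hM' hN', ⟨PreservesKernel.iso (rest a) g ≪≫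
    kernel.mapIso _ _ e e' (by rw [hg]; simp)⟩⟩

theorem tilde_cokernel (hC : IsWideSubcategory C) {M N : ModuleCat.{u} A} (f : M ⟶ N)
    (hM : M ∈ tilde a C) (hN : N ∈ tilde a C) : cokernel f ∈ tilde a C := by
  obtain ⟨M', hM', ⟨e⟩⟩ := hM
  obtain ⟨N', hN', ⟨e'⟩⟩ := hN
  obtain ⟨g, hg⟩ := rest_full a (e.hom ≫ f ≫ e'.inv)
  exact ⟨cokernel g, hC.cokernel_mem g hM' hN', ⟨PreservesCokernel.iso (rest a) g ≪≫
    cokernel.mapIso _ _ e e' (by rw [hg]; simp)⟩⟩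

theorem exists_of_killed (N : ModuleCat.{u} A) (hN : N ∈ killed a) :
    ∃ M : ModuleCat.{u} (A ⧸ a), Nonempty ((rest a).obj M ≅ N) := by
  have h : Module.IsTorsionBySet A N a := fun n x => hN x.1 x.2 n
  letI := h.module
  let e : (rest a).obj (ModuleCat.of (A ⧸ a) N) ≃ₗ[A] N :=
    { toFun := fun x => x, invFun := fun x => x, left_inv := fun _ => rfl, right_inv := fun _ => rfl,
      map_add' := fun _ _ => rfl, map_smul' := fun r x => rfl }
  exact ⟨ModuleCat.of (A ⧸ a) N, ⟨e.toModuleIso⟩⟩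

theorem tilde_ext (hC : IsWideSubcategory C) (S : ShortComplex (ModuleCat.{u} A))
    (hS : S.ShortExact) (h₁ : S.X₁ ∈ tilde a C) (h₃ : S.X₃ ∈ tilde a C) (h₂ : S.X₂ ∈ killed a) :
    S.X₂ ∈ tilde a C := by
  obtain ⟨M₁, hM₁, ⟨e₁⟩⟩ := h₁
  obtain ⟨M₃, hM₃, ⟨e₃⟩⟩ := h₃
  obtain ⟨M₂, ⟨e₂⟩⟩ := exists_of_killed _ h₂
  obtain ⟨f, hf⟩ := rest_full a (e₁.hom ≫ S.f ≫ e₂.inv)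
  obtain ⟨g, hg⟩ := rest_full a (e₂.hom ≫ S.g ≫ e₃.inv)
  have w : f ≫ g = 0 := (rest a).map_injective (by
    rw [Functor.map_comp, hf, hg, Functor.map_zero]; simp)
  let T := ShortComplex.mk f g w
  let e : T.map (rest a) ≅ S := ShortComplex.isoMk e₁ e₂ e₃
    (by change e₁.hom ≫ S.f = (rest a).map f ≫ e₂.hom; rw [hf]; simp)
    (by change e₂.hom ≫ S.g = (rest a).map g ≫ e₃.hom; rw [hg]; simp)
  have hT : (T.map (rest a)).ShortExact := ShortComplex.shortExact_of_iso e.symm hS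
  have hT' : T.ShortExact :=
    { exact := (T.exact_map_iff_of_faithful (rest a)).1 hT.exact
      mono_f := by
        have : Mono ((rest a).map T.f) := hT.mono_f
        exact (rest a).mono_of_mono_map this
      epi_g := by
        have : Epi ((rest a).map T.g) := hT.epi_g
        exact (rest a).epi_of_epi_map this }
  exact ⟨M₂, hC.extension_mem T hT' hM₁ hM₃, ⟨e₂⟩⟩

theorem tilde_retract (hC : IsWideSubcategory C) {M N : ModuleCat.{u} A} (i : M ⟶ N) (r : N ⟶ M)
    (hir : i ≫ r = 𝟙 M) (hN : N ∈ tilde a C) : M ∈ tilde a C := by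
  refine tilde_iso ?_ (tilde_kernel hC (𝟙 N - r ≫ i) hN hN)
  have h0 : i ≫ (𝟙 N - r ≫ i) = 0 := by
    rw [Preadditive.comp_sub, ← Category.assoc, hir]; simp
  refine ⟨kernel.ι _ ≫ r, kernel.lift _ i h0, ?_, ?_⟩
  · rw [← cancel_mono (kernel.ι (𝟙 N - r ≫ i))]
    have := kernel.condition (𝟙 N - r ≫ i)
    rw [Preadditive.comp_sub, sub_eq_zero, Category.comp_id] at this
    simp [← this]
  · simp [hir]

theorem tilde_rest (M : ModuleCat.{u} (A ⧸ a)) (hC : IsWideSubcategory C)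
    (h : (rest a).obj M ∈ tilde a C) : M ∈ C := by
  obtain ⟨M', hM', ⟨e⟩⟩ := h
  obtain ⟨f, hf⟩ := rest_full a e.hom
  obtain ⟨g, hg⟩ := rest_full a e.inv
  exact hC.mem_of_iso ⟨f, g, (rest a).map_injective (by rw [Functor.map_comp, hf, hg]; simp),
    (rest a).map_injective (by rw [Functor.map_comp, hf, hg]; simp)⟩ hM'

end Tilde


namespace SC
section Coeff
set_option linter.unusedSectionVars false
variable {A : Type u} [CommRing A]

theorem coeff_id (P : SC A) (N : Type u) [AddCommGroup N] [Module A N] :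
    P.coeff (LinearMap.id : N →ₗ[A] N) = 𝟙 _ := by
  ext1 n
  rfl

theorem coeff_comp (P : SC A) {N N' N'' : Type u} [AddCommGroup N] [Module A N] [AddCommGroup N']
    [Module A N'] [AddCommGroup N''] [Module A N''] (φ : N →ₗ[A] N') (ψ : N' →ₗ[A] N'') :
    P.coeff φ ≫ P.coeff ψ = P.coeff (ψ ∘ₗ φ) := by
  ext1 n
  rfl

theorem coeff_zero (P : SC A) (N N' : Type u) [AddCommGroup N] [Module A N] [AddCommGroup N']
    [Module A N'] : P.coeff (0 : N →ₗ[A] N') = 0 := by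
  ext1 n
  rfl

theorem cx_killed {a : Ideal A} (Y : SC A) (hY : ∀ x ∈ a, Null Y Y (x • 1)) (N : Type u)
    [AddCommGroup N] [Module A N] (n : ℤ) : (Y.cx N).homology n ∈ killed a := by
  intro x hx v
  have hf : IsHom Y Y 0 (x • (1 : Matrix Y.ι Y.ι A)) := by
    intro j i h
    rw [Matrix.smul_apply, Y.isHom_one j i h, smul_zero]
  have hc : Y.d * (x • (1 : Matrix Y.ι Y.ι A)) = (x • (1 : Matrix Y.ι Y.ι A)) * Y.d := by simp
  obtain ⟨h⟩ := (hY x hx).homotopy hf hc N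
  have h1 : mapcx N _ hf hc = x • 𝟙 (Y.cx N) := by
    ext1 m
    rw [mapcx_f, am_smul, am_one]; rfl
  have h2 := h.homologyMap_eq n
  rw [h1, homologyMap_smul_id, HomologicalComplex.homologyMap_zero] at h2
  exact congrArg (fun g : (Y.cx N).homology n ⟶ (Y.cx N).homology n => g v) h2

/-- the short complex of complexes attached to a short complex of coefficients -/
noncomputable def coeffS (Y : SC A) (S : ShortComplex (ModuleCat.{u} A)) :
    ShortComplex (CochainComplex (ModuleCat.{u} A) ℤ) :=
  ShortComplex.mk (Y.coeff S.f.hom) (Y.coeff S.g.hom) (by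
    have h : S.g.hom ∘ₗ S.f.hom = 0 := congrArg ModuleCat.Hom.hom S.zero
    rw [coeff_comp, h, coeff_zero])

theorem coeffS_shortExact (Y : SC A) (S : ShortComplex (ModuleCat.{u} A)) (hS : S.ShortExact) :
    (coeffS Y S).ShortExact := by
  refine HomologicalComplex.shortExact_of_degreewise_shortExact _ fun n => ?_
  have h1 := (ShortComplex.ShortExact.moduleCat_exact_iff_function_exact S).1 hS.exact
  have h2 := hS.moduleCat_injective_f
  have h3 := hS.moduleCat_surjective_g
  refine ModuleCat.shortComplex_shortExact ((coeffS Y S).map (HomologicalComplex.eval _ _ n)) ?_ ?_ ?_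
  · intro v
    constructor
    · intro h
      have h' : ∀ i, S.g (v i) = 0 := fun i => congrFun h i
      choose w hw using fun i => (h1 (v i)).1 (h' i)
      exact ⟨w, funext hw⟩
    · rintro ⟨w, rfl⟩
      exact funext fun i => (h1 _).2 ⟨w i, rfl⟩
  · intro v w h
    exact funext fun i => h2 (congrFun h i)
  · intro v
    choose w hw using fun i => h3 (v i)
    exact ⟨w, funext hw⟩

theorem coeff_induction {a : Ideal A} {C : Set (ModuleCat.{u} (A ⧸ a))} (hC : IsWideSubcategory C)
    (hcoh : IsLeftCoherentRing A) (Y : SC A) (hY : ∀ x ∈ a, Null Y Y (x • 1))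
    (hA : ∀ n, (Y.cx A).homology n ∈ tilde a C) (M : ModuleCat.{u} A) (hM : M ∈ finPresModules A)
    (hpd : HasFiniteProjectiveDimension A M) (n : ℤ) : (Y.cx M).homology n ∈ tilde a C := by
  refine reg_induction hcoh {N : ModuleCat.{u} A | ∀ n, (Y.cx N).homology n ∈ tilde a C} ?_ ?_ ?_ hA
    M hM hpd n
  · intro M N i r hir hN n
    refine tilde_retract hC (HomologicalComplex.homologyMap (Y.coeff i.hom) n)
      (HomologicalComplex.homologyMap (Y.coeff r.hom) n) ?_ (hN n)
    have h : r.hom ∘ₗ i.hom = LinearMap.id := congrArg ModuleCat.Hom.hom hir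
    rw [← HomologicalComplex.homologyMap_comp, coeff_comp, h, coeff_id,
      HomologicalComplex.homologyMap_id]
  · intro S hS h1 h3 n
    have H := coeffS_shortExact Y S hS
    exact five_mem (tilde a C) (killed a) (fun f => tilde_kernel hC f) (fun f => tilde_cokernel hC f)
      (tilde_ext hC) _ _ _ _ _ _ _ (H.homology_exact₁ (n-1) n (by simp)) (H.homology_exact₂ n)
      (H.homology_exact₃ n (n+1) (by simp)) (h3 _) (h1 _) (h3 _) (h1 _) (cx_killed Y hY _ _)
  · intro S hS h1 h2 n
    have H := coeffS_shortExact Y S hS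
    exact five_mem (tilde a C) (killed a) (fun f => tilde_kernel hC f) (fun f => tilde_cokernel hC f)
      (tilde_ext hC) _ _ _ _ _ _ _ (H.homology_exact₂ n)
      (H.homology_exact₃ n (n+1) (by simp)) (H.homology_exact₁ n (n+1) (by simp))
      (h1 _) (h2 _) (h1 _) (h2 _) (cx_killed Y hY _ _)

end Coeff
end SC


namespace SC
section BC
set_option linter.unusedSectionVars false
variable {A : Type u} [CommRing A] (a : Ideal A)

/-- base change to the quotient ring -/
def bc (Y : SC A) : SC (A ⧸ a) where
  ι := Y.ι
  fin := Y.fin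
  dec := Y.dec
  deg := Y.deg
  d := Y.d.map (Ideal.Quotient.mk a)
  d_sq := by
    rw [← Matrix.map_mul, Y.d_sq, Matrix.map_zero _ (map_zero _)]
  d_deg i j h := by
    rw [Matrix.map_apply, Y.d_deg i j h, map_zero]

/-- the comparison in one degree -/
def bcEquiv (Y : SC A) (n : ℤ) : (rest a).obj (ModuleCat.of (A ⧸ a) ({i // (bc a Y).deg i = n} → A ⧸ a)) ≃ₗ[A]
    ({i // Y.deg i = n} → A ⧸ a) where
  toFun v := v
  invFun v := v
  left_inv _ := rfl
  right_inv _ := rfl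
  map_add' _ _ := rfl
  map_smul' r v := rfl

noncomputable def bcIso (Y : SC A) :
    ((rest a).mapHomologicalComplex _).obj ((bc a Y).cx (A ⧸ a)) ≅ Y.cx (A ⧸ a) :=
  HomologicalComplex.Hom.isoOfComponents (fun n => (bcEquiv a Y n).toModuleIso) (by
    intro n m _
    refine ModuleCat.hom_ext (LinearMap.ext fun v => funext fun j => ?_)
    rfl)

noncomputable def bcHomology (Y : SC A) (n : ℤ) :
    (rest a).obj (((bc a Y).cx (A ⧸ a)).homology n) ≅ (Y.cx (A ⧸ a)).homology n :=
  (ShortComplex.mapHomologyIso (((bc a Y).cx (A ⧸ a)).sc n) (rest a)).symm ≪≫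
    HomologicalComplex.homologyMapIso (bcIso a Y) n

end BC
end SC


namespace SC
section Fin
set_option linter.unusedSectionVars false
variable {A : Type u} [CommRing A] [HasDerivedCategory.{w} (ModuleCat.{u} A)]

theorem single_small (hcoh : IsLeftCoherentRing A) (M : ModuleCat.{u} A) (hM : M ∈ finPresModules A)
    (hpd : HasFiniteProjectiveDimension A M) :
    IsSmallObject ((DerivedCategory.singleFunctor (ModuleCat.{u} A) 0).obj M) := by
  refine reg_induction hcoh
    {N | IsSmallObject ((DerivedCategory.singleFunctor (ModuleCat.{u} A) 0).obj N)} ?_ ?_ ?_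
    (fun D _ h => h) M hM hpd
  · intro M N i r hir hN
    exact isThick_small.retract_mem _ _ ((DerivedCategory.singleFunctor _ 0).map i)
      ((DerivedCategory.singleFunctor _ 0).map r)
      (by rw [← Functor.map_comp, hir, CategoryTheory.Functor.map_id]) hN
  · intro S hS h1 h3
    exact isThick_small.ext₂ _ hS.singleTriangle_distinguished h1 h3
  · intro S hS h1 h2
    exact isThick_small.ext₃ _ hS.singleTriangle_distinguished h1 h2

theorem factor_coeff {a : Ideal A} (Y : SC A) (L : CochainComplex (ModuleCat.{u} A) ℤ)
    (hL : ∀ n, L.X n ∈ killed a) (ρ : Y.cx A ⟶ L) :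
    ∃ ρ' : Y.cx (A ⧸ a) ⟶ L, Y.coeff (Submodule.mkQ a) ≫ ρ' = ρ := by
  have he : ∀ n, Epi ((Y.coeff (Submodule.mkQ a)).f n) := by
    intro n
    rw [ModuleCat.epi_iff_surjective]
    intro v
    choose w hw using fun i => Submodule.mkQ_surjective a (v i)
    exact ⟨w, funext hw⟩
  have : Epi (Y.coeff (Submodule.mkQ a)) := HomologicalComplex.epi_of_epi_f _ he
  have key : ∀ (n : ℤ) (v : (Y.cx A).X n), ((Y.coeff (Submodule.mkQ a)).f n) v = 0 → ρ.f n v = 0 := by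
    intro n v hv
    let v' : {i // Y.deg i = n} → A := v
    have hv' : ∀ i, v' i ∈ a := fun i =>
      (Submodule.Quotient.mk_eq_zero a).1 (congrFun hv i)
    let g : ({i // Y.deg i = n} → A) →ₗ[A] L.X n := (ρ.f n).hom
    have h1 : g v' = 0 := by
      rw [pi_eq_sum_univ' v', map_sum]
      refine Finset.sum_eq_zero fun i _ => ?_
      rw [map_smul]
      exact hL n _ (hv' i) _
    exact h1
  have hk : kernel.ι (Y.coeff (Submodule.mkQ a)) ≫ ρ = 0 := by
    ext1 n
    refine ModuleCat.hom_ext (LinearMap.ext fun v => ?_)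
    refine key n ((kernel.ι (Y.coeff (Submodule.mkQ a))).f n v) ?_
    have h1 := congrArg (fun φ => HomologicalComplex.Hom.f φ n)
      (kernel.condition (Y.coeff (Submodule.mkQ a)))
    exact congrArg (fun φ => ModuleCat.Hom.hom φ v) h1
  exact ⟨Abelian.epiDesc _ ρ hk, Abelian.comp_epiDesc _ _ _⟩

theorem tilde_of_isZero {a : Ideal A} {C : Set (ModuleCat.{u} (A ⧸ a))} (hC : IsWideSubcategory C)
    (hne : C.Nonempty) {N : ModuleCat.{u} A} (hN : IsZero N) : N ∈ tilde a C := by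
  obtain ⟨M, hM⟩ := hne
  exact tilde_retract hC (0 : N ⟶ (rest a).obj M) 0 (hN.eq_of_src _ _) ⟨M, hM, ⟨Iso.refl _⟩⟩

theorem rest_killed {a : Ideal A} (M : ModuleCat.{u} (A ⧸ a)) : (rest a).obj M ∈ killed a := by
  intro x hx m
  have h : Ideal.Quotient.mk a x = 0 := Ideal.Quotient.eq_zero_iff_mem.2 hx
  have h2 : Ideal.Quotient.mk a x • (m : M) = 0 := by rw [h, zero_smul]
  exact h2

theorem killed_iso {a : Ideal A} {M N : ModuleCat.{u} A} (e : M ≅ N) (h : M ∈ killed a) :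
    N ∈ killed a := by
  intro x hx m
  apply e.toLinearEquiv.symm.injective
  rw [map_smul, map_zero]
  exact h x hx _

/-- homology of a module placed in degree zero -/
theorem single_homology_zero (N : ModuleCat.{u} A) :
    Nonempty ((DerivedCategory.homologyFunctor (ModuleCat.{u} A) 0).obj
      ((DerivedCategory.singleFunctor (ModuleCat.{u} A) 0).obj N) ≅ N) :=
  ⟨(DerivedCategory.homologyFunctorFactors (ModuleCat.{u} A) 0).app
      ((CochainComplex.singleFunctor (ModuleCat.{u} A) 0).obj N) ≪≫
    HomologicalComplex.singleObjHomologySelfIso (ComplexShape.up ℤ) 0 N⟩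

theorem single_homology_ne (N : ModuleCat.{u} A) (n : ℤ) (hn : n ≠ 0) :
    IsZero ((DerivedCategory.homologyFunctor (ModuleCat.{u} A) n).obj
      ((DerivedCategory.singleFunctor (ModuleCat.{u} A) 0).obj N)) :=
  (HomologicalComplex.isZero_single_obj_homology (ComplexShape.up ℤ) 0 N n hn).of_iso
    ((DerivedCategory.homologyFunctorFactors (ModuleCat.{u} A) n).app
      ((CochainComplex.singleFunctor (ModuleCat.{u} A) 0).obj N))

theorem single_homology_tilde {a : Ideal A} {C : Set (ModuleCat.{u} (A ⧸ a))}
    (hC : IsWideSubcategory C) (M : ModuleCat.{u} (A ⧸ a)) (hM : M ∈ C) (n : ℤ) :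
    (DerivedCategory.homologyFunctor (ModuleCat.{u} A) n).obj
      ((DerivedCategory.singleFunctor (ModuleCat.{u} A) 0).obj ((rest a).obj M)) ∈ tilde a C := by
  by_cases hn : n = 0
  · subst hn
    obtain ⟨e⟩ := single_homology_zero ((rest a).obj M)
    exact tilde_iso e.symm ⟨M, hM, ⟨Iso.refl _⟩⟩
  · exact tilde_of_isZero hC ⟨M, hM⟩ (single_homology_ne _ n hn)

theorem single_X_killed {a : Ideal A} (M : ModuleCat.{u} (A ⧸ a)) (n : ℤ) :
    ((CochainComplex.singleFunctor (ModuleCat.{u} A) 0).obj ((rest a).obj M)).X n ∈ killed a := by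
  by_cases hn : n = 0
  · subst hn
    exact killed_iso (HomologicalComplex.singleObjXSelf (ComplexShape.up ℤ) 0 ((rest a).obj M)).symm
      (rest_killed M)
  · have h := HomologicalComplex.isZero_single_obj_X (ComplexShape.up ℤ) 0 ((rest a).obj M) n hn
    have := ModuleCat.subsingleton_of_isZero h
    intro x _ m
    exact Subsingleton.elim (α := ((HomologicalComplex.single (ModuleCat.{u} A) (ComplexShape.up ℤ) 0).obj
      ((rest a).obj M)).X n) _ _

end Fin

theorem retract_aux {D : Type*} [Category D] {X Y K K' L M : D} (i : X ⟶ Y) (r : Y ⟶ X)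
    (hir : i ≫ r = 𝟙 X) (F : Y ⟶ K) (c : K ⟶ K') (p : K' ⟶ L) (q : K ⟶ L) (hq : c ≫ p = q)
    (G : X ≅ L) (h : F ≫ q = r ≫ G.hom) (e : X ≅ M) :
    ∃ (i' : M ⟶ K') (r' : K' ⟶ M), i' ≫ r' = 𝟙 M := by
  refine ⟨e.inv ≫ i ≫ F ≫ c, p ≫ G.inv ≫ e.hom, ?_⟩
  have h1 : F ≫ c ≫ p ≫ G.inv = r := by
    rw [← Category.assoc c, hq, ← Category.assoc, h]; simp
  calc _ = e.inv ≫ i ≫ (F ≫ c ≫ p ≫ G.inv) ≫ e.hom := by simp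
    _ = 𝟙 M := by rw [h1, ← Category.assoc i, hir]; simp

section Fin2
set_option linter.unusedSectionVars false
variable {A : Type u} [CommRing A] [HasDerivedCategory.{w} (ModuleCat.{u} A)]

/-- a finite free complex over `A` carrying the information of a module over the quotient -/
theorem exists_model (hcoh : IsLeftCoherentRing A)
    (hreg : ∀ M : ModuleCat.{u} A, Module.FinitePresentation A M → HasFiniteProjectiveDimension A M)
    {a : Ideal A} (ha : a.FG) {C : Set (ModuleCat.{u} (A ⧸ a))}
    (hC : IsWideSubcategory C) (M : ModuleCat.{u} (A ⧸ a)) (hM : M ∈ C)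
    (hfp : M ∈ finPresModules (A ⧸ a)) :
    ∃ Y : SC A, (∀ x ∈ a, Null Y Y (x • 1)) ∧ (∀ n, (Y.cx A).homology n ∈ tilde a C) ∧
      ∃ (i : (rest a).obj M ⟶ (Y.cx (A ⧸ a)).homology 0)
        (r : (Y.cx (A ⧸ a)).homology 0 ⟶ (rest a).obj M), i ≫ r = 𝟙 _ := by
  have hfpA : (rest a).obj M ∈ finPresModules A := by
    let _ : Module A M := Module.compHom M (Ideal.Quotient.mk a)
    have : IsScalarTower A (A ⧸ a) M := ⟨fun x y z => by
      obtain ⟨y, rfl⟩ := Ideal.Quotient.mk_surjective y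
      exact mul_smul (Ideal.Quotient.mk a x) (Ideal.Quotient.mk a y) z⟩
    exact fp_of_fp_quot a ha M hfp
  have hsm := single_small hcoh _ hfpA (hreg _ hfpA)
  obtain ⟨Y, i, r, j, t, hir, hjt, hit, hjr, hid⟩ := exists_SC' hsm
  have hX : ∀ x ∈ a, x • 𝟙 ((DerivedCategory.singleFunctor (ModuleCat.{u} A) 0).obj
      ((rest a).obj M)) = 0 := by
    intro x hx
    have h : x • 𝟙 ((rest a).obj M) = 0 :=
      ModuleCat.hom_ext (LinearMap.ext fun v => rest_killed M x hx v)
    rw [← CategoryTheory.Functor.map_id, ← Functor.map_smul, h, Functor.map_zero]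
  have hX1 : ∀ x ∈ a, x • 𝟙 (((DerivedCategory.singleFunctor (ModuleCat.{u} A) 0).obj
      ((rest a).obj M))⟦(1:ℤ)⟧) = 0 := by
    intro x hx
    rw [← CategoryTheory.Functor.map_id, ← Functor.map_smul, hX x hx, Functor.map_zero]
  have hY0 : ∀ x ∈ a, x • 𝟙 Y.obj = 0 := by
    intro x hx
    have h1 : x • (r ≫ i) = 0 := by
      have : x • (r ≫ i) = r ≫ (x • 𝟙 _) ≫ i := by simp
      rw [this, hX x hx]; simp
    have h2 : x • (t ≫ j) = 0 := by
      have : x • (t ≫ j) = t ≫ (x • 𝟙 _) ≫ j := by simp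
      rw [this, hX1 x hx]; simp
    rw [← hid, smul_add, h1, h2, add_zero]
  refine ⟨Y, fun x hx => (null_smul_one_iff Y x).1 (hY0 x hx), fun n => ?_, ?_⟩
  · refine tilde_iso (homIso Y n) ?_
    let H := DerivedCategory.homologyFunctor (ModuleCat.{u} A) n
    let S : ShortComplex (ModuleCat.{u} A) := ShortComplex.mk (H.map i) (H.map t) (by
      rw [← Functor.map_comp, hit, Functor.map_zero])
    have hs : S.Splitting :=
      { r := H.map r
        s := H.map j
        f_r := by
          change H.map i ≫ H.map r = 𝟙 _
          rw [← Functor.map_comp, hir, CategoryTheory.Functor.map_id]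
        s_g := by
          change H.map j ≫ H.map t = 𝟙 _
          rw [← Functor.map_comp, hjt, CategoryTheory.Functor.map_id]
        id := by
          change H.map r ≫ H.map i + H.map t ≫ H.map j = 𝟙 _
          rw [← Functor.map_comp, ← Functor.map_comp, ← Functor.map_add, hid,
            CategoryTheory.Functor.map_id] }
    refine tilde_ext hC S hs.shortExact (single_homology_tilde hC M hM n) ?_ ?_
    · exact tilde_iso (((DerivedCategory.homologyFunctor (ModuleCat.{u} A) 0).shiftIso 1 n (1 + n)
        rfl).app _).symm (single_homology_tilde hC M hM (1 + n))
    · intro x hx v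
      exact smul_homology_zero _ x (hY0 x hx) n v
  · let L := (CochainComplex.singleFunctor (ModuleCat.{u} A) 0).obj ((rest a).obj M)
    obtain ⟨ρ, hρ⟩ := Q_full Y L r
    obtain ⟨ρ', hρ'⟩ := factor_coeff Y L (single_X_killed M) ρ
    obtain ⟨e⟩ := single_homology_zero ((rest a).obj M)
    let H := DerivedCategory.homologyFunctor (ModuleCat.{u} A) 0
    let F := DerivedCategory.homologyFunctorFactors (ModuleCat.{u} A) 0
    have h1 : F.hom.app (Y.cx A) ≫ HomologicalComplex.homologyMap ρ 0 = H.map r ≫ F.hom.app L := by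
      rw [← hρ]
      exact (F.hom.naturality ρ).symm
    have h2 : HomologicalComplex.homologyMap (Y.coeff (Submodule.mkQ a)) 0 ≫
        HomologicalComplex.homologyMap ρ' 0 = HomologicalComplex.homologyMap ρ 0 := by
      rw [← HomologicalComplex.homologyMap_comp, hρ']
    have h4 : H.map i ≫ H.map r = 𝟙 _ := by
      rw [← Functor.map_comp, hir, CategoryTheory.Functor.map_id]
    exact retract_aux (H.map i) (H.map r) h4 (F.hom.app (Y.cx A))
      (HomologicalComplex.homologyMap (Y.coeff (Submodule.mkQ a)) 0)
      (HomologicalComplex.homologyMap ρ' 0) _ h2 (F.app L) h1 e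

end Fin2

theorem reflect {A : Type u} [CommRing A] (hcoh : IsLeftCoherentRing A)
    (hreg : ∀ M : ModuleCat.{u} A, Module.FinitePresentation A M → HasFiniteProjectiveDimension A M)
    (a : Ideal A) (ha : a.FG) [HasDerivedCategory.{w} (ModuleCat.{u} (A ⧸ a))]
    {C₁ C₂ : Set (ModuleCat.{u} (A ⧸ a))} (h₁ : C₁ ∈ wideLatticeFP (A ⧸ a))
    (h₂ : C₂ ∈ wideLatticeFP (A ⧸ a)) (h : fSet C₁ ⊆ fSet C₂) : C₁ ⊆ C₂ := by
  intro M hM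
  letI := HasDerivedCategory.standard (ModuleCat.{u} A)
  obtain ⟨Y, hY, hYA, i, r, hir⟩ := exists_model hcoh hreg ha h₁.1 M hM (h₁.2.2 hM)
  have hq : ModuleCat.of A (A ⧸ a) ∈ finPresModules A := quot_fp a ha
  have k1 : ∀ n, (Y.cx (A ⧸ a)).homology n ∈ tilde a C₁ := fun n =>
    coeff_induction h₁.1 hcoh Y hY hYA (ModuleCat.of A (A ⧸ a)) hq (hreg _ hq) n
  have k2 : (bc a Y).obj ∈ fSet C₁ := ⟨obj_small _, fun n =>
    h₁.1.mem_of_iso (homIso (bc a Y) n).symm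
      (tilde_rest _ h₁.1 (tilde_iso (bcHomology a Y n).symm (k1 n)))⟩
  have k3 := (h k2).2 0
  have k4 : (Y.cx (A ⧸ a)).homology 0 ∈ tilde a C₂ :=
    ⟨_, h₂.1.mem_of_iso (homIso (bc a Y) 0) k3, ⟨bcHomology a Y 0⟩⟩
  exact tilde_rest M h₂.1 (tilde_retract h₂.1 i r hir k4)

end SC

/-- Theorem 4.6, second part, and Corollary 4.7: if `R` is the
quotient of a regular commutative coherent ring `R₀` by a finitely generated ideal `a`,
then `f_R` is a lattice isomorphism from the lattice of wide subcategories of finitely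
presented `R`-modules onto the lattice of thick subcategories of small objects of
`D(R)`.  In particular, for a principal ideal domain `k` and a finitely generated
commutative `k`-algebra `B`, every wide subcategory of finitely generated `B`-modules
is a Serre class (closed under arbitrary submodules). -/
theorem classification_quotient_of_regular (R₀ : Type u) [CommRing R₀]
    (hcoh : IsLeftCoherentRing R₀)
    (hreg : ∀ M : ModuleCat.{u} R₀, Module.FinitePresentation R₀ M →
      HasFiniteProjectiveDimension R₀ M)
    (a : Ideal R₀) (ha : a.FG)
    [HasDerivedCategory.{w} (ModuleCat.{u} (R₀ ⧸ a))] :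
    fIsLatticeIso (R₀ ⧸ a) ∧
    (∀ (k : Type u) [CommRing k] [IsDomain k] [IsPrincipalIdealRing k]
      (B : Type u) [CommRing B] [Algebra k B], Algebra.FiniteType k B →
      ∀ (C : Set (ModuleCat.{u} B)), IsWideSubcategory C →
        (∀ M ∈ C, Module.Finite B M) →
        ∀ M ∈ C, ∀ N : Submodule B M, ModuleCat.of B N ∈ C) := by
  refine ⟨⟨?_, ?_, ?_⟩, ?_⟩
  · intro C hC
    exact ⟨isThick_fSet hC.1 hC.2.1, fun X hX => hX.1⟩
  · intro C₁ h₁ C₂ h₂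
    exact ⟨SC.reflect hcoh hreg a ha h₁ h₂, fun h X hX => ⟨hX.1, fun n => h (hX.2 n)⟩⟩
  · exact SC.surj (coherent_quotient hcoh a ha)
  · intro k _ _ _ B _ _ hB C hC hfin M hM N
    have : IsNoetherianRing B := Algebra.FiniteType.isNoetherianRing k B
    exact wide_isSerre hC hfin M hM N
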